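/- arXiv:2206.03347 — 2 statements merged into one kernel-verified Lean document; each statement's English description precedes it below -/
import Mathlib

section
/- Let Ω ⊆ ℝ^d be an open convex set, let μ⁻, μ⁺ be absolutely continuous probability measures compactly supported in Ω with densities in L^∞, and let c : Ω × Ω → ℝ be a C² infinitesimally twisted cost. Define the Sinkhorn divergence OT_ε(μ⁻,μ⁺) := v_ε(μ⁻,μ⁺) − (1/2)(v_ε(μ⁻,μ⁻) + v_ε(μ⁺,μ⁺)). Then there exists a constant C ≥ 0 such that for all ε ∈ (0,1): |OT_ε(μ⁻,μ⁺) − (v_0(μ⁻,μ⁺) − (1/2)(v_0(μ⁻,μ⁻) + v_0(μ⁺,μ⁺)))| ≤ C·ε. In particular the ε·log(1/ε) term cancels in the Sinkhorn divergence. -/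
open MeasureTheory Real Set Filter Classical
open scoped ENNReal NNReal Topology

noncomputable section

/-- Relative entropy (Kullback–Leibler divergence) `Ent(γ | q)`, with values in `EReal`:
it equals `∫ ρ log ρ dq` if `γ = ρ·q` (with `ρ log ρ` integrable) and `+∞` otherwise. -/
def Ent {α : Type*} [MeasurableSpace α] (γ q : Measure α) : EReal :=
  if γ ≪ q ∧ Integrable (fun x => ((γ.rnDeriv q) x).toReal * Real.log ((γ.rnDeriv q) x).toReal) q
  then ((∫ x, ((γ.rnDeriv q) x).toReal * Real.log ((γ.rnDeriv q) x).toReal ∂q : ℝ) : EReal)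
  else ⊤

/-- Entropic optimal transport cost
`v_ε = inf { ∫ c dγ + ε Ent(γ | μ⁻ ⊗ μ⁺) : γ coupling of μ⁻ and μ⁺ }`. -/
def entCost {α β : Type*} [MeasurableSpace α] [MeasurableSpace β]
    (μm : Measure α) (μp : Measure β) (c : α × β → ℝ) (ε : ℝ) : EReal :=
  sInf {v : EReal | ∃ γ : Measure (α × β), IsProbabilityMeasure γ ∧ γ.fst = μm ∧ γ.snd = μp ∧
    v = ((∫ p, c p ∂γ : ℝ) : EReal) + (ε : EReal) * Ent γ (μm.prod μp)}

/-- The cross second derivative matrix `∇²ₓᵧ c(x,y) = (∂²c/∂xᵢ∂yⱼ)ᵢⱼ`. -/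
def crossDeriv {d : ℕ} (c : EuclideanSpace ℝ (Fin d) × EuclideanSpace ℝ (Fin d) → ℝ)
    (x y : EuclideanSpace ℝ (Fin d)) : Matrix (Fin d) (Fin d) ℝ :=
  Matrix.of fun i j =>
    fderiv ℝ (fun y' => fderiv ℝ (fun x' => c (x', y')) x (EuclideanSpace.single i 1)) y
      (EuclideanSpace.single j 1)

/-- **Hahn–Banach**: a sublinear functional is dominated from below by a linear one that agrees
with it at a prescribed point. -/
theorem exists_linearMap_le_sublinear_eq {V : Type*} [AddCommGroup V] [Module ℝ V] (N : V → ℝ)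
    (N_hom : ∀ r : ℝ, 0 < r → ∀ x, N (r • x) = r * N x) (N_add : ∀ x y, N (x + y) ≤ N x + N y)
    (x₀ : V) : ∃ g : V →ₗ[ℝ] ℝ, g x₀ = N x₀ ∧ ∀ x, g x ≤ N x := by
  have N_zero : N 0 = 0 := by
    have := N_hom 2 (by norm_num) 0
    rw [smul_zero] at this
    linarith
  have hwd : ∀ r : ℝ, r • x₀ = 0 → (RingHom.id ℝ) r • N x₀ = 0 := by
    intro r hr
    rcases smul_eq_zero.1 hr with h | h
    · simp [h]
    · simp [h, N_zero]
  have hdom : ∀ r : ℝ, r • x₀ ∈ (LinearPMap.mkSpanSingleton' x₀ (N x₀) hwd).domain := fun r =>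
    Submodule.mem_span_singleton.2 ⟨r, rfl⟩
  have hle : ∀ r : ℝ, r * N x₀ ≤ N (r • x₀) := by
    intro r
    rcases lt_trichotomy r 0 with h | h | h
    · have h1 := N_hom (-r) (by linarith) x₀
      have h2 := N_add (r • x₀) ((-r) • x₀)
      rw [← add_smul, add_neg_cancel, zero_smul, N_zero] at h2
      linarith
    · simp [h, N_zero]
    · exact (N_hom r h x₀).ge
  obtain ⟨g, hg, hgN⟩ := exists_extension_of_le_sublinear
    (LinearPMap.mkSpanSingleton' x₀ (N x₀) hwd) N N_hom N_add (by
      rintro ⟨x, hx⟩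
      obtain ⟨r, rfl⟩ := Submodule.mem_span_singleton.1 hx
      have := LinearPMap.mkSpanSingleton'_apply x₀ (N x₀) hwd r hx
      simp only [RingHom.id_apply, smul_eq_mul] at this
      exact this.le.trans (hle r))
  refine ⟨g, ?_, hgN⟩
  have h1 := hg ⟨(1 : ℝ) • x₀, hdom 1⟩
  have h2 := LinearPMap.mkSpanSingleton'_apply x₀ (N x₀) hwd 1 (hdom 1)
  simp only [RingHom.id_apply, smul_eq_mul, one_mul] at h2
  rw [h2] at h1
  simpa using h1

/-- **Riesz representation** on a compact metric space. -/
theorem exists_finiteMeasure_integral_eq {X : Type*} [TopologicalSpace X] [T2Space X]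
    [CompactSpace X] [MeasurableSpace X] [BorelSpace X] (g : C(X, ℝ) →ₗ[ℝ] ℝ)
    (hg : ∀ f : C(X, ℝ), 0 ≤ f → 0 ≤ g f) :
    ∃ γ : Measure X, IsFiniteMeasure γ ∧ ∀ f : C(X, ℝ), ∫ x, f x ∂γ = g f := by
  let G : CompactlySupportedContinuousMap X ℝ →ₗ[ℝ] ℝ :=
    { toFun := fun f => g f.toContinuousMap
      map_add' := fun f f' => by rw [← map_add]; rfl
      map_smul' := fun r f => by rw [RingHom.id_apply, ← map_smul]; rfl }
  let Λ : CompactlySupportedContinuousMap X ℝ →ₚ[ℝ] ℝ := PositiveLinearMap.mk₀ G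
    (fun f hf => hg _ (fun x => hf x))
  refine ⟨RealRMK.rieszMeasure Λ, inferInstance, fun f => ?_⟩
  have := RealRMK.integral_rieszMeasure Λ (CompactlySupportedContinuousMap.continuousMapEquiv f)
  exact this

theorem integrable_of_continuousMap {X : Type*} [TopologicalSpace X] [CompactSpace X]
    [MeasurableSpace X] [BorelSpace X] (γ : Measure X) [IsFiniteMeasure γ] (f : C(X, ℝ)) :
    Integrable f γ :=
  f.continuous.integrable_of_hasCompactSupport (HasCompactSupport.of_compactSpace f)

/-- The value of the relaxed problem dual to the maximization of `∫ h dγ` over couplings. -/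
def dualValue {X : Type*} [TopologicalSpace X] [MeasurableSpace X] (μ ν : Measure X)
    (h : C(X × X, ℝ)) : ℝ :=
  sInf {r | ∃ φ ψ : C(X, ℝ), (∀ x y, h (x, y) ≤ φ x + ψ y) ∧ r = ∫ x, φ x ∂μ + ∫ y, ψ y ∂ν}

theorem le_integral_add_integral {X : Type*} [TopologicalSpace X] [CompactSpace X]
    [MeasurableSpace X] [BorelSpace X] (μ ν : Measure X) [IsProbabilityMeasure μ]
    [IsProbabilityMeasure ν] {φ ψ : C(X, ℝ)} {a : ℝ} (h : ∀ x y, a ≤ φ x + ψ y) :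
    a ≤ ∫ x, φ x ∂μ + ∫ y, ψ y ∂ν := by
  have h1 : ∀ y, a - ψ y ≤ ∫ x, φ x ∂μ := by
    intro y
    have := integral_mono (μ := μ) (integrable_const (a - ψ y)) (integrable_of_continuousMap μ φ)
      (fun x => by have := h x y; simp only; linarith)
    simpa using this
  have h2 := integral_mono (μ := ν) (integrable_const (a - ∫ x, φ x ∂μ))
    (integrable_of_continuousMap ν ψ) (fun y => by have := h1 y; simp only; linarith)
  simp only [integral_const, probReal_univ, one_smul] at h2
  linarith

theorem exists_lt_dualValue_add {X : Type*} [TopologicalSpace X] [CompactSpace X]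
    [MeasurableSpace X] (μ ν : Measure X) (h : C(X × X, ℝ)) {η : ℝ} (hη : 0 < η) :
    ∃ φ ψ : C(X, ℝ), (∀ x y, h (x, y) ≤ φ x + ψ y) ∧
      ∫ x, φ x ∂μ + ∫ y, ψ y ∂ν < dualValue μ ν h + η := by
  have hne : {r | ∃ φ ψ : C(X, ℝ), (∀ x y, h (x, y) ≤ φ x + ψ y) ∧
      r = ∫ x, φ x ∂μ + ∫ y, ψ y ∂ν}.Nonempty := by
    refine ⟨_, ContinuousMap.const X ‖h‖, 0, fun x y => ?_, rfl⟩
    have := h.norm_coe_le_norm (x, y)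
    simpa using (abs_le.1 this).2
  obtain ⟨r, ⟨φ, ψ, h1, rfl⟩, h2⟩ := exists_lt_of_csInf_lt hne
    (show dualValue μ ν h < dualValue μ ν h + η by linarith)
  exact ⟨φ, ψ, h1, h2⟩

section Duality

variable {X : Type*} [TopologicalSpace X] [CompactSpace X] [MeasurableSpace X]
  [BorelSpace X] (μ ν : Measure X) [IsProbabilityMeasure μ] [IsProbabilityMeasure ν]

theorem dualValue_le {h : C(X × X, ℝ)} {φ ψ : C(X, ℝ)} (hle : ∀ x y, h (x, y) ≤ φ x + ψ y) :
    dualValue μ ν h ≤ ∫ x, φ x ∂μ + ∫ y, ψ y ∂ν := by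
  refine csInf_le ⟨-‖h‖, ?_⟩ ⟨φ, ψ, hle, rfl⟩
  rintro r ⟨φ', ψ', h', rfl⟩
  refine le_integral_add_integral μ ν fun x y => le_trans ?_ (h' x y)
  have := h.norm_coe_le_norm (x, y)
  exact (abs_le.1 this).1

theorem dualValue_add_le (h h' : C(X × X, ℝ)) :
    dualValue μ ν (h + h') ≤ dualValue μ ν h + dualValue μ ν h' := by
  refine le_of_forall_pos_le_add fun η hη => ?_
  obtain ⟨φ, ψ, h1, h2⟩ := exists_lt_dualValue_add μ ν h (half_pos hη)
  obtain ⟨φ', ψ', h1', h2'⟩ := exists_lt_dualValue_add μ ν h' (half_pos hη)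
  have := dualValue_le μ ν (h := h + h') (φ := φ + φ') (ψ := ψ + ψ') (fun x y => by
    have a := h1 x y
    have b := h1' x y
    simp only [ContinuousMap.add_apply]
    linarith)
  simp only [ContinuousMap.add_apply] at this
  rw [integral_add (integrable_of_continuousMap μ φ) (integrable_of_continuousMap μ φ'),
    integral_add (integrable_of_continuousMap ν ψ) (integrable_of_continuousMap ν ψ')] at this
  linarith

theorem dualValue_smul_le {r : ℝ} (hr : 0 < r) (h : C(X × X, ℝ)) :
    dualValue μ ν (r • h) ≤ r * dualValue μ ν h := by
  refine le_of_forall_pos_le_add fun η hη => ?_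
  obtain ⟨φ, ψ, h1, h2⟩ := exists_lt_dualValue_add μ ν h (div_pos hη hr)
  have := dualValue_le μ ν (h := r • h) (φ := r • φ) (ψ := r • ψ) (fun x y => by
    have a := mul_le_mul_of_nonneg_left (h1 x y) hr.le
    simp only [ContinuousMap.smul_apply, smul_eq_mul]
    linarith)
  simp only [ContinuousMap.smul_apply, smul_eq_mul, integral_const_mul] at this
  have h3 := mul_lt_mul_of_pos_left h2 hr
  have h4 : r * (dualValue μ ν h + η / r) = r * dualValue μ ν h + η := by
    field_simp
  linarith

theorem dualValue_smul {r : ℝ} (hr : 0 < r) (h : C(X × X, ℝ)) :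
    dualValue μ ν (r • h) = r * dualValue μ ν h := by
  refine le_antisymm (dualValue_smul_le μ ν hr h) ?_
  have := dualValue_smul_le μ ν (inv_pos.2 hr) (r • h)
  rw [smul_smul, inv_mul_cancel₀ hr.ne', one_smul] at this
  have h3 := mul_le_mul_of_nonneg_left this hr.le
  rwa [← mul_assoc, mul_inv_cancel₀ hr.ne', one_mul] at h3

end Duality

/-- **Kantorovich duality** on a compact space, with an optimal coupling and almost optimal
continuous potentials. -/
theorem exists_coupling_integral_le_dual {X : Type*} [MetricSpace X] [CompactSpace X]
    [MeasurableSpace X] [BorelSpace X] (μ ν : Measure X) [IsProbabilityMeasure μ]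
    [IsProbabilityMeasure ν] (c : C(X × X, ℝ)) :
    ∃ γ : Measure (X × X), IsProbabilityMeasure γ ∧ γ.fst = μ ∧ γ.snd = ν ∧ ∀ η : ℝ, 0 < η →
      ∃ φ ψ : C(X, ℝ), (∀ x y, φ x + ψ y ≤ c (x, y)) ∧
        ∫ p, c p ∂γ ≤ ∫ x, φ x ∂μ + ∫ y, ψ y ∂ν + η := by
  obtain ⟨g, hgc, hg⟩ := exists_linearMap_le_sublinear_eq (dualValue μ ν)
    (fun r hr h => dualValue_smul μ ν hr h) (dualValue_add_le μ ν) (-c)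
  have hgsum : ∀ φ ψ : C(X, ℝ), g (φ.comp ContinuousMap.fst + ψ.comp ContinuousMap.snd)
      ≤ ∫ x, φ x ∂μ + ∫ y, ψ y ∂ν := fun φ ψ =>
    (hg _).trans (dualValue_le μ ν fun x y => by simp)
  have hgeq : ∀ φ ψ : C(X, ℝ), g (φ.comp ContinuousMap.fst + ψ.comp ContinuousMap.snd)
      = ∫ x, φ x ∂μ + ∫ y, ψ y ∂ν := by
    intro φ ψ
    refine le_antisymm (hgsum φ ψ) ?_
    have h1 := hgsum (-φ) (-ψ)
    have h2 : (-φ).comp ContinuousMap.fst + (-ψ).comp ContinuousMap.snd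
        = -(φ.comp ContinuousMap.fst + ψ.comp (ContinuousMap.snd : C(X × X, X))) := by
      ext p
      simp
      ring
    rw [h2, map_neg] at h1
    simp only [ContinuousMap.neg_apply, integral_neg] at h1
    linarith
  obtain ⟨γ, hγ, hInt⟩ := exists_finiteMeasure_integral_eq g (fun f hf => by
    have h1 := (hg (-f)).trans (dualValue_le μ ν (φ := 0) (ψ := 0) fun x y => by
      simpa using hf (x, y))
    rw [map_neg] at h1
    simp at h1
    exact h1)
  have hfst : γ.fst = μ := by
    refine ext_of_forall_integral_eq_of_IsFiniteMeasure fun f => ?_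
    have h1 := hInt (f.toContinuousMap.comp ContinuousMap.fst
      + (0 : C(X, ℝ)).comp ContinuousMap.snd)
    rw [hgeq] at h1
    rw [Measure.fst, integral_map measurable_fst.aemeasurable
      f.continuous.aestronglyMeasurable]
    simpa using h1
  have hsnd : γ.snd = ν := by
    refine ext_of_forall_integral_eq_of_IsFiniteMeasure fun f => ?_
    have h1 := hInt ((0 : C(X, ℝ)).comp ContinuousMap.fst
      + f.toContinuousMap.comp ContinuousMap.snd)
    rw [hgeq] at h1
    rw [Measure.snd, integral_map measurable_snd.aemeasurable
      f.continuous.aestronglyMeasurable]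
    simpa using h1
  refine ⟨γ, ⟨?_⟩, hfst, hsnd, fun η hη => ?_⟩
  · rw [← Measure.fst_univ, hfst, measure_univ]
  · obtain ⟨φ, ψ, h1, h2⟩ := exists_lt_dualValue_add μ ν (-c) hη
    refine ⟨-φ, -ψ, fun x y => ?_, ?_⟩
    · have := h1 x y
      simp only [ContinuousMap.neg_apply] at this ⊢
      linarith
    · have h3 := hInt c
      rw [map_neg] at hgc
      simp only [ContinuousMap.neg_apply, integral_neg]
      linarith

theorem integral_fst_eq {α β : Type*} [MeasurableSpace α] [MeasurableSpace β]
    {γ : Measure (α × β)} {μ : Measure α} (h : γ.fst = μ) {f : α → ℝ} (hf : Measurable f) :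
    ∫ p, f p.1 ∂γ = ∫ x, f x ∂μ := by
  rw [← h, Measure.fst, integral_map measurable_fst.aemeasurable hf.aestronglyMeasurable]

theorem integral_snd_eq {α β : Type*} [MeasurableSpace α] [MeasurableSpace β]
    {γ : Measure (α × β)} {ν : Measure β} (h : γ.snd = ν) {f : β → ℝ} (hf : Measurable f) :
    ∫ p, f p.2 ∂γ = ∫ x, f x ∂ν := by
  rw [← h, Measure.snd, integral_map measurable_snd.aemeasurable hf.aestronglyMeasurable]

theorem integrable_fst {α β : Type*} [MeasurableSpace α] [MeasurableSpace β]
    {γ : Measure (α × β)} {μ : Measure α} (h : γ.fst = μ) {f : α → ℝ} (hf : Integrable f μ) :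
    Integrable (fun p => f p.1) γ := by
  rw [← h, Measure.fst] at hf
  exact hf.comp_measurable measurable_fst

theorem integrable_snd {α β : Type*} [MeasurableSpace α] [MeasurableSpace β]
    {γ : Measure (α × β)} {ν : Measure β} (h : γ.snd = ν) {f : β → ℝ} (hf : Integrable f ν) :
    Integrable (fun p => f p.2) γ := by
  rw [← h, Measure.snd] at hf
  exact hf.comp_measurable measurable_snd

theorem integral_sub_potentials {α β : Type*} [MeasurableSpace α] [MeasurableSpace β]
    {γ : Measure (α × β)} {μ : Measure α} {ν : Measure β} (h1 : γ.fst = μ) (h2 : γ.snd = ν)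
    {c : α × β → ℝ} {φ : α → ℝ} {ψ : β → ℝ} (hc : Integrable c γ) (hφm : Measurable φ)
    (hψm : Measurable ψ) (hφ : Integrable φ μ) (hψ : Integrable ψ ν) :
    Integrable (fun p => c p - φ p.1 - ψ p.2) γ ∧
      ∫ p, (c p - φ p.1 - ψ p.2) ∂γ = ∫ p, c p ∂γ - ∫ x, φ x ∂μ - ∫ y, ψ y ∂ν := by
  have hi1 := integrable_fst h1 hφ
  have hi2 := integrable_snd h2 hψ
  have hi3 : Integrable (fun p => c p - φ p.1) γ := hc.sub hi1
  refine ⟨hi3.sub hi2, ?_⟩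
  rw [integral_sub hi3 hi2, integral_sub hc hi1, integral_fst_eq h1 hφm, integral_snd_eq h2 hψm]

theorem coupling_ae_mem {α β : Type*} [MeasurableSpace α] [MeasurableSpace β]
    {γ : Measure (α × β)} {μ : Measure α} {ν : Measure β} (h1 : γ.fst = μ) (h2 : γ.snd = ν)
    {K : Set α} {L : Set β} (hK : ∀ᵐ x ∂μ, x ∈ K) (hL : ∀ᵐ y ∂ν, y ∈ L) :
    ∀ᵐ p ∂γ, p ∈ K ×ˢ L := by
  rw [← h1, Measure.fst] at hK
  rw [← h2, Measure.snd] at hL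
  filter_upwards [ae_of_ae_map measurable_fst.aemeasurable hK,
    ae_of_ae_map measurable_snd.aemeasurable hL] with p hp hp'
  exact ⟨hp, hp'⟩

theorem integrable_of_continuousOn_of_ae_mem {α : Type*} [TopologicalSpace α] [T2Space α]
    [MeasurableSpace α] [BorelSpace α]
    {μ : Measure α} [IsFiniteMeasure μ] {K : Set α} (hK : IsCompact K) (hμ : ∀ᵐ x ∂μ, x ∈ K)
    {f : α → ℝ} (hf : ContinuousOn f K) : Integrable f μ := by
  have := hf.integrableOn_compact (μ := μ) hK
  rwa [IntegrableOn, Measure.restrict_eq_self_of_ae_mem hμ] at this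

/-- Kantorovich duality for measures concentrated on a compact set. -/
theorem exists_coupling_integral_le_dual_of_isCompact {E : Type*} [MetricSpace E]
    [SecondCountableTopology E]
    [MeasurableSpace E] [BorelSpace E] {K : Set E} (hK : IsCompact K) (μ ν : Measure E)
    [IsProbabilityMeasure μ] [IsProbabilityMeasure ν] (hμ : ∀ᵐ x ∂μ, x ∈ K)
    (hν : ∀ᵐ x ∂ν, x ∈ K) {c : E × E → ℝ} (hc : Continuous c) :
    ∃ γ : Measure (E × E), IsProbabilityMeasure γ ∧ γ.fst = μ ∧ γ.snd = ν ∧ ∀ η : ℝ, 0 < η →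
      ∃ φ ψ : E → ℝ, Measurable φ ∧ Measurable ψ ∧ ContinuousOn φ K ∧ ContinuousOn ψ K ∧
        (∀ x ∈ K, ∀ y ∈ K, φ x + ψ y ≤ c (x, y)) ∧
        ∫ p, c p ∂γ ≤ ∫ x, φ x ∂μ + ∫ y, ψ y ∂ν + η := by
  have : CompactSpace K := isCompact_iff_compactSpace.1 hK
  have hemb : MeasurableEmbedding (Subtype.val : K → E) :=
    MeasurableEmbedding.subtype_coe hK.measurableSet
  have hmap : ∀ ρ : Measure E, (∀ᵐ x ∂ρ, x ∈ K) →
      (ρ.comap (Subtype.val : K → E)).map Subtype.val = ρ := fun ρ hρ => by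
    rw [hemb.map_comap, Subtype.range_coe, Measure.restrict_eq_self_of_ae_mem hρ]
  have hprob : ∀ ρ : Measure E, (∀ᵐ x ∂ρ, x ∈ K) → IsProbabilityMeasure ρ →
      IsProbabilityMeasure (ρ.comap (Subtype.val : K → E)) := fun ρ hρ hρ' => by
    constructor
    have h1 : (ρ.comap (Subtype.val : K → E)).map Subtype.val univ = 1 := by
      rw [hmap ρ hρ, measure_univ]
    rwa [Measure.map_apply measurable_subtype_coe MeasurableSet.univ, preimage_univ] at h1
  have := hprob μ hμ inferInstance
  have := hprob ν hν inferInstance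
  obtain ⟨γ, hγ, h1, h2, hdual⟩ := exists_coupling_integral_le_dual
    (μ.comap (Subtype.val : K → E)) (ν.comap (Subtype.val : K → E))
    (⟨fun p => c (p.1, p.2), by fun_prop⟩ : C(K × K, ℝ))
  have hmeas : Measurable (Prod.map (Subtype.val : K → E) (Subtype.val : K → E)) := by fun_prop
  refine ⟨γ.map (Prod.map Subtype.val Subtype.val), Measure.isProbabilityMeasure_map
    hmeas.aemeasurable, ?_, ?_, fun η hη => ?_⟩
  · rw [Measure.fst, Measure.map_map measurable_fst hmeas]
    conv_rhs => rw [← hmap μ hμ, ← h1]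
    rw [Measure.fst, Measure.map_map measurable_subtype_coe measurable_fst]
    rfl
  · rw [Measure.snd, Measure.map_map measurable_snd hmeas]
    conv_rhs => rw [← hmap ν hν, ← h2]
    rw [Measure.snd, Measure.map_map measurable_subtype_coe measurable_snd]
    rfl
  · obtain ⟨φ, ψ, hle, hInt⟩ := hdual η hη
    have hext : ∀ (f : C(K, ℝ)) (x : K), Function.extend Subtype.val f 0 (x : E) = f x :=
      fun f x => Subtype.val_injective.extend_apply _ _ _
    have hm : ∀ f : C(K, ℝ), Measurable (Function.extend (Subtype.val : K → E) f 0) := fun f =>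
      hemb.measurable_extend f.continuous.measurable measurable_zero
    have hcont : ∀ f : C(K, ℝ), ContinuousOn (Function.extend (Subtype.val : K → E) f 0) K := by
      intro f
      rw [continuousOn_iff_continuous_domRestrict]
      convert! f.continuous using 1
      ext x
      exact hext f x
    have hI : ∀ (ρ : Measure E), (∀ᵐ x ∂ρ, x ∈ K) → ∀ f : C(K, ℝ),
        ∫ x, Function.extend (Subtype.val : K → E) f 0 x ∂ρ
          = ∫ x, f x ∂(ρ.comap (Subtype.val : K → E)) := by
      intro ρ hρ f
      conv_lhs => rw [← hmap ρ hρ]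
      rw [hemb.integral_map]
      simp only [hext]
    refine ⟨_, _, hm φ, hm ψ, hcont φ, hcont ψ, fun x hx y hy => ?_, ?_⟩
    · have := hle ⟨x, hx⟩ ⟨y, hy⟩
      rw [← hext φ, ← hext ψ] at this
      exact this
    · rw [hI μ hμ, hI ν hν, integral_map hmeas.aemeasurable hc.aestronglyMeasurable]
      exact hInt

section Laplace

variable {E : Type*} [NormedAddCommGroup E] [InnerProductSpace ℝ E] [FiniteDimensional ℝ E]

/-- Quantitative form of Minty's trick: along the affine subspaces `x - x' = T (y - y')`, where `T`
represents the mixed second derivative at `p₀`, the cross difference of the cost is locally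
coercive. -/
theorem exists_cross_difference_coercive {c : E × E → ℝ} (hc : ContDiff ℝ 2 c) (p₀ : E × E)
    (hinj : ∀ k : E, (∀ h : E, fderiv ℝ (fderiv ℝ c) p₀ (0, k) (h, 0) = 0) → k = 0) :
    ∃ (T : E →L[ℝ] E) (r a : ℝ), 0 < r ∧ 0 < a ∧
      ∀ x ∈ Metric.ball p₀.1 r, ∀ x' ∈ Metric.ball p₀.1 r,
      ∀ y ∈ Metric.ball p₀.2 r, ∀ y' ∈ Metric.ball p₀.2 r, x - x' = T (y - y') →
        a * ‖y - y'‖ ^ 2 ≤ c (x, y) + c (x', y') - c (x, y') - c (x', y) := by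
  set B := fderiv ℝ (fderiv ℝ c) p₀ with hB
  let T : E →ₗ[ℝ] E :=
    { toFun := fun k => (InnerProductSpace.toDual ℝ E).symm
        ((B (0, k)).comp (ContinuousLinearMap.inl ℝ E E))
      map_add' := fun k k' => by
        rw [← map_add, ← ContinuousLinearMap.add_comp, ← map_add, Prod.mk_add_mk, add_zero]
      map_smul' := fun s k => by
        rw [RingHom.id_apply, ← LinearIsometryEquiv.map_smul, ← ContinuousLinearMap.smul_comp,
          ← map_smul, Prod.smul_mk, smul_zero] }
  have hT : ∀ h k, B (0, k) (h, 0) = inner ℝ (T k) h := fun h k => by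
    change _ = inner ℝ ((InnerProductSpace.toDual ℝ E).symm _) h
    rw [InnerProductSpace.toDual_symm_apply]
    simp
  have hker : T.ker = ⊥ := LinearMap.ker_eq_bot'.2 fun k hk => hinj k fun h => by
    rw [hT, hk, inner_zero_left]
  obtain ⟨L, hL, hanti⟩ := T.exists_antilipschitzWith hker
  have hlow : ∀ k, ‖k‖ ≤ L * ‖T k‖ := fun k => by
    have := hanti.le_mul_dist k 0
    simpa using this
  let T' : E →L[ℝ] E := LinearMap.toContinuousLinearMap T
  have hT' : ∀ k, T' k = T k := fun k => rfl
  have hLpos : (0 : ℝ) < L := hL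
  set κ : ℝ := 1 / (2 * L ^ 2 * (‖T'‖ + 1)) with hκ
  have hκpos : 0 < κ := by positivity
  have hstrict : HasStrictFDerivAt (fderiv ℝ c) B p₀ :=
    ((hc.fderiv_right (m := 1) (by norm_num)).contDiffAt).hasStrictFDerivAt (by norm_num)
  have hev : ∀ᶠ q : (E × E) × (E × E) in 𝓝 (p₀, p₀),
      ‖fderiv ℝ c q.1 - fderiv ℝ c q.2 - B (q.1 - q.2)‖ ≤ κ * ‖q.1 - q.2‖ :=
    (HasStrictFDerivAt.isLittleO (𝕜 := ℝ) (E := E × E) (F := E × E →L[ℝ] ℝ) hstrict).def hκpos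
  obtain ⟨r, hr, happ⟩ := Metric.eventually_nhds_iff_ball.1 hev
  have hmem : ∀ x ∈ Metric.ball p₀.1 r, ∀ y ∈ Metric.ball p₀.2 r, ∀ y' ∈ Metric.ball p₀.2 r,
      ((x, y), (x, y')) ∈ Metric.ball (p₀, p₀) r := fun x hx y hy y' hy' => by
    rw [← ball_prod_same, ← Prod.mk.eta (p := p₀), ← ball_prod_same]
    exact ⟨⟨hx, hy⟩, ⟨hx, hy'⟩⟩
  refine ⟨T', r, 1 / (2 * L ^ 2), hr, by positivity, fun x hx x' hx' y hy y' hy' hxy => ?_⟩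
  set k := y - y' with hk
  let G : E → ℝ := fun z => c (z, y) - c (z, y') - B (0, k) (z, 0)
  have hd : ∀ z w : E, HasFDerivAt (fun z : E => c (z, w))
      ((fderiv ℝ c (z, w)).comp (ContinuousLinearMap.inl ℝ E E)) z := fun z w =>
    ((hc.differentiable (by norm_num)) (z, w)).hasFDerivAt.comp z (hasFDerivAt_prodMk_left z w)
  have hG : ∀ z ∈ Metric.ball p₀.1 r, HasFDerivWithinAt G
      ((fderiv ℝ c (z, y) - fderiv ℝ c (z, y') - B (0, k)).comp
        (ContinuousLinearMap.inl ℝ E E)) (Metric.ball p₀.1 r) z := fun z hz => by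
    have h1 := (((hd z y).sub (hd z y')).sub
      ((B (0, k)).comp (ContinuousLinearMap.inl ℝ E E)).hasFDerivAt).hasFDerivWithinAt
      (s := Metric.ball p₀.1 r)
    convert! h1 using 1
  have hbound : ∀ z ∈ Metric.ball p₀.1 r,
      ‖(fderiv ℝ c (z, y) - fderiv ℝ c (z, y') - B (0, k)).comp
        (ContinuousLinearMap.inl ℝ E E)‖ ≤ κ * ‖k‖ := fun z hz => by
    refine ContinuousLinearMap.opNorm_le_bound _ (by positivity) fun h => ?_
    have h1 := happ _ (hmem z hz y hy y' hy')
    simp only at h1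
    have h2 : ((z, y) - (z, y') : E × E) = (0, k) := by simp [hk]
    rw [h2] at h1
    have h3 : ‖((0 : E), k)‖ = ‖k‖ := by simp
    rw [h3] at h1
    have h4 := (fderiv ℝ c (z, y) - fderiv ℝ c (z, y') - B (0, k)).le_opNorm (h, 0)
    have h5 : ‖(h, (0 : E))‖ = ‖h‖ := by simp
    rw [h5] at h4
    exact h4.trans (mul_le_mul_of_nonneg_right h1 (norm_nonneg _))
  have hmv := (convex_ball p₀.1 r).norm_image_sub_le_of_norm_hasFDerivWithin_le hG hbound hx' hx
  have hlin : B (0, k) (x, 0) - B (0, k) (x', 0) = inner ℝ (T k) (T k) := by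
    rw [← map_sub, Prod.mk_sub_mk, sub_zero, hT, hxy]
    rfl
  rw [real_inner_self_eq_norm_sq] at hlin
  rw [hxy] at hmv
  have h6 : ‖T' k‖ ≤ ‖T'‖ * ‖k‖ := T'.le_opNorm k
  have h7 := (abs_le.1 hmv).1
  have h8 : κ * ‖k‖ * ‖T' k‖ ≤ 1 / (2 * L ^ 2) * ‖k‖ ^ 2 := by
    calc κ * ‖k‖ * ‖T' k‖ ≤ κ * ‖k‖ * ((‖T'‖ + 1) * ‖k‖) := by
          gcongr
          exact h6.trans (by gcongr; linarith)
      _ = 1 / (2 * L ^ 2) * ‖k‖ ^ 2 := by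
          rw [hκ]
          field_simp
  have h9 : 1 / (L : ℝ) ^ 2 * ‖k‖ ^ 2 ≤ ‖T k‖ ^ 2 := by
    have := pow_le_pow_left₀ (norm_nonneg _) (hlow k) 2
    rw [mul_pow] at this
    rw [one_div, inv_mul_le_iff₀ (by positivity)]
    exact this
  have h10 : 1 / (L : ℝ) ^ 2 * ‖k‖ ^ 2 = 2 * (1 / (2 * L ^ 2) * ‖k‖ ^ 2) := by
    field_simp
  simp only [G] at h7
  linarith

variable [MeasurableSpace E] [BorelSpace E]

theorem lintegral_exp_neg_mul_sq_norm_sub {b : ℝ} (hb : 0 < b) (y₀ : E) :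
    ∫⁻ y : E, ENNReal.ofReal (rexp (-b * ‖y - y₀‖ ^ 2))
      = ENNReal.ofReal ((π / b) ^ (Module.finrank ℝ E / 2 : ℝ)) := by
  rw [lintegral_sub_right_eq_self (fun y : E => ENNReal.ofReal (rexp (-b * ‖y‖ ^ 2))) y₀,
    ← GaussianFourier.integral_rexp_neg_mul_sq_norm hb, ofReal_integral_eq_lintegral_ofReal]
  · by_contra hni
    have h1 := GaussianFourier.integral_rexp_neg_mul_sq_norm (V := E) hb
    rw [integral_undef hni] at h1
    have : 0 < (π / b) ^ (Module.finrank ℝ E / 2 : ℝ) := by positivity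
    linarith
  · exact Eventually.of_forall fun y => (exp_pos _).le

/-- If `f` grows quadratically away from its near minimizers on `S`, then the Gibbs weight of `f`
on `S` is controlled by a Gaussian integral. -/
theorem lintegral_exp_neg_div_le_of_sq_le {S : Set E} {f : E → ℝ} {a : ℝ} (ha : 0 < a)
    (hf : ∀ y ∈ S, 0 ≤ f y) (hS : ∀ y ∈ S, ∀ y' ∈ S, a * ‖y - y'‖ ^ 2 ≤ f y + f y') {ε : ℝ}
    (hε : 0 < ε) :
    ∫⁻ y, S.indicator (fun y => ENNReal.ofReal (rexp (-f y / ε))) y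
      ≤ ENNReal.ofReal (rexp (1 / 2) * (2 * π / a) ^ (Module.finrank ℝ E / 2 : ℝ)
        * ε ^ (Module.finrank ℝ E / 2 : ℝ)) := by
  rcases S.eq_empty_or_nonempty with rfl | hne
  · simp
  obtain ⟨_, ⟨y₀, hy₀, rfl⟩, hlt⟩ := exists_lt_of_csInf_lt (hne.image f)
    (show sInf (f '' S) < sInf (f '' S) + ε by linarith)
  have hinf : ∀ y ∈ S, sInf (f '' S) ≤ f y := fun y hy =>
    csInf_le ⟨0, by rintro _ ⟨z, hz, rfl⟩; exact hf z hz⟩ ⟨y, hy, rfl⟩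
  have hb : 0 < a / (2 * ε) := by positivity
  calc ∫⁻ y, S.indicator (fun y => ENNReal.ofReal (rexp (-f y / ε))) y
      ≤ ∫⁻ y, ENNReal.ofReal (rexp (1 / 2)) *
          ENNReal.ofReal (rexp (-(a / (2 * ε)) * ‖y - y₀‖ ^ 2)) := by
        refine lintegral_mono fun y => ?_
        by_cases hy : y ∈ S
        · simp only [indicator_of_mem hy]
          rw [← ENNReal.ofReal_mul (exp_pos _).le, ← exp_add]
          refine ENNReal.ofReal_le_ofReal (exp_le_exp.2 ?_)
          have h1 := hS y hy y₀ hy₀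
          have h2 := hinf y hy
          rw [div_le_iff₀ hε]
          have h3 : (1 / 2 + -(a / (2 * ε)) * ‖y - y₀‖ ^ 2) * ε
              = ε / 2 - a * ‖y - y₀‖ ^ 2 / 2 := by
            field_simp
            ring
          rw [h3]
          linarith
        · simp [indicator_of_notMem hy]
    _ = ENNReal.ofReal (rexp (1 / 2)) *
          ENNReal.ofReal ((π / (a / (2 * ε))) ^ (Module.finrank ℝ E / 2 : ℝ)) := by
        rw [lintegral_const_mul' _ _ ENNReal.ofReal_ne_top,
          lintegral_exp_neg_mul_sq_norm_sub hb]
    _ = _ := by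
        rw [← ENNReal.ofReal_mul (exp_pos _).le, mul_assoc,
          ← mul_rpow (by positivity) hε.le]
        congr 4
        field_simp

/-- Shearing change of variables followed by Tonelli. -/
theorem lintegral_prod_eq_lintegral_shear (T : E →L[ℝ] E) {F : E × E → ℝ≥0∞}
    (hF : Measurable F) :
    ∫⁻ p, F p = ∫⁻ v : E, ∫⁻ y : E, F (v + T y, y) := by
  rw [Measure.volume_eq_prod, lintegral_prod_symm _ hF.aemeasurable,
    lintegral_lintegral_swap (f := fun v y => F (v + T y, y))]
  · refine lintegral_congr fun y => ?_
    exact (lintegral_add_right_eq_self (μ := (volume : Measure E))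
      (fun x => F (x, y)) (T y)).symm
  · refine Measurable.aemeasurable ?_
    refine hF.comp ?_
    have := T.measurable
    fun_prop

/-- The Gibbs weight of `c - φ ⊕ ψ` on `s ∩ K × K` is `O(ε ^ (d / 2))`, uniformly over admissible
potentials. -/
def GibbsBound (c : E × E → ℝ) (K : Set E) (s : Set (E × E)) : Prop :=
  ∃ C : ℝ≥0, ∀ ε : ℝ, 0 < ε → ∀ φ ψ : E → ℝ, Measurable φ → Measurable ψ →
    (∀ x ∈ K, ∀ y ∈ K, φ x + ψ y ≤ c (x, y)) →
    ∫⁻ p in s ∩ K ×ˢ K, ENNReal.ofReal (rexp (-(c p - φ p.1 - ψ p.2) / ε))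
      ≤ C * ENNReal.ofReal (ε ^ (Module.finrank ℝ E / 2 : ℝ))

theorem gibbsBound_ball {c : E × E → ℝ} (hc : Continuous c) {K : Set E} (hK : MeasurableSet K)
    {x₀ y₀ : E} {r a : ℝ} (ha : 0 < a) {T : E →L[ℝ] E}
    (h : ∀ x ∈ Metric.ball x₀ r, ∀ x' ∈ Metric.ball x₀ r,
      ∀ y ∈ Metric.ball y₀ r, ∀ y' ∈ Metric.ball y₀ r, x - x' = T (y - y') →
        a * ‖y - y'‖ ^ 2 ≤ c (x, y) + c (x', y') - c (x, y') - c (x', y)) :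
    GibbsBound c K (Metric.ball x₀ r ×ˢ Metric.ball y₀ r) := by
  set R : ℝ := (‖x₀‖ + r) + ‖T‖ * (‖y₀‖ + r)
  set C₁ : ℝ := rexp (1 / 2) * (2 * π / a) ^ (Module.finrank ℝ E / 2 : ℝ) with hC₁
  have hC₁pos : 0 ≤ C₁ := by positivity
  have hvol : volume (Metric.closedBall (0 : E) R) ≠ ⊤ := measure_closedBall_lt_top.ne
  refine ⟨(ENNReal.ofReal C₁ * volume (Metric.closedBall (0 : E) R)).toNNReal,
    fun ε hε φ ψ hφ hψ hle => ?_⟩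
  rw [ENNReal.coe_toNNReal (ENNReal.mul_ne_top ENNReal.ofReal_ne_top hvol)]
  set W : Set (E × E) := (Metric.ball x₀ r ×ˢ Metric.ball y₀ r) ∩ K ×ˢ K with hW
  have hWm : MeasurableSet W :=
    (measurableSet_ball.prod measurableSet_ball).inter (hK.prod hK)
  have hFm : Measurable (W.indicator fun p : E × E =>
      ENNReal.ofReal (rexp (-(c p - φ p.1 - ψ p.2) / ε))) := by
    refine Measurable.indicator ?_ hWm
    have := hc.measurable
    fun_prop
  rw [← lintegral_indicator hWm, lintegral_prod_eq_lintegral_shear T hFm]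
  have hslice : ∀ v : E, ∫⁻ y, W.indicator (fun p : E × E =>
      ENNReal.ofReal (rexp (-(c p - φ p.1 - ψ p.2) / ε))) (v + T y, y)
      ≤ (Metric.closedBall (0 : E) R).indicator (fun _ => ENNReal.ofReal
        (C₁ * ε ^ (Module.finrank ℝ E / 2 : ℝ))) v := by
    intro v
    by_cases hv : v ∈ Metric.closedBall (0 : E) R
    · rw [indicator_of_mem hv, hC₁]
      refine le_trans (le_of_eq ?_) (lintegral_exp_neg_div_le_of_sq_le
        (S := {y | (v + T y, y) ∈ W})
        (f := fun y => c (v + T y, y) - φ (v + T y) - ψ y) ha ?_ ?_ hε)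
      · refine lintegral_congr fun y => ?_
        by_cases hy : (v + T y, y) ∈ W
        · rw [indicator_of_mem hy, indicator_of_mem (show y ∈ {y | (v + T y, y) ∈ W} from hy)]
        · rw [indicator_of_notMem hy,
            indicator_of_notMem (show y ∉ {y | (v + T y, y) ∈ W} from hy)]
      · intro y hy
        have := hle _ hy.2.1 _ hy.2.2
        simp only at this
        linarith
      · intro y hy y' hy'
        have h1 := hle _ hy.2.1 _ hy'.2.2
        have h2 := hle _ hy'.2.1 _ hy.2.2
        have h3 := h _ hy.1.1 _ hy'.1.1 _ hy.1.2 _ hy'.1.2 (by simp)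
        simp only at h1 h2 h3
        linarith
    · rw [indicator_of_notMem hv, nonpos_iff_eq_zero, lintegral_eq_zero_of_ae_eq_zero]
      refine Eventually.of_forall fun y => indicator_of_notMem (fun hy => hv ?_) _
      have h1 : ‖v + T y‖ ≤ ‖x₀‖ + r := by
        have := hy.1.1
        simp only [Metric.mem_ball, dist_eq_norm] at this
        have h2 := norm_add_le x₀ (v + T y - x₀)
        rw [add_sub_cancel] at h2
        linarith
      have h2 : ‖y‖ ≤ ‖y₀‖ + r := by
        have := hy.1.2
        simp only [Metric.mem_ball, dist_eq_norm] at this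
        have h2 := norm_add_le y₀ (y - y₀)
        rw [add_sub_cancel] at h2
        linarith
      have h3 : ‖T y‖ ≤ ‖T‖ * (‖y₀‖ + r) :=
        (T.le_opNorm y).trans (mul_le_mul_of_nonneg_left h2 (norm_nonneg _))
      have h4 := norm_sub_le (v + T y) (T y)
      rw [add_sub_cancel_right] at h4
      rw [mem_closedBall_zero_iff]
      exact h4.trans (add_le_add h1 h3)
  refine (lintegral_mono hslice).trans ?_
  rw [lintegral_indicator_const measurableSet_closedBall, ENNReal.ofReal_mul hC₁pos]
  exact le_of_eq (by ring)

theorem gibbsBound_of_isCompact {c : E × E → ℝ} (hc : ContDiff ℝ 2 c) {K : Set E}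
    (hK : IsCompact K) (htwist : ∀ p ∈ K ×ˢ K, ∀ k : E,
      (∀ h : E, fderiv ℝ (fderiv ℝ c) p (0, k) (h, 0) = 0) → k = 0) :
    GibbsBound c K (K ×ˢ K) := by
  refine (hK.prod hK).induction_on (p := GibbsBound c K) ⟨0, fun ε _ φ ψ _ _ _ => by simp⟩ ?_ ?_ ?_
  · rintro s t hst ⟨C, hC⟩
    exact ⟨C, fun ε hε φ ψ hφ hψ hle => (lintegral_mono_set (inter_subset_inter_left _ hst)).trans
      (hC ε hε φ ψ hφ hψ hle)⟩
  · rintro s t ⟨C, hC⟩ ⟨D, hD⟩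
    refine ⟨C + D, fun ε hε φ ψ hφ hψ hle => ?_⟩
    rw [union_inter_distrib_right, ENNReal.coe_add, add_mul]
    exact (lintegral_union_le _ _ _).trans
      (add_le_add (hC ε hε φ ψ hφ hψ hle) (hD ε hε φ ψ hφ hψ hle))
  · intro p hp
    obtain ⟨T, r, a, hr, ha, h⟩ := exists_cross_difference_coercive hc p (htwist p hp)
    refine ⟨_, mem_nhdsWithin_of_mem_nhds ?_, gibbsBound_ball hc.continuous hK.measurableSet ha h⟩
    exact prod_mem_nhds (Metric.ball_mem_nhds _ hr) (Metric.ball_mem_nhds _ hr)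

end Laplace

theorem exists_taylor_bound {V : Type*} [NormedAddCommGroup V] [NormedSpace ℝ V]
    {c : V → ℝ} (hc : ContDiff ℝ 2 c) (hs : HasCompactSupport c) :
    ∃ A : ℝ, 0 ≤ A ∧ ∀ p q, |c q - c p - fderiv ℝ c p (q - p)| ≤ A * ‖q - p‖ ^ 2 := by
  obtain ⟨A, hA⟩ := (hc.fderiv_right (m := 1) (by norm_num)).lipschitzWith_of_hasCompactSupport
    (hs.fderiv ℝ) (by norm_num)
  refine ⟨A, A.2, fun p q => ?_⟩
  have h1 := (convex_closedBall p ‖q - p‖).norm_image_sub_le_of_norm_hasFDerivWithin_le'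
    (f := c) (f' := fderiv ℝ c) (φ := fderiv ℝ c p) (C := A * ‖q - p‖) (x := p) (y := q)
    (fun z _ => ((hc.differentiable (by norm_num)) z).hasFDerivAt.hasFDerivWithinAt)
    (fun z hz => by
      have h2 := hA.dist_le_mul z p
      rw [dist_eq_norm] at h2
      exact h2.trans (mul_le_mul_of_nonneg_left hz A.2))
    (by simp) (by simp [dist_eq_norm])
  rw [Real.norm_eq_abs] at h1
  exact h1.trans (le_of_eq (by ring))

/-- Existence of the `c`-transform of a continuous function on a compact set. -/
theorem exists_cTransform {E : Type*} [TopologicalSpace E] {K : Set E} (hK : IsCompact K)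
    (hne : K.Nonempty) {c : E × E → ℝ} (hc : Continuous c) {ψ : E → ℝ} (hψ : ContinuousOn ψ K) :
    ∃ φ : E → ℝ, (∀ z, ∀ y ∈ K, φ z + ψ y ≤ c (z, y)) ∧ ∀ z, ∃ y ∈ K, φ z + ψ y = c (z, y) := by
  have h : ∀ z, ∃ y ∈ K, ∀ y' ∈ K, c (z, y) - ψ y ≤ c (z, y') - ψ y' := fun z => by
    have hcont : ContinuousOn (fun y => c (z, y) - ψ y) K :=
      (by fun_prop : Continuous fun y => c (z, y)).continuousOn.sub hψ
    obtain ⟨y, hy, hmin⟩ := hK.exists_isMinOn hne hcont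
    exact ⟨y, hy, fun y' hy' => hmin hy'⟩
  choose m hm hmin using h
  refine ⟨fun z => c (z, m z) - ψ (m z), fun z y hy => ?_, fun z => ⟨m z, hm z, by ring⟩⟩
  have := hmin z y hy
  linarith

/-- The function `φ` is semiconcave with constant `A`. -/
def HasSuperdifferential {E : Type*} [NormedAddCommGroup E] [NormedSpace ℝ E] (A : ℝ)
    (φ : E → ℝ) : Prop :=
  ∀ z, ∃ l : E →L[ℝ] ℝ, ∀ z', φ z' ≤ φ z + l (z' - z) + A * ‖z' - z‖ ^ 2

/-- The second difference of a semiconcave function, made nonnegative. -/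
def secondDiff {E : Type*} [NormedAddCommGroup E] (A : ℝ) (φ : E → ℝ) (h x : E) : ℝ :=
  2 * φ x - φ (x + h) - φ (x - h) + 2 * A * ‖h‖ ^ 2

theorem HasSuperdifferential.secondDiff_nonneg {E : Type*} [NormedAddCommGroup E]
    [NormedSpace ℝ E] {A : ℝ} {φ : E → ℝ} (hφ : HasSuperdifferential A φ) (h x : E) :
    0 ≤ secondDiff A φ h x := by
  obtain ⟨l, hl⟩ := hφ x
  have h1 := hl (x + h)
  have h2 := hl (x - h)
  have h3 : x - h - x = -h := by abel
  rw [add_sub_cancel_left] at h1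
  rw [h3, norm_neg, map_neg] at h2
  unfold secondDiff
  linarith

/-- In the directions of an `ℓ¹` ball, the first order increment of a semiconcave function touching
`g` approximately from below is controlled by the second differences along the axes. -/
theorem HasSuperdifferential.linear_le {d : ℕ} {A : ℝ} (hA : 0 ≤ A)
    {φ g : EuclideanSpace ℝ (Fin d) → ℝ} (hφ : HasSuperdifferential A φ)
    {x : EuclideanSpace ℝ (Fin d)} (hle : ∀ z, φ z ≤ g z) {D : EuclideanSpace ℝ (Fin d) →L[ℝ] ℝ}
    (hg : ∀ z, g z ≤ g x + D (z - x) + A * ‖z - x‖ ^ 2) {δ : ℝ} (hδ : 0 < δ)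
    {h : EuclideanSpace ℝ (Fin d)} (hh : ∑ k, |h k| ≤ δ) :
    D h ≤ φ (x + h) - φ x + ∑ k, secondDiff A φ (EuclideanSpace.single k δ) x + (g x - φ x)
      + 4 * A * δ ^ 2 := by
  obtain ⟨l, hl⟩ := hφ (x + h)
  let p : Fin d → EuclideanSpace ℝ (Fin d) := fun k =>
    EuclideanSpace.single k (if 0 ≤ h k then δ else -δ)
  let w : Fin d → ℝ := fun k => |h k| / δ
  have hp : ∀ k, ‖p k‖ = δ := fun k => by
    simp only [p, PiLp.norm_single, Real.norm_eq_abs]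
    split_ifs
    · exact abs_of_pos hδ
    · rw [abs_neg, abs_of_pos hδ]
  have hwp : ∀ k, w k • p k = EuclideanSpace.single k (h k) := fun k => by
    ext j
    by_cases hj : j = k
    · subst hj
      simp only [w, p, PiLp.smul_apply, PiLp.single_apply, if_true, smul_eq_mul]
      split_ifs with h0
      · rw [abs_of_nonneg h0]
        field_simp
      · rw [abs_of_neg (not_le.1 h0)]
        field_simp
    · simp [p, hj]
  have hsum : ∑ k, w k • p k = h := by
    simp only [hwp]
    ext j
    simp [Finset.sum_apply]
  have hw0 : ∀ k, 0 ≤ w k := fun k => by positivity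
  have hw1 : ∑ k, w k ≤ 1 := by
    simp only [w]
    rw [← Finset.sum_div, div_le_one hδ]
    exact hh
  have hwk : ∀ k, w k ≤ 1 := fun k =>
    (Finset.single_le_sum (fun i _ => hw0 i) (Finset.mem_univ k)).trans hw1
  have hnorm : ‖h‖ ≤ δ := by
    conv_lhs => rw [← hsum]
    refine (norm_sum_le _ _).trans ?_
    simp only [norm_smul, hp]
    rw [← Finset.sum_mul]
    have : ∑ k, ‖w k‖ = ∑ k, w k := Finset.sum_congr rfl fun k _ => by
      rw [Real.norm_eq_abs, abs_of_nonneg (hw0 k)]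
    rw [this]
    nlinarith
  have hS : ∀ k, secondDiff A φ (p k) x = secondDiff A φ (EuclideanSpace.single k δ) x := by
    intro k
    simp only [p]
    split_ifs
    · rfl
    · have : EuclideanSpace.single k (-δ) = -(EuclideanSpace.single k δ) := by
        ext j
        by_cases hj : j = k <;> simp [hj]
      rw [this]
      unfold secondDiff
      rw [norm_neg, sub_neg_eq_add, ← sub_eq_add_neg]
      ring
  have hup : ∀ k, φ (x + p k) ≤ φ (x + h) + l (p k) - l h + 4 * A * δ ^ 2 := fun k => by
    have h1 := hl (x + p k)
    rw [add_sub_add_left_eq_sub, map_sub] at h1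
    have h2 : ‖p k - h‖ ^ 2 ≤ (2 * δ) ^ 2 := by
      refine pow_le_pow_left₀ (norm_nonneg _) ?_ 2
      have := norm_sub_le (p k) h
      rw [hp] at this
      linarith
    have := mul_le_mul_of_nonneg_left h2 hA
    nlinarith
  have hup0 : φ x ≤ φ (x + h) - l h + 4 * A * δ ^ 2 := by
    have h1 := hl x
    rw [sub_add_cancel_left, map_neg, norm_neg] at h1
    have h2 : ‖h‖ ^ 2 ≤ δ ^ 2 := pow_le_pow_left₀ (norm_nonneg _) hnorm 2
    have := mul_le_mul_of_nonneg_left h2 hA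
    have h3 : 0 ≤ A * δ ^ 2 := by positivity
    linarith
  have hlow : ∀ k, φ x + D (p k) - secondDiff A φ (EuclideanSpace.single k δ) x - (g x - φ x)
      ≤ φ (x + p k) := fun k => by
    have h1 := (hle (x - p k)).trans (hg (x - p k))
    have h3 : x - p k - x = -p k := by abel
    rw [h3, map_neg, norm_neg, hp] at h1
    rw [← hS]
    unfold secondDiff
    rw [hp]
    have h3 : 0 ≤ A * δ ^ 2 := by positivity
    linarith
  have he : 0 ≤ g x - φ x := by linarith [hle x]
  have key : ∀ k, w k * (D (p k)) - secondDiff A φ (EuclideanSpace.single k δ) x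
      - w k * (g x - φ x) ≤ w k * (φ (x + h) - φ x - l h + 4 * A * δ ^ 2) + w k * l (p k) := by
    intro k
    have h1 := mul_le_mul_of_nonneg_left ((hlow k).trans (hup k)) (hw0 k)
    have h2 := mul_le_mul_of_nonneg_right (hwk k)
      (hφ.secondDiff_nonneg (EuclideanSpace.single k δ) x)
    linarith
  have hsumkey := Finset.sum_le_sum fun k (_ : k ∈ Finset.univ) => key k
  rw [Finset.sum_sub_distrib, Finset.sum_sub_distrib, Finset.sum_add_distrib, ← Finset.sum_mul,
    ← Finset.sum_mul] at hsumkey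
  have hlin : ∀ m : EuclideanSpace ℝ (Fin d) →L[ℝ] ℝ, ∑ k, w k * m (p k) = m h := fun m => by
    conv_rhs => rw [← hsum]
    simp [map_sum]
  rw [hlin, hlin] at hsumkey
  nlinarith

/-- A Lipschitz cutoff equal to one on `K`. -/
def lipCutoff {E : Type*} [NormedAddCommGroup E] (K : Set E) (x : E) : ℝ :=
  max 0 (1 - Metric.infDist x K)

theorem continuous_lipCutoff {E : Type*} [NormedAddCommGroup E] (K : Set E) :
    Continuous (lipCutoff K) := by
  have := Metric.continuous_infDist_pt K
  unfold lipCutoff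
  fun_prop

theorem lipCutoff_nonneg {E : Type*} [NormedAddCommGroup E] (K : Set E) (x : E) :
    0 ≤ lipCutoff K x :=
  le_max_left _ _

theorem lipCutoff_eq_one {E : Type*} [NormedAddCommGroup E] {K : Set E} {x : E}
    (hx : x ∈ K) : lipCutoff K x = 1 := by
  simp [lipCutoff, Metric.infDist_zero_of_mem hx]

theorem abs_lipCutoff_sub_le {E : Type*} [NormedAddCommGroup E] (K : Set E) (x y : E) :
    |lipCutoff K x - lipCutoff K y| ≤ ‖x - y‖ := by
  have h1 := (abs_max_sub_max_le_max 0 (1 - Metric.infDist x K) 0 (1 - Metric.infDist y K))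
  have h2 := (Metric.lipschitz_infDist_pt K).dist_le_mul x y
  rw [Real.dist_eq, dist_eq_norm, NNReal.coe_one, one_mul] at h2
  have h3 : 1 - Metric.infDist x K - (1 - Metric.infDist y K)
      = -(Metric.infDist x K - Metric.infDist y K) := by ring
  rw [sub_self, abs_zero, h3, abs_neg,
    max_eq_right (abs_nonneg (Metric.infDist x K - Metric.infDist y K))] at h1
  exact h1.trans h2

theorem lipCutoff_eq_zero {E : Type*} [NormedAddCommGroup E] {K : Set E} (hne : K.Nonempty)
    {R : ℝ} (hR : K ⊆ Metric.closedBall 0 R) {x : E} (hx : R + 1 ≤ ‖x‖) : lipCutoff K x = 0 := by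
  refine max_eq_left ?_
  by_contra! hlt
  obtain ⟨k, hk, hd⟩ := (Metric.infDist_lt_iff hne).1 (show Metric.infDist x K < 1 by linarith)
  have h1 := mem_closedBall_zero_iff.1 (hR hk)
  rw [dist_eq_norm] at hd
  have h2 := norm_add_le k (x - k)
  rw [add_sub_cancel] at h2
  linarith

theorem hasCompactSupport_lipCutoff {E : Type*} [NormedAddCommGroup E] [ProperSpace E]
    {K : Set E} (hK : IsCompact K) (hne : K.Nonempty) :
    HasCompactSupport (lipCutoff K) := by
  obtain ⟨R, hR⟩ := hK.isBounded.subset_closedBall 0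
  refine HasCompactSupport.of_support_subset_isCompact (isCompact_closedBall (0 : E) (R + 1))
    fun x hx => ?_
  by_contra hx'
  rw [mem_closedBall_zero_iff, not_le] at hx'
  exact hx (lipCutoff_eq_zero hne hR hx'.le)

section SecondDifference

variable {E : Type*} [NormedAddCommGroup E] [InnerProductSpace ℝ E] [FiniteDimensional ℝ E]
  [MeasurableSpace E] [BorelSpace E]

/-- The second differences of a Lipschitz semiconcave function are `O(‖h‖ ^ 2)` in mean, by a
summation by parts. -/
theorem exists_integral_secondDiff_le {K : Set E} (hK : IsCompact K) (hne : K.Nonempty)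
    {A : ℝ} (hA : 0 ≤ A) (L : ℝ≥0) (M : ℝ≥0) :
    ∃ C : ℝ, 0 ≤ C ∧ ∀ φ : E → ℝ, LipschitzWith L φ → HasSuperdifferential A φ →
      ∀ μ : Measure E, IsProbabilityMeasure μ → (∀ᵐ x ∂μ, x ∈ K) → μ ≤ M • volume →
      ∀ h : E, ‖h‖ ≤ 1 → ∫ x, secondDiff A φ h x ∂μ ≤ C * ‖h‖ ^ 2 := by
  obtain ⟨R, hR⟩ := hK.isBounded.subset_closedBall 0
  set w := lipCutoff K with hw
  have hwc : Continuous w := continuous_lipCutoff K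
  have hws : HasCompactSupport w := hasCompactSupport_lipCutoff hK hne
  have hwi : Integrable w volume := hwc.integrable_of_hasCompactSupport hws
  set V : ℝ := volume.real (Metric.closedBall (0 : E) (R + 2))
  have hV : 0 ≤ V := measureReal_nonneg
  have hIw : 0 ≤ ∫ x, w x := integral_nonneg fun x => lipCutoff_nonneg K x
  refine ⟨M * (L * V + 2 * A * ∫ x, w x), by positivity, fun φ hφL hφA μ hμ hμK hμM h hh => ?_⟩
  have hφ : Continuous φ := hφL.continuous
  have hSc : Continuous (secondDiff A φ h) := by
    unfold secondDiff
    fun_prop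
  have hInt : ∀ f : E → ℝ, Continuous f → Integrable (fun x => f x * w x) volume := fun f hf =>
    (hf.mul hwc).integrable_of_hasCompactSupport hws.mul_left
  have h1 : ∫ x, secondDiff A φ h x ∂μ = ∫ x, secondDiff A φ h x * w x ∂μ := by
    refine integral_congr_ae ?_
    filter_upwards [hμK] with x hx
    rw [hw, lipCutoff_eq_one hx, mul_one]
  have h2 : ∫ x, secondDiff A φ h x * w x ∂μ ≤ M * ∫ x, secondDiff A φ h x * w x := by
    have := integral_mono_measure hμM (Eventually.of_forall fun x =>
      mul_nonneg (hφA.secondDiff_nonneg h x) (lipCutoff_nonneg K x))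
      ((hInt _ hSc).smul_measure_nnreal (c := M))
    rwa [integral_smul_nnreal_measure] at this
  let D : E → ℝ := fun x => φ x - φ (x + h)
  have hDc : Continuous D := by
    simp only [D]
    fun_prop
  have hwc' : Continuous fun x => w (x + h) := by fun_prop
  have hws' : HasCompactSupport fun x => w (x + h) :=
    hws.comp_homeomorph (Homeomorph.addRight h)
  have h3 : ∫ x, secondDiff A φ h x * w x
      = (∫ x, D x * (w x - w (x + h))) + 2 * A * ‖h‖ ^ 2 * ∫ x, w x := by
    have e1 : ∀ x, secondDiff A φ h x * w x
        = D x * w x - D (x - h) * w x + 2 * A * ‖h‖ ^ 2 * w x := fun x => by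
      simp only [secondDiff, D, sub_add_cancel]
      ring
    have e2 : ∫ x, D (x - h) * w x = ∫ x, D x * w (x + h) := by
      have := integral_add_right_eq_self (μ := (volume : Measure E))
        (fun x => D (x - h) * w x) h
      simp only [add_sub_cancel_right] at this
      exact this.symm
    have i2 : Integrable (fun x => D (x - h) * w x) volume := hInt _ (by fun_prop)
    have i3 : Integrable (fun x => D x * w (x + h)) volume :=
      (hDc.mul hwc').integrable_of_hasCompactSupport hws'.mul_left
    have i4 : Integrable (fun x => D x * w x - D (x - h) * w x) volume := (hInt D hDc).sub i2
    simp only [e1, mul_sub]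
    rw [integral_add i4 (hwi.const_mul _), integral_sub (hInt D hDc) i2, e2,
      integral_const_mul, integral_sub (hInt D hDc) i3]
  have h4 : ∫ x, D x * (w x - w (x + h)) ≤ L * V * ‖h‖ ^ 2 := by
    have hb : ∀ x, ‖D x * (w x - w (x + h))‖
        ≤ (Metric.closedBall (0 : E) (R + 2)).indicator (fun _ => L * ‖h‖ ^ 2) x := fun x => by
      by_cases hx : x ∈ Metric.closedBall (0 : E) (R + 2)
      · rw [indicator_of_mem hx, norm_mul]
        have e1 := hφL.dist_le_mul x (x + h)
        have e2 := abs_lipCutoff_sub_le K x (x + h)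
        rw [sub_add_cancel_left, norm_neg] at e2
        rw [dist_self_add_right, dist_eq_norm] at e1
        calc ‖D x‖ * ‖w x - w (x + h)‖ ≤ (L * ‖h‖) * ‖h‖ := by
              gcongr
              exact e2
          _ = L * ‖h‖ ^ 2 := by ring
      · rw [indicator_of_notMem hx]
        rw [mem_closedBall_zero_iff, not_le] at hx
        have e1 : w x = 0 := lipCutoff_eq_zero hne hR (by linarith)
        have e2 : w (x + h) = 0 := lipCutoff_eq_zero hne hR (by
          have := norm_sub_le (x + h) h
          rw [add_sub_cancel_right] at this
          linarith)
        simp [e1, e2]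
    have hfin : volume (Metric.closedBall (0 : E) (R + 2)) ≠ ⊤ := measure_closedBall_lt_top.ne
    have hi : Integrable ((Metric.closedBall (0 : E) (R + 2)).indicator
        (fun _ => L * ‖h‖ ^ 2)) volume :=
      (integrable_indicator_iff measurableSet_closedBall).2 (integrableOn_const hfin)
    have := norm_integral_le_of_norm_le hi (Eventually.of_forall hb)
    rw [integral_indicator_const _ measurableSet_closedBall, smul_eq_mul] at this
    refine (le_abs_self _).trans (this.trans (le_of_eq ?_))
    ring
  calc ∫ x, secondDiff A φ h x ∂μ ≤ M * ∫ x, secondDiff A φ h x * w x := h1.trans_le h2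
    _ ≤ M * (L * V * ‖h‖ ^ 2 + 2 * A * ‖h‖ ^ 2 * ∫ x, w x) := by
        rw [h3]
        exact mul_le_mul_of_nonneg_left (by linarith) M.2
    _ = _ := by ring

end SecondDifference

/-- The Gibbs variational inequality. -/
theorem neg_mul_log_le_integral_add_entropy {α : Type*} [MeasurableSpace α] {γ q : Measure α}
    [IsProbabilityMeasure γ] [IsProbabilityMeasure q] (hγ : γ ≪ q)
    (hent : Integrable (fun x => (γ.rnDeriv q x).toReal * log (γ.rnDeriv q x).toReal) q)
    {e : α → ℝ} (hem : Measurable e) (hei : Integrable e γ) {ε B : ℝ} (hε : 0 < ε) (hB : 0 < B)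
    (hle : ∫⁻ x, ENNReal.ofReal (rexp (-e x / ε)) ∂q ≤ ENNReal.ofReal B) :
    -(ε * log B) ≤ ∫ x, e x ∂γ
      + ε * ∫ x, (γ.rnDeriv q x).toReal * log (γ.rnDeriv q x).toReal ∂q := by
  set ρ : α → ℝ := fun x => (γ.rnDeriv q x).toReal with hρ
  have hwm : AEStronglyMeasurable (fun x => rexp (-e x / ε)) q := by
    refine Measurable.aestronglyMeasurable ?_
    fun_prop
  have hwi : Integrable (fun x => rexp (-e x / ε)) q := by
    refine ⟨hwm, ?_⟩
    rw [hasFiniteIntegral_iff_ofReal (Eventually.of_forall fun x => (exp_pos _).le)]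
    exact hle.trans_lt ENNReal.ofReal_lt_top
  have hw1 : ∫ x, rexp (-e x / ε) ∂q ≤ B := by
    rw [integral_eq_lintegral_of_nonneg_ae (Eventually.of_forall fun x => (exp_pos _).le) hwm]
    exact ENNReal.toReal_le_of_le_ofReal hB.le hle
  have hρi : Integrable ρ q := Measure.integrable_toReal_rnDeriv
  have hρ1 : ∫ x, ρ x ∂q = 1 := by
    rw [hρ, Measure.integral_toReal_rnDeriv hγ]
    simp
  have hρe : Integrable (fun x => ρ x * e x) q := (integrable_rnDeriv_smul_iff hγ).2 hei
  have hρe1 : ∫ x, ρ x * e x ∂q = ∫ x, e x ∂γ := integral_rnDeriv_smul hγ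
  have hpt : ∀ x, ρ x - rexp (-e x / ε) / B
      ≤ ρ x * log (ρ x) + (ρ x * e x) / ε + ρ x * log B := fun x => by
    have hρ0 : 0 ≤ ρ x := ENNReal.toReal_nonneg
    rcases hρ0.eq_or_lt with h0 | h0
    · rw [← h0]
      have : 0 ≤ rexp (-e x / ε) / B := by positivity
      simp only [zero_mul, zero_div, add_zero, zero_sub]
      linarith
    · have hw : 0 < rexp (-e x / ε) / B := by positivity
      have h1 := log_le_sub_one_of_pos (div_pos hw h0)
      rw [log_div hw.ne' h0.ne', log_div (exp_pos _).ne' hB.ne', log_exp] at h1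
      have h2 := mul_le_mul_of_nonneg_left h1 hρ0
      have h3 : ρ x * (rexp (-e x / ε) / B / ρ x - 1) = rexp (-e x / ε) / B - ρ x := by
        field_simp
      rw [h3] at h2
      have h4 : ρ x * e x / ε = -(ρ x * (-e x / ε)) := by ring
      rw [h4]
      linarith
  have i1 : Integrable (fun x => ρ x * log (ρ x) + (ρ x * e x) / ε) q := hent.add (hρe.div_const ε)
  have h := integral_mono (hρi.sub (hwi.div_const B)) (i1.add (hρi.mul_const (log B))) hpt
  simp only [Pi.sub_apply, Pi.add_apply] at h
  rw [integral_sub hρi (hwi.div_const B), integral_add i1 (hρi.mul_const _),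
    integral_add hent (hρe.div_const ε), integral_div, integral_div, integral_mul_const, hρ1, hρe1,
    one_mul] at h
  have h5 : (∫ x, rexp (-e x / ε) ∂q) / B ≤ 1 := (div_le_one hB).2 hw1
  have h6 : 0 ≤ ∫ x, ρ x * log (ρ x) ∂q + (∫ x, e x ∂γ) / ε + log B := by linarith
  have h7 := mul_nonneg hε.le h6
  have h8 : ε * (∫ x, ρ x * log (ρ x) ∂q + (∫ x, e x ∂γ) / ε + log B)
      = ε * ∫ x, ρ x * log (ρ x) ∂q + ∫ x, e x ∂γ + ε * log B := by
    field_simp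
  linarith

/-- Weak duality for the entropic problem with a cost satisfying a Gibbs bound. -/
theorem GibbsBound.exists_le_integral_add_entropy {E : Type*} [NormedAddCommGroup E]
    [InnerProductSpace ℝ E] [FiniteDimensional ℝ E] [MeasurableSpace E] [BorelSpace E]
    {c : E × E → ℝ} (hc : Continuous c) {K : Set E} (hK : IsCompact K)
    (hG : GibbsBound c K (K ×ˢ K)) (M : ℝ≥0) :
    ∃ C : ℝ, 0 ≤ C ∧ ∀ μ ν : Measure E, IsProbabilityMeasure μ → IsProbabilityMeasure ν →
      (∀ᵐ x ∂μ, x ∈ K) → (∀ᵐ y ∂ν, y ∈ K) → μ ≤ M • volume → ν ≤ M • volume →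
      ∀ φ ψ : E → ℝ, Measurable φ → Measurable ψ → ContinuousOn φ K → ContinuousOn ψ K →
      (∀ x ∈ K, ∀ y ∈ K, φ x + ψ y ≤ c (x, y)) →
      ∀ γ : Measure (E × E), IsProbabilityMeasure γ → γ.fst = μ → γ.snd = ν → γ ≪ μ.prod ν →
      Integrable (fun p => (γ.rnDeriv (μ.prod ν) p).toReal
        * log (γ.rnDeriv (μ.prod ν) p).toReal) (μ.prod ν) →
      ∀ ε : ℝ, 0 < ε →
        ∫ x, φ x ∂μ + ∫ y, ψ y ∂ν + Module.finrank ℝ E / 2 * (ε * log (1 / ε)) - C * ε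
          ≤ ∫ p, c p ∂γ + ε * ∫ p, (γ.rnDeriv (μ.prod ν) p).toReal
            * log (γ.rnDeriv (μ.prod ν) p).toReal ∂(μ.prod ν) := by
  obtain ⟨C, hC⟩ := hG
  set C₁ : ℝ≥0 := max (M * M * C) 1 with hC₁
  have hC₁1 : (1 : ℝ) ≤ C₁ := by exact_mod_cast le_max_right _ _
  refine ⟨log C₁, log_nonneg hC₁1, fun μ ν hμ hν hμK hνK hμM hνM φ ψ hφm hψm hφc hψc hle γ hγ hγ1
    hγ2 hac hent ε hε => ?_⟩
  have hcm : Measurable c := hc.measurable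
  have hφi : Integrable φ μ := integrable_of_continuousOn_of_ae_mem hK hμK hφc
  have hψi : Integrable ψ ν := integrable_of_continuousOn_of_ae_mem hK hνK hψc
  have hci : Integrable c γ := integrable_of_continuousOn_of_ae_mem (hK.prod hK)
    (coupling_ae_mem hγ1 hγ2 hμK hνK) hc.continuousOn
  obtain ⟨hei, he⟩ := integral_sub_potentials hγ1 hγ2 hci hφm hψm hφi hψi
  have hqM : μ.prod ν ≤ (M * M) • volume := by
    refine (Measure.prod_mono hμM hνM).trans (le_of_eq ?_)
    rw [Measure.prod_smul_left, Measure.prod_smul_right, smul_smul]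
    rfl
  have hqK : ∀ᵐ p ∂(μ.prod ν), p ∈ K ×ˢ K :=
    coupling_ae_mem (μ := μ) (ν := ν) (by simp) (by simp) hμK hνK
  have hB : ∫⁻ p, ENNReal.ofReal (rexp (-(c p - φ p.1 - ψ p.2) / ε)) ∂(μ.prod ν)
      ≤ ENNReal.ofReal (C₁ * ε ^ (Module.finrank ℝ E / 2 : ℝ)) := by
    rw [← Measure.restrict_eq_self_of_ae_mem hqK]
    have h1 := hC ε hε φ ψ hφm hψm hle
    rw [inter_self] at h1
    calc ∫⁻ p in K ×ˢ K, ENNReal.ofReal (rexp (-(c p - φ p.1 - ψ p.2) / ε)) ∂(μ.prod ν)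
        ≤ ∫⁻ p in K ×ˢ K, ENNReal.ofReal (rexp (-(c p - φ p.1 - ψ p.2) / ε))
            ∂((M * M) • volume) := lintegral_mono' (Measure.restrict_mono le_rfl hqM) le_rfl
      _ = (M * M : ℝ≥0) * ∫⁻ p in K ×ˢ K,
            ENNReal.ofReal (rexp (-(c p - φ p.1 - ψ p.2) / ε)) := by
          rw [Measure.restrict_smul, lintegral_smul_measure]
          rfl
      _ ≤ (M * M : ℝ≥0) * (C * ENNReal.ofReal (ε ^ (Module.finrank ℝ E / 2 : ℝ))) := by gcongr
      _ ≤ C₁ * ENNReal.ofReal (ε ^ (Module.finrank ℝ E / 2 : ℝ)) := by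
          rw [← mul_assoc, ← ENNReal.coe_mul]
          gcongr
          exact le_max_left _ _
      _ = _ := by
          rw [ENNReal.ofReal_mul (by positivity), ENNReal.ofReal_coe_nnreal]
  have hpow : 0 < ε ^ (Module.finrank ℝ E / 2 : ℝ) := rpow_pos_of_pos hε _
  have hmain := neg_mul_log_le_integral_add_entropy hac hent (by fun_prop) hei hε
    (by positivity) hB
  rw [he, log_mul (by positivity) hpow.ne', log_rpow hε] at hmain
  rw [one_div, log_inv]
  linarith

/-- The density of a measure on a countable product with respect to the product of its
marginals. -/
def blockDensity {I J : Type*} [MeasurableSpace I] [MeasurableSpace J] (g : Measure (I × J))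
    (p : I × J) : ℝ≥0∞ :=
  g {p} / (g.fst {p.1} * g.snd {p.2})

theorem singleton_le_fst {I J : Type*} [MeasurableSpace I] [MeasurableSpace J]
    [MeasurableSingletonClass I] (g : Measure (I × J)) (p : I × J) : g {p} ≤ g.fst {p.1} := by
  rw [Measure.fst_apply (measurableSet_singleton _)]
  exact measure_mono (by simp)

theorem singleton_le_snd {I J : Type*} [MeasurableSpace I] [MeasurableSpace J]
    [MeasurableSingletonClass J] (g : Measure (I × J)) (p : I × J) : g {p} ≤ g.snd {p.2} := by
  rw [Measure.snd_apply (measurableSet_singleton _)]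
  exact measure_mono (by simp)

theorem ae_map_singleton_ne_zero {α I : Type*} [MeasurableSpace α]
    [MeasurableSpace I] [Countable I] {μ : Measure α} {Q : α → I} (hQ : Measurable Q) :
    ∀ᵐ x ∂μ, μ.map Q {Q x} ≠ 0 := by
  have h : ∀ᵐ i ∂(μ.map Q), μ.map Q {i} ≠ 0 := by
    rw [ae_iff_of_countable]
    exact fun i hi => hi
  exact ae_of_ae_map hQ.aemeasurable h

theorem blockDensity_mul {I J : Type*} [MeasurableSpace I] [MeasurableSpace J]
    [MeasurableSingletonClass I] [MeasurableSingletonClass J] (g : Measure (I × J))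
    [IsFiniteMeasure g] (p : I × J) :
    blockDensity g p * (g.fst {p.1} * g.snd {p.2}) = g {p} := by
  refine ENNReal.div_mul_cancel' (fun h => ?_)
    (fun h => absurd h (ENNReal.mul_ne_top (measure_ne_top _ _) (measure_ne_top _ _)))
  rcases mul_eq_zero.1 h with h | h
  · exact nonpos_iff_eq_zero.1 ((singleton_le_fst g p).trans h.le)
  · exact nonpos_iff_eq_zero.1 ((singleton_le_snd g p).trans h.le)

theorem blockDensity_le {I J : Type*} [MeasurableSpace I] [MeasurableSpace J]
    [MeasurableSingletonClass I] (g : Measure (I × J)) [IsFiniteMeasure g] (p : I × J) :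
    blockDensity g p ≤ (g.snd {p.2})⁻¹ := by
  rcases eq_or_ne (g.fst {p.1}) 0 with h | h
  · have : g {p} = 0 := nonpos_iff_eq_zero.1 ((singleton_le_fst g p).trans h.le)
    simp [blockDensity, this]
  · have hle := ENNReal.div_le_div_right (singleton_le_fst g p) (g.fst {p.1} * g.snd {p.2})
    refine hle.trans ?_
    rw [ENNReal.div_eq_inv_mul, ENNReal.mul_inv (Or.inl h) (Or.inl (measure_ne_top _ _)),
      mul_right_comm, ENNReal.inv_mul_cancel h (measure_ne_top _ _), one_mul]

theorem lintegral_blockDensity_snd {I J : Type*} [MeasurableSpace I] [MeasurableSpace J]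
    [MeasurableSingletonClass I] [MeasurableSingletonClass J] [Countable J]
    (g : Measure (I × J)) [IsFiniteMeasure g] {i : I}
    (hi : g.fst {i} ≠ 0) : ∫⁻ j, blockDensity g (i, j) ∂g.snd = 1 := by
  rw [← ENNReal.mul_right_inj hi (measure_ne_top _ _), lintegral_countable', mul_one,
    Measure.fst_apply (measurableSet_singleton _), measure_preimage_fst_singleton_eq_tsum,
    ← ENNReal.tsum_mul_left]
  refine tsum_congr fun j => ?_
  rw [← blockDensity_mul g (i, j), ← measure_preimage_fst_singleton_eq_tsum,
    Measure.fst_apply (measurableSet_singleton _)]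
  ring

theorem lintegral_blockDensity_fst {I J : Type*} [MeasurableSpace I] [MeasurableSpace J]
    [MeasurableSingletonClass I] [MeasurableSingletonClass J] [Countable I]
    (g : Measure (I × J)) [IsFiniteMeasure g] {j : J}
    (hj : g.snd {j} ≠ 0) : ∫⁻ i, blockDensity g (i, j) ∂g.fst = 1 := by
  rw [← ENNReal.mul_right_inj hj (measure_ne_top _ _), lintegral_countable', mul_one,
    Measure.snd_apply (measurableSet_singleton _), measure_preimage_snd_singleton_eq_tsum,
    ← ENNReal.tsum_mul_left]
  refine tsum_congr fun i => ?_
  rw [← blockDensity_mul g (i, j), ← measure_preimage_snd_singleton_eq_tsum,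
    Measure.snd_apply (measurableSet_singleton _)]
  ring

/-- Averaging the density of a coupling over the blocks of a partition gives a coupling with the
same block masses, and with entropy at most the logarithm of the number of blocks. -/
theorem exists_block_coupling {I J : Type*} [MeasurableSpace I] [MeasurableSpace J] [Countable I]
    [Countable J] [MeasurableSingletonClass I] [MeasurableSingletonClass J]
    {α β : Type*} [MeasurableSpace α] [MeasurableSpace β]
    {μ : Measure α} {ν : Measure β} [IsProbabilityMeasure μ] [IsProbabilityMeasure ν]
    {γ₀ : Measure (α × β)} [IsProbabilityMeasure γ₀] (h1 : γ₀.fst = μ) (h2 : γ₀.snd = ν)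
    {Q : α → I} {Q' : β → J} (hQ : Measurable Q) (hQ' : Measurable Q')
    {F : Finset J} (hF : ∀ᵐ y ∂ν, Q' y ∈ F) :
    ∃ γ : Measure (α × β), IsProbabilityMeasure γ ∧ γ.fst = μ ∧ γ.snd = ν ∧ γ ≪ μ.prod ν ∧
      Integrable (fun p => (γ.rnDeriv (μ.prod ν) p).toReal
        * log (γ.rnDeriv (μ.prod ν) p).toReal) (μ.prod ν) ∧
      ∫ p, (γ.rnDeriv (μ.prod ν) p).toReal * log (γ.rnDeriv (μ.prod ν) p).toReal ∂(μ.prod ν)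
        ≤ log F.card ∧
      γ.map (Prod.map Q Q') = γ₀.map (Prod.map Q Q') := by
  have hQQ : Measurable (Prod.map Q Q') := hQ.prodMap hQ'
  set g := γ₀.map (Prod.map Q Q') with hg
  have hgp : IsProbabilityMeasure g := Measure.isProbabilityMeasure_map hQQ.aemeasurable
  have hg1 : g.fst = μ.map Q := by
    rw [hg, ← h1, Measure.fst, Measure.fst, Measure.map_map measurable_fst hQQ,
      Measure.map_map hQ measurable_fst]
    rfl
  have hg2 : g.snd = ν.map Q' := by
    rw [hg, ← h2, Measure.snd, Measure.snd, Measure.map_map measurable_snd hQQ,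
      Measure.map_map hQ' measurable_snd]
    rfl
  set r : α × β → ℝ≥0∞ := fun p => blockDensity g (Q p.1, Q' p.2) with hr
  have hrm : Measurable r := (Measurable.of_discrete (f := blockDensity g)).comp hQQ
  have hν0 : ∀ᵐ y ∂ν, g.snd {Q' y} ≠ 0 := by
    rw [hg2]
    exact ae_map_singleton_ne_zero hQ'
  have hμ0 : ∀ᵐ x ∂μ, g.fst {Q x} ≠ 0 := by
    rw [hg1]
    exact ae_map_singleton_ne_zero hQ
  have hr2 : ∀ᵐ x ∂μ, ∫⁻ y, r (x, y) ∂ν = 1 := by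
    filter_upwards [hμ0] with x hx
    rw [← lintegral_blockDensity_snd g hx, hg2, lintegral_map Measurable.of_discrete hQ']
  have hr1 : ∀ᵐ y ∂ν, ∫⁻ x, r (x, y) ∂μ = 1 := by
    filter_upwards [hν0] with y hy
    rw [← lintegral_blockDensity_fst g hy, hg1, lintegral_map Measurable.of_discrete hQ]
  set q := μ.prod ν with hq
  set γ := q.withDensity r with hγ
  have hγ1 : γ.fst = μ := by
    ext s hs
    rw [Measure.fst_apply hs, hγ, withDensity_apply _ (measurable_fst hs),
      ← lintegral_indicator (measurable_fst hs), lintegral_prod _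
        (hrm.indicator (measurable_fst hs)).aemeasurable]
    have : ∀ᵐ x ∂μ, ∫⁻ y, (Prod.fst ⁻¹' s).indicator r (x, y) ∂ν = s.indicator 1 x := by
      filter_upwards [hr2] with x hx
      by_cases hxs : x ∈ s
      · simpa [indicator, hxs] using hx
      · simp [indicator, hxs]
    rw [lintegral_congr_ae this, lintegral_indicator_one hs]
  have hγ2 : γ.snd = ν := by
    ext s hs
    rw [Measure.snd_apply hs, hγ, withDensity_apply _ (measurable_snd hs),
      ← lintegral_indicator (measurable_snd hs), lintegral_prod_symm _
        (hrm.indicator (measurable_snd hs)).aemeasurable]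
    have : ∀ᵐ y ∂ν, ∫⁻ x, (Prod.snd ⁻¹' s).indicator r (x, y) ∂μ = s.indicator 1 y := by
      filter_upwards [hr1] with y hy
      by_cases hys : y ∈ s
      · simpa [indicator, hys] using hy
      · simp [indicator, hys]
    rw [lintegral_congr_ae this, lintegral_indicator_one hs]
  have hγp : IsProbabilityMeasure γ := ⟨by
    rw [← Measure.fst_univ, hγ1, measure_univ]⟩
  have hmap : γ.map (Prod.map Q Q') = g := by
    refine Measure.ext_of_singleton fun p => ?_
    have hms : MeasurableSet (Prod.map Q Q' ⁻¹' {p}) := hQQ (measurableSet_singleton p)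
    rw [Measure.map_apply hQQ (measurableSet_singleton p), hγ, withDensity_apply _ hms,
      setLIntegral_congr_fun (f := r) (g := fun _ => blockDensity g p) hms
        (fun z hz => congrArg (blockDensity g) hz), setLIntegral_const,
        ← blockDensity_mul g p, hg1, hg2]
    congr 1
    rw [Measure.map_apply hQ (measurableSet_singleton _),
      Measure.map_apply hQ' (measurableSet_singleton _), ← Measure.prod_prod]
    congr 1
    ext z
    simp [Prod.ext_iff]
  have hder : γ.rnDeriv q =ᵐ[q] r := Measure.rnDeriv_withDensity q hrm
  set ρ : α × β → ℝ := fun p => (r p).toReal with hρ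
  have hρm : Measurable ρ := hrm.ennreal_toReal
  have hρ0 : ∀ p, 0 ≤ ρ p := fun p => ENNReal.toReal_nonneg
  let t : J → ℝ := fun j => (g.snd {j}).toReal⁻¹
  have ht0 : ∀ j, 0 ≤ t j := fun j => inv_nonneg.2 ENNReal.toReal_nonneg
  have hνq : ∀ {P : β → Prop}, (∀ᵐ y ∂ν, P y) → ∀ᵐ p ∂q, P p.2 := fun h =>
    Measure.quasiMeasurePreserving_snd.ae h
  have hρt : ∀ᵐ p ∂q, ρ p ≤ t (Q' p.2) := by
    filter_upwards [hνq hν0] with p hp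
    have := ENNReal.toReal_mono (ENNReal.inv_ne_top.2 hp) (blockDensity_le g (Q p.1, Q' p.2))
    rwa [ENNReal.toReal_inv] at this
  have hρT : ∀ᵐ p ∂q, ρ p ≤ ∑ j ∈ F, t j := by
    filter_upwards [hρt, hνq hF] with p hp hpF
    exact hp.trans (Finset.single_le_sum (f := t) (fun j _ => ht0 j) hpF)
  set T := ∑ j ∈ F, t j
  have hTi : ∀ {f : α × β → ℝ} (C : ℝ), Measurable f → (∀ᵐ p ∂q, |f p| ≤ C) → Integrable f q :=
    fun C hf hb => Integrable.of_bound hf.aestronglyMeasurable C hb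
  have hρi : Integrable ρ q := hTi T hρm (by
    filter_upwards [hρT] with p hp
    rwa [abs_of_nonneg (hρ0 p)])
  have hρ1 : ∫ p, ρ p ∂q = 1 := by
    have h3 := Measure.integral_toReal_rnDeriv (μ := γ) (ν := q)
      (withDensity_absolutelyContinuous _ _)
    rw [probReal_univ] at h3
    rw [← h3]
    refine integral_congr_ae ?_
    filter_upwards [hder] with p hp
    rw [hp]
  have hlow : ∀ p, -1 ≤ ρ p * log (ρ p) := fun p => by
    rcases (hρ0 p).eq_or_lt with h | h
    · simp [← h]
    · have := mul_le_mul_of_nonneg_left (one_sub_inv_le_log_of_pos h) (hρ0 p)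
      have h3 : ρ p * (1 - (ρ p)⁻¹) = ρ p - 1 := by field_simp
      linarith
  have hup : ∀ N : ℝ, 0 < N → ∀ p, ρ p * log (ρ p) ≤ ρ p * (log N - 1) + ρ p * ρ p / N := by
    intro N hN p
    rcases (hρ0 p).eq_or_lt with h | h
    · simp [← h]
    · have h3 := log_le_sub_one_of_pos (div_pos h hN)
      rw [log_div h.ne' hN.ne'] at h3
      have h4 := mul_le_mul_of_nonneg_left h3 (hρ0 p)
      have h5 : ρ p * (ρ p / N - 1) = ρ p * ρ p / N - ρ p := by ring
      linarith
  have hent : Integrable (fun p => ρ p * log (ρ p)) q := by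
    refine hTi (T * T + 1) (hρm.mul (measurable_log.comp hρm)) ?_
    filter_upwards [hρT] with p hp
    have h3 := hlow p
    have h4 := hup 1 one_pos p
    rw [log_one] at h4
    have h5 := mul_self_le_mul_self (hρ0 p) hp
    have h6 := hρ0 p
    rw [abs_le]
    constructor <;> nlinarith
  have hcongr : (fun p => (γ.rnDeriv q p).toReal * log (γ.rnDeriv q p).toReal)
      =ᵐ[q] fun p => ρ p * log (ρ p) := by
    filter_upwards [hder] with p hp
    rw [hp]
  have hFne : F.Nonempty := by
    obtain ⟨y, hy⟩ := hF.exists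
    exact ⟨_, hy⟩
  have hN : (0 : ℝ) < F.card := by exact_mod_cast hFne.card_pos
  refine ⟨γ, hγp, hγ1, hγ2, withDensity_absolutelyContinuous _ _, hent.congr hcongr.symm, ?_, hmap⟩
  rw [integral_congr_ae hcongr]
  have htm : Measurable fun y => t (Q' y) := (Measurable.of_discrete (f := t)).comp hQ'
  have hti : Integrable (fun p => ρ p * t (Q' p.2)) q := by
    refine hTi (T * T) (hρm.mul (htm.comp measurable_snd)) ?_
    filter_upwards [hρT, hνq hF] with p hp hpF
    rw [abs_of_nonneg (mul_nonneg (hρ0 p) (ht0 _))]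
    exact mul_le_mul hp (Finset.single_le_sum (f := t) (fun j _ => ht0 j) hpF) (ht0 _)
      ((hρ0 p).trans hp)
  have ht1 : ∫ p, ρ p * t (Q' p.2) ∂q ≤ F.card := by
    have hrtop : ∀ᵐ p ∂q, r p < ⊤ := by
      filter_upwards [hνq hν0] with p hp
      exact (blockDensity_le g _).trans_lt (ENNReal.inv_ne_top.2 hp).lt_top
    have e1 := integral_withDensity_eq_integral_toReal_smul hrm hrtop (fun p => t (Q' p.2))
    simp only [smul_eq_mul] at e1
    have hF' : ∀ᵐ j ∂(ν.map Q'), j ∈ (F : Set J) :=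
      (ae_map_iff hQ'.aemeasurable F.countable_toSet.measurableSet).2 hF
    rw [← e1, integral_snd_eq hγ2 htm,
      ← integral_map hQ'.aemeasurable (Measurable.of_discrete (f := t)).aestronglyMeasurable,
      ← Measure.restrict_eq_self_of_ae_mem hF', setIntegral_finset F .finset]
    calc ∑ j ∈ F, (ν.map Q').real {j} • t j ≤ ∑ _j ∈ F, (1 : ℝ) := by
          refine Finset.sum_le_sum fun j _ => ?_
          simp only [t, hg2, smul_eq_mul]
          exact mul_inv_le_one
      _ = F.card := by simp
  calc ∫ p, ρ p * log (ρ p) ∂q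
      ≤ ∫ p, (ρ p * (log F.card - 1) + ρ p * t (Q' p.2) / F.card) ∂q := by
        refine integral_mono_ae hent ((hρi.mul_const _).add (hti.div_const _)) ?_
        filter_upwards [hρt] with p hp
        refine (hup _ hN p).trans (add_le_add_right ?_ _)
        exact div_le_div_of_nonneg_right (mul_le_mul_of_nonneg_left hp (hρ0 p)) hN.le
    _ = log F.card - 1 + (∫ p, ρ p * t (Q' p.2) ∂q) / F.card := by
        rw [integral_add (hρi.mul_const _) (hti.div_const _), integral_mul_const, integral_div, hρ1,
          one_mul]
    _ ≤ log F.card := by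
        have := (div_le_one hN).2 ht1
        linarith

/-- Comparison of integrals under two measures with the same block masses. -/
theorem integral_le_integral_of_block {X I : Type*} [MeasurableSpace X] [MeasurableSpace I]
    [Countable I] [MeasurableSingletonClass I] {γ γ' : Measure X}
    [IsProbabilityMeasure γ] [IsProbabilityMeasure γ'] {Q : X → I} (hQ : Measurable Q)
    (hmap : γ.map Q = γ'.map Q) {S : Set X} (hS : ∀ᵐ p ∂γ, p ∈ S) (hS' : ∀ᵐ p ∂γ', p ∈ S)
    {f h : X → ℝ} (hf : Integrable f γ) (hh : Integrable h γ') {C : ℝ} (hC : ∀ p ∈ S, |f p| ≤ C)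
    (hfh : ∀ p ∈ S, ∀ p' ∈ S, Q p = Q p' → f p' ≤ h p) :
    ∫ p, f p ∂γ ≤ ∫ p, h p ∂γ' := by
  let s : I → ℝ := fun i => sSup (f '' (S ∩ Q ⁻¹' {i}))
  have hbdd : ∀ i, BddAbove (f '' (S ∩ Q ⁻¹' {i})) := fun i =>
    ⟨C, by rintro _ ⟨p, hp, rfl⟩; exact (abs_le.1 (hC p hp.1)).2⟩
  have hsC : ∀ p ∈ S, |s (Q p)| ≤ C := fun p hp => by
    have hmem : f p ∈ f '' (S ∩ Q ⁻¹' {Q p}) := ⟨p, ⟨hp, rfl⟩, rfl⟩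
    refine abs_le.2 ⟨(abs_le.1 (hC p hp)).1.trans (le_csSup (hbdd _) hmem),
      csSup_le ⟨_, hmem⟩ ?_⟩
    rintro _ ⟨p', hp', rfl⟩
    exact (abs_le.1 (hC p' hp'.1)).2
  have hsm : Measurable s := Measurable.of_discrete
  have hsi : ∀ m : Measure X, IsProbabilityMeasure m → (∀ᵐ p ∂m, p ∈ S) →
      Integrable (fun p => s (Q p)) m := fun m _ hm =>
    Integrable.of_bound (hsm.comp hQ).aestronglyMeasurable C (by
      filter_upwards [hm] with p hp
      exact hsC p hp)
  calc ∫ p, f p ∂γ ≤ ∫ p, s (Q p) ∂γ := by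
        refine integral_mono_ae hf (hsi γ inferInstance hS) ?_
        filter_upwards [hS] with p hp
        exact le_csSup (hbdd _) ⟨p, ⟨hp, rfl⟩, rfl⟩
    _ = ∫ p, s (Q p) ∂γ' := by
        rw [← integral_map hQ.aemeasurable hsm.aestronglyMeasurable, hmap,
          integral_map hQ.aemeasurable hsm.aestronglyMeasurable]
    _ ≤ ∫ p, h p ∂γ' := by
        refine integral_mono_ae (hsi γ' inferInstance hS') hh ?_
        filter_upwards [hS'] with p hp
        refine csSup_le ⟨_, p, ⟨hp, rfl⟩, rfl⟩ ?_
        rintro _ ⟨p', hp', rfl⟩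
        exact hfh p hp p' hp'.1 hp'.2.symm

/-- Cubic grids: the cells have small `ℓ¹` diameter, and a bounded set meets few of them. -/
theorem exists_grid {d : ℕ} {K : Set (EuclideanSpace ℝ (Fin d))} (hK : Bornology.IsBounded K) :
    ∃ C : ℝ, 1 ≤ C ∧ ∀ δ : ℝ, 0 < δ → δ ≤ 1 → ∃ Q : EuclideanSpace ℝ (Fin d) → (Fin d → ℤ),
      Measurable Q ∧ (∀ x x', Q x = Q x' → ∑ k, |x' k - x k| ≤ δ) ∧
      ∃ F : Finset (Fin d → ℤ), (∀ x ∈ K, Q x ∈ F) ∧ log F.card ≤ d * log (C / δ) := by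
  obtain ⟨R', hR'⟩ := hK.subset_closedBall 0
  set R := max R' 0
  have hR : ∀ x ∈ K, ∀ k, |x k| ≤ R := fun x hx k => by
    have h1 := PiLp.norm_apply_le x k
    rw [Real.norm_eq_abs] at h1
    exact h1.trans ((mem_closedBall_zero_iff.1 (hR' hx)).trans (le_max_left _ _))
  have hR0 : 0 ≤ R := le_max_right _ _
  refine ⟨2 * (R * (d + 1)) + 3, by nlinarith [mul_nonneg hR0 (by positivity : (0 : ℝ) ≤ d + 1)],
    fun δ hδ hδ1 => ?_⟩
  set a : ℝ := (d + 1) / δ with ha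
  have ha0 : 0 < a := by positivity
  set m : ℕ := ⌈R * a⌉₊ with hm
  refine ⟨fun x k => ⌊x k * a⌋, ?_, fun x x' h => ?_, Fintype.piFinset fun _ => Finset.Icc (-m) m,
    fun x hx => ?_, ?_⟩
  · refine measurable_pi_lambda _ fun k => Int.measurable_floor.comp ?_
    exact (by fun_prop : Continuous fun x : EuclideanSpace ℝ (Fin d) => x k * a).measurable
  · have h1 : ∀ k ∈ Finset.univ, |x' k - x k| ≤ δ / (d + 1) := fun k _ => by
      have h2 := Int.abs_sub_lt_one_of_floor_eq_floor (congrFun h k).symm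
      rw [← sub_mul, abs_mul, abs_of_pos ha0] at h2
      have h3 : δ / (d + 1) = 1 / a := by rw [ha, one_div_div]
      rw [h3, le_div_iff₀ ha0]
      exact h2.le
    refine (Finset.sum_le_sum h1).trans ?_
    rw [Finset.sum_const, Finset.card_univ, Fintype.card_fin, nsmul_eq_mul, mul_div_assoc',
      div_le_iff₀ (by positivity)]
    nlinarith
  · rw [Fintype.mem_piFinset]
    intro k
    have h1 := abs_le.1 (hR x hx k)
    have h2 : R * a ≤ m := Nat.le_ceil _
    rw [Finset.mem_Icc]
    constructor
    · rw [Int.le_floor]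
      push_cast
      nlinarith
    · have : (⌊x k * a⌋ : ℝ) ≤ m := (Int.floor_le _).trans (by nlinarith)
      exact_mod_cast this
  · have hcard : ((Fintype.piFinset fun _ : Fin d => Finset.Icc (-(m : ℤ)) m).card : ℝ)
        = (2 * m + 1) ^ d := by
      have h3 : ((m : ℤ) + 1 - -(m : ℤ)).toNat = 2 * m + 1 := by omega
      rw [Fintype.card_piFinset, Finset.prod_const, Int.card_Icc, h3, Finset.card_univ,
        Fintype.card_fin]
      push_cast
      ring
    rw [hcard, log_pow]
    have hm1 : (m : ℝ) < R * a + 1 := Nat.ceil_lt_add_one (by positivity)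
    refine mul_le_mul_of_nonneg_left (log_le_log (by positivity) ?_) (Nat.cast_nonneg _)
    rw [le_div_iff₀ hδ]
    have h4 : R * a * δ = R * (d + 1) := by
      rw [ha]
      field_simp
    nlinarith

/-- Regularity of a `c`-transform. -/
theorem cTransform_regular {E : Type*} [NormedAddCommGroup E] [NormedSpace ℝ E] {K : Set E}
    {c : E × E → ℝ} {φ ψ : E → ℝ} (hle : ∀ z, ∀ y ∈ K, φ z + ψ y ≤ c (z, y))
    (heq : ∀ z, ∃ y ∈ K, φ z + ψ y = c (z, y)) {A : ℝ} {L : ℝ≥0} (hL : LipschitzWith L c)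
    (hA : ∀ p q, |c q - c p - fderiv ℝ c p (q - p)| ≤ A * ‖q - p‖ ^ 2) :
    LipschitzWith L φ ∧ HasSuperdifferential A φ := by
  have hstep : ∀ z z' y, y ∈ K → φ z + ψ y = c (z, y) →
      φ z' ≤ φ z + (c (z', y) - c (z, y)) := fun z z' y hy h => by
    have := hle z' y hy
    linarith
  constructor
  · refine LipschitzWith.of_le_add_mul L fun z' z => ?_
    obtain ⟨y, hy, h⟩ := heq z
    refine (hstep z z' y hy h).trans (by
      have h1 := (le_abs_self _).trans (hL.dist_le_mul (z', y) (z, y))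
      rw [Prod.dist_eq, dist_self, max_eq_left dist_nonneg] at h1
      linarith)
  · intro z
    obtain ⟨y, hy, h⟩ := heq z
    refine ⟨(fderiv ℝ c (z, y)).comp (ContinuousLinearMap.inl ℝ E E), fun z' => ?_⟩
    have h1 := (le_abs_self _).trans (hA (z, y) (z', y))
    have h2 : (z', y) - (z, y) = ContinuousLinearMap.inl ℝ E E (z' - z) := by simp
    rw [h2, ContinuousLinearMap.inl_apply, Prod.norm_mk, norm_zero,
      max_eq_left (norm_nonneg _)] at h1
    have h3 := hstep z z' y hy h
    rw [ContinuousLinearMap.comp_apply, ContinuousLinearMap.inl_apply]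
    linarith

theorem norm_le_sum_abs {d : ℕ} (h : EuclideanSpace ℝ (Fin d)) : ‖h‖ ≤ ∑ k, |h k| := by
  have hsum : ∑ k, EuclideanSpace.single k (h k) = h := by
    ext j
    simp [Finset.sum_apply]
  conv_lhs => rw [← hsum]
  refine (norm_sum_le _ _).trans (le_of_eq ?_)
  simp

/-- A `C²` cost at a nearby point, compared through almost optimal potentials. -/
theorem cost_sub_potentials_le {d : ℕ}
    {c : EuclideanSpace ℝ (Fin d) × EuclideanSpace ℝ (Fin d) → ℝ} {A : ℝ} (hA0 : 0 ≤ A)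
    (hA : ∀ p q, |c q - c p - fderiv ℝ c p (q - p)| ≤ A * ‖q - p‖ ^ 2)
    {φ₀ ψ₀ φ₁ ψ₁ : EuclideanSpace ℝ (Fin d) → ℝ} (hφ : HasSuperdifferential A φ₁)
    (hψ : HasSuperdifferential A ψ₁) {x y x' y' : EuclideanSpace ℝ (Fin d)}
    (hφle : ∀ z, φ₁ z + ψ₀ y ≤ c (z, y)) (hψle : ∀ z, φ₀ x + ψ₁ z ≤ c (x, z))
    {δ : ℝ} (hδ : 0 < δ) (hx : ∑ k, |x' k - x k| ≤ δ) (hy : ∑ k, |y' k - y k| ≤ δ) :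
    c (x', y') - φ₁ x' - ψ₁ y' ≤ c (x, y) - φ₁ x - ψ₁ y
      + ∑ k, secondDiff A φ₁ (EuclideanSpace.single k δ) x
      + ∑ k, secondDiff A ψ₁ (EuclideanSpace.single k δ) y
      + (c (x, y) - φ₁ x - ψ₀ y) + (c (x, y) - φ₀ x - ψ₁ y) + 9 * A * δ ^ 2 := by
  set D := fderiv ℝ c (x, y)
  have hx' : ∑ k, |(x' - x) k| ≤ δ := hx
  have hy' : ∑ k, |(y' - y) k| ≤ δ := hy
  have h1 := hφ.linear_le hA0 (x := x) (g := fun z => c (z, y) - ψ₀ y)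
    (D := D.comp (ContinuousLinearMap.inl ℝ _ _)) (fun z => by linarith [hφle z])
    (fun z => by
      have h1 := (le_abs_self _).trans (hA (x, y) (z, y))
      have h2 : (z, y) - (x, y) = ContinuousLinearMap.inl ℝ _ _ (z - x) := by simp
      rw [h2, ContinuousLinearMap.inl_apply, Prod.norm_mk, norm_zero,
        max_eq_left (norm_nonneg _)] at h1
      rw [ContinuousLinearMap.comp_apply, ContinuousLinearMap.inl_apply]
      linarith) hδ hx'
  have h2 := hψ.linear_le hA0 (x := y) (g := fun z => c (x, z) - φ₀ x)
    (D := D.comp (ContinuousLinearMap.inr ℝ _ _)) (fun z => by linarith [hψle z])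
    (fun z => by
      have h1 := (le_abs_self _).trans (hA (x, y) (x, z))
      have h2 : (x, z) - (x, y) = ContinuousLinearMap.inr ℝ _ _ (z - y) := by simp
      rw [h2, ContinuousLinearMap.inr_apply, Prod.norm_mk, norm_zero,
        max_eq_right (norm_nonneg _)] at h1
      rw [ContinuousLinearMap.comp_apply, ContinuousLinearMap.inr_apply]
      linarith) hδ hy'
  have h3 := (le_abs_self _).trans (hA (x, y) (x', y'))
  have h4 : D ((x', y') - (x, y)) = D.comp (ContinuousLinearMap.inl ℝ _ _) (x' - x)
      + D.comp (ContinuousLinearMap.inr ℝ _ _) (y' - y) := by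
    simp [← map_add]
  have h5 : ‖(x', y') - (x, y)‖ ≤ δ := by
    rw [Prod.mk_sub_mk, Prod.norm_mk]
    exact max_le ((norm_le_sum_abs _).trans hx') ((norm_le_sum_abs _).trans hy')
  have h6 : A * ‖(x', y') - (x, y)‖ ^ 2 ≤ A * δ ^ 2 :=
    mul_le_mul_of_nonneg_left (pow_le_pow_left₀ (norm_nonneg _) h5 2) hA0
  rw [h4] at h3
  rw [add_sub_cancel] at h1 h2
  linarith

/-- A coupling with nearly optimal cost is approximated by couplings of small entropy. -/
theorem exists_coupling_cost_add_entropy_le {d : ℕ}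
    {c : EuclideanSpace ℝ (Fin d) × EuclideanSpace ℝ (Fin d) → ℝ} (hc : ContDiff ℝ 2 c)
    (hs : HasCompactSupport c) {K : Set (EuclideanSpace ℝ (Fin d))} (hK : IsCompact K)
    (hne : K.Nonempty) (M : ℝ≥0) :
    ∃ C : ℝ, 0 ≤ C ∧ ∀ μ ν : Measure (EuclideanSpace ℝ (Fin d)), IsProbabilityMeasure μ →
      IsProbabilityMeasure ν → (∀ᵐ x ∂μ, x ∈ K) → (∀ᵐ y ∂ν, y ∈ K) → μ ≤ M • volume →
      ν ≤ M • volume →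
      ∀ γ₀ : Measure (EuclideanSpace ℝ (Fin d) × EuclideanSpace ℝ (Fin d)),
      IsProbabilityMeasure γ₀ → γ₀.fst = μ → γ₀.snd = ν → ∀ ε : ℝ, 0 < ε → ε < 1 →
      ∀ φ ψ : EuclideanSpace ℝ (Fin d) → ℝ, Measurable φ → Measurable ψ → ContinuousOn φ K →
      ContinuousOn ψ K → (∀ x ∈ K, ∀ y ∈ K, φ x + ψ y ≤ c (x, y)) →
      ∫ p, c p ∂γ₀ ≤ ∫ x, φ x ∂μ + ∫ y, ψ y ∂ν + ε →
      ∃ γ : Measure (EuclideanSpace ℝ (Fin d) × EuclideanSpace ℝ (Fin d)),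
        IsProbabilityMeasure γ ∧ γ.fst = μ ∧ γ.snd = ν ∧ γ ≪ μ.prod ν ∧
        Integrable (fun p => (γ.rnDeriv (μ.prod ν) p).toReal
          * log (γ.rnDeriv (μ.prod ν) p).toReal) (μ.prod ν) ∧
        ∫ p, c p ∂γ + ε * ∫ p, (γ.rnDeriv (μ.prod ν) p).toReal
            * log (γ.rnDeriv (μ.prod ν) p).toReal ∂(μ.prod ν)
          ≤ ∫ p, c p ∂γ₀ + d / 2 * (ε * log (1 / ε)) + C * ε := by
  obtain ⟨A, hA0, hA⟩ := exists_taylor_bound hc hs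
  obtain ⟨L, hL⟩ := hc.lipschitzWith_of_hasCompactSupport hs (by norm_num)
  have hc' : ContDiff ℝ 2 (c ∘ Prod.swap) :=
    hc.comp (contDiff_snd.prodMk contDiff_fst)
  have hs' : HasCompactSupport (c ∘ Prod.swap) := hs.comp_homeomorph (Homeomorph.prodComm _ _)
  obtain ⟨A', hA0', hA'⟩ := exists_taylor_bound hc' hs'
  obtain ⟨L', hL'⟩ := hc'.lipschitzWith_of_hasCompactSupport hs' (by norm_num)
  set B := max A A' with hB
  have hB0 : 0 ≤ B := hA0.trans (le_max_left _ _)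
  replace hA : ∀ p q, |c q - c p - fderiv ℝ c p (q - p)| ≤ B * ‖q - p‖ ^ 2 := fun p q =>
    (hA p q).trans (mul_le_mul_of_nonneg_right (le_max_left _ _) (by positivity))
  replace hA' : ∀ p q, |(c ∘ Prod.swap) q - (c ∘ Prod.swap) p
      - fderiv ℝ (c ∘ Prod.swap) p (q - p)| ≤ B * ‖q - p‖ ^ 2 := fun p q =>
    (hA' p q).trans (mul_le_mul_of_nonneg_right (le_max_right _ _) (by positivity))
  obtain ⟨C₁, hC₁, hS₁⟩ := exists_integral_secondDiff_le hK hne hB0 L M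
  obtain ⟨C₂, hC₂, hS₂⟩ := exists_integral_secondDiff_le hK hne hB0 L' M
  obtain ⟨C₃, hC₃, hgrid⟩ := exists_grid hK.isBounded
  refine ⟨d * C₁ + d * C₂ + 2 + 9 * B + d * log C₃, by
    have := log_nonneg hC₃
    positivity, fun μ ν hμ hν hμK hνK hμM hνM γ₀ hγ₀ hγ₀1 hγ₀2 ε hε hε1 φ₀ ψ₀ hφm hψm hφc hψc hle
      hopt => ?_⟩
  set δ := √ε with hδdef
  have hδ : 0 < δ := sqrt_pos.2 hε
  have hδ1 : δ ≤ 1 := sqrt_le_one.2 hε1.le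
  have hδ2 : δ ^ 2 = ε := sq_sqrt hε.le
  obtain ⟨Q, hQm, hQ, F, hF, hFc⟩ := hgrid δ hδ hδ1
  obtain ⟨γ, hγ, hγ1, hγ2, hac, hent, hentle, hmap⟩ := exists_block_coupling hγ₀1 hγ₀2 hQm hQm
    (hνK.mono hF)
  refine ⟨γ, hγ, hγ1, hγ2, hac, hent, ?_⟩
  obtain ⟨φ₁, hφ₁le, hφ₁eq⟩ := exists_cTransform hK hne hc.continuous hψc
  obtain ⟨ψ₁, hψ₁le, hψ₁eq⟩ := exists_cTransform hK hne hc'.continuous hφc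
  obtain ⟨hφL, hφA⟩ := cTransform_regular hφ₁le hφ₁eq hL hA
  obtain ⟨hψL, hψA⟩ := cTransform_regular hψ₁le hψ₁eq hL' hA'
  have hcc := hc.continuous
  have hφ₁c := hφL.continuous
  have hψ₁c := hψL.continuous
  have hγ₀K := coupling_ae_mem hγ₀1 hγ₀2 hμK hνK
  have hγK := coupling_ae_mem hγ1 hγ2 hμK hνK
  have hKK : IsCompact (K ×ˢ K) := hK.prod hK
  have icγ : Integrable c γ := integrable_of_continuousOn_of_ae_mem hKK hγK hcc.continuousOn
  have icγ₀ : Integrable c γ₀ := integrable_of_continuousOn_of_ae_mem hKK hγ₀K hcc.continuousOn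
  have hiμ : ∀ {f : EuclideanSpace ℝ (Fin d) → ℝ}, ContinuousOn f K → Integrable f μ := fun hf =>
    integrable_of_continuousOn_of_ae_mem hK hμK hf
  have hiν : ∀ {f : EuclideanSpace ℝ (Fin d) → ℝ}, ContinuousOn f K → Integrable f ν := fun hf =>
    integrable_of_continuousOn_of_ae_mem hK hνK hf
  let S₁ : EuclideanSpace ℝ (Fin d) → ℝ := fun x =>
    ∑ k, secondDiff B φ₁ (EuclideanSpace.single k δ) x
  let S₂ : EuclideanSpace ℝ (Fin d) → ℝ := fun y =>
    ∑ k, secondDiff B ψ₁ (EuclideanSpace.single k δ) y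
  have hsc : ∀ {φ : EuclideanSpace ℝ (Fin d) → ℝ} (h : EuclideanSpace ℝ (Fin d)), Continuous φ →
      Continuous (secondDiff B φ h) := fun h hφ => by
    unfold secondDiff
    fun_prop
  have hS₁c : Continuous S₁ := continuous_finsetSum _ fun k _ => hsc _ hφ₁c
  have hS₂c : Continuous S₂ := continuous_finsetSum _ fun k _ => hsc _ hψ₁c
  have hnorm : ∀ k : Fin d, ‖(EuclideanSpace.single k δ : EuclideanSpace ℝ (Fin d))‖ = δ :=
    fun k => by rw [PiLp.norm_single, Real.norm_eq_abs, abs_of_pos hδ]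
  have hS₁i : ∫ x, S₁ x ∂μ ≤ d * C₁ * ε := by
    rw [integral_finsetSum _ fun k _ => hiμ (hsc _ hφ₁c).continuousOn]
    calc _ ≤ ∑ _k : Fin d, C₁ * δ ^ 2 := Finset.sum_le_sum fun k _ => by
          have := hS₁ φ₁ hφL hφA μ hμ hμK hμM (EuclideanSpace.single k δ) ((hnorm k).trans_le hδ1)
          rwa [hnorm] at this
      _ = d * C₁ * ε := by simp [hδ2]; ring
  have hS₂i : ∫ y, S₂ y ∂ν ≤ d * C₂ * ε := by
    rw [integral_finsetSum _ fun k _ => hiν (hsc _ hψ₁c).continuousOn]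
    calc _ ≤ ∑ _k : Fin d, C₂ * δ ^ 2 := Finset.sum_le_sum fun k _ => by
          have := hS₂ ψ₁ hψL hψA ν hν hνK hνM (EuclideanSpace.single k δ) ((hnorm k).trans_le hδ1)
          rwa [hnorm] at this
      _ = d * C₂ * ε := by simp [hδ2]; ring
  let f : EuclideanSpace ℝ (Fin d) × EuclideanSpace ℝ (Fin d) → ℝ := fun p =>
    c p - φ₁ p.1 - ψ₁ p.2
  have hfc : Continuous f := by
    simp only [f]
    fun_prop
  obtain ⟨G, hG⟩ := hKK.exists_bound_of_continuousOn hfc.continuousOn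
  let h : EuclideanSpace ℝ (Fin d) × EuclideanSpace ℝ (Fin d) → ℝ := fun p =>
    f p + S₁ p.1 + S₂ p.2 + (c p - φ₁ p.1 - ψ₀ p.2) + (c p - φ₀ p.1 - ψ₁ p.2) + 9 * B * ε
  have iφ₀ := hiμ hφc
  have iψ₀ := hiν hψc
  have iφ₁ := hiμ hφ₁c.continuousOn
  have iψ₁ := hiν hψ₁c.continuousOn
  obtain ⟨hf1, hf2⟩ := integral_sub_potentials hγ1 hγ2 icγ hφ₁c.measurable hψ₁c.measurable iφ₁ iψ₁
  obtain ⟨hf3, hf4⟩ :=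
    integral_sub_potentials hγ₀1 hγ₀2 icγ₀ hφ₁c.measurable hψ₁c.measurable iφ₁ iψ₁
  obtain ⟨he1, he2⟩ := integral_sub_potentials hγ₀1 hγ₀2 icγ₀ hφ₁c.measurable hψm iφ₁ iψ₀
  obtain ⟨he3, he4⟩ := integral_sub_potentials hγ₀1 hγ₀2 icγ₀ hφm hψ₁c.measurable iφ₀ iψ₁
  have hj1 := integrable_fst hγ₀1 (hiμ hS₁c.continuousOn)
  have hj2 := integrable_snd hγ₀2 (hiν hS₂c.continuousOn)
  have hj3 : Integrable (fun p => f p + S₁ p.1) γ₀ := hf3.add hj1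
  have hj4 : Integrable (fun p => f p + S₁ p.1 + S₂ p.2) γ₀ := hj3.add hj2
  have hj5 : Integrable (fun p => f p + S₁ p.1 + S₂ p.2 + (c p - φ₁ p.1 - ψ₀ p.2)) γ₀ :=
    hj4.add he1
  have hj6 : Integrable (fun p => f p + S₁ p.1 + S₂ p.2 + (c p - φ₁ p.1 - ψ₀ p.2)
      + (c p - φ₀ p.1 - ψ₁ p.2)) γ₀ := hj5.add he3
  have hblock : ∫ p, f p ∂γ ≤ ∫ p, h p ∂γ₀ := by
    refine integral_le_integral_of_block (hQm.prodMap hQm) hmap hγK hγ₀K hf1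
      (hj6.add (integrable_const _)) hG fun p hp p' hp' hpp' => ?_
    · have e1 := congrArg Prod.fst hpp'
      have e2 := congrArg Prod.snd hpp'
      have := cost_sub_potentials_le (c := c) (φ₀ := φ₀) (ψ₀ := ψ₀) hB0 hA hφA hψA
        (fun z => hφ₁le z _ hp.2) (fun z => by
          have := hψ₁le z _ hp.1
          simp only [Function.comp_apply, Prod.swap_prod_mk] at this
          linarith) hδ (hQ _ _ e1) (hQ _ _ e2)
      rw [hδ2] at this
      exact this
  have hh : ∫ p, h p ∂γ₀ = ∫ p, f p ∂γ₀ + ∫ x, S₁ x ∂μ + ∫ y, S₂ y ∂ν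
      + ∫ p, (c p - φ₁ p.1 - ψ₀ p.2) ∂γ₀ + ∫ p, (c p - φ₀ p.1 - ψ₁ p.2) ∂γ₀ + 9 * B * ε := by
    simp only [h]
    rw [integral_add hj6 (integrable_const _), integral_add hj5 he3, integral_add hj4 he1,
      integral_add hj3 hj2, integral_add hf3 hj1, integral_fst_eq hγ₀1 hS₁c.measurable,
      integral_snd_eq hγ₀2 hS₂c.measurable, integral_const, probReal_univ, one_smul]
  have hφ01 : ∫ x, φ₀ x ∂μ ≤ ∫ x, φ₁ x ∂μ := by
    refine integral_mono_ae iφ₀ iφ₁ ?_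
    filter_upwards [hμK] with x hx
    obtain ⟨y, hy, hxy⟩ := hφ₁eq x
    have := hle x hx y hy
    linarith
  have hψ01 : ∫ y, ψ₀ y ∂ν ≤ ∫ y, ψ₁ y ∂ν := by
    refine integral_mono_ae iψ₀ iψ₁ ?_
    filter_upwards [hνK] with y hy
    obtain ⟨x, hx, hxy⟩ := hψ₁eq y
    have := hle x hx y hy
    simp only [Function.comp_apply, Prod.swap_prod_mk] at hxy
    linarith
  have hentε := mul_le_mul_of_nonneg_left (hentle.trans hFc) hε.le
  rw [log_div (by positivity) hδ.ne', hδdef, log_sqrt hε.le] at hentε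
  rw [one_div, log_inv]
  have hfγ : ∫ p, f p ∂γ = ∫ p, c p ∂γ - ∫ x, φ₁ x ∂μ - ∫ y, ψ₁ y ∂ν := hf2
  have hfγ₀ : ∫ p, f p ∂γ₀ = ∫ p, c p ∂γ₀ - ∫ x, φ₁ x ∂μ - ∫ y, ψ₁ y ∂ν := hf4
  rw [hh, hfγ, hfγ₀, he2, he4] at hblock
  linarith

/-- A function that is smooth on a neighbourhood of a compact set agrees near this set with a
smooth function with compact support. -/
theorem exists_contDiff_hasCompactSupport_eventuallyEq {V : Type*} [NormedAddCommGroup V]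
    [NormedSpace ℝ V] [FiniteDimensional ℝ V] {K U : Set V} (hK : IsCompact K) (hU : IsOpen U)
    (hKU : K ⊆ U) {f : V → ℝ} (hf : ContDiffOn ℝ 2 f U) :
    ∃ g : V → ℝ, ContDiff ℝ 2 g ∧ HasCompactSupport g ∧ ∀ x ∈ K, g =ᶠ[𝓝 x] f := by
  obtain ⟨K', hK', hKK', hK'U⟩ := exists_compact_between hK hU hKU
  obtain ⟨χ, hχ1, hχ0, -⟩ := exists_contMDiffMap_one_nhds_of_subset_interior
    (n := 2) (modelWithCornersSelf ℝ V) hK.isClosed hKK'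
  have hχ : ContDiff ℝ 2 χ := χ.contMDiff.contDiff
  refine ⟨fun x => χ x * f x, contDiff_iff_contDiffAt.2 fun x => ?_,
    HasCompactSupport.intro hK' fun x hx => by rw [hχ0 x hx, zero_mul], fun x hx => ?_⟩
  · by_cases hx : x ∈ U
    · exact hχ.contDiffAt.mul (hf.contDiffAt (hU.mem_nhds hx))
    · refine (contDiffAt_const (c := (0 : ℝ))).congr_of_eventuallyEq ?_
      filter_upwards [hK'.isClosed.isOpen_compl.mem_nhds fun h => hx (hK'U h)] with z hz
      rw [hχ0 z hz, zero_mul]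
  · filter_upwards [eventually_nhdsSet_iff_forall.1 hχ1 x hx] with z hz
    rw [hz, one_mul]

theorem crossDeriv_eq_fderiv_fderiv {d : ℕ}
    {c : EuclideanSpace ℝ (Fin d) × EuclideanSpace ℝ (Fin d) → ℝ}
    {x y : EuclideanSpace ℝ (Fin d)} (hc : ContDiffAt ℝ 2 c (x, y)) (i j : Fin d) :
    crossDeriv c x y i j = fderiv ℝ (fderiv ℝ c) (x, y) (0, EuclideanSpace.single j 1)
      (EuclideanSpace.single i 1, 0) := by
  have hcont : Tendsto (fun y' => (x, y')) (𝓝 y) (𝓝 (x, y)) :=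
    (by fun_prop : Continuous fun y' : EuclideanSpace ℝ (Fin d) => (x, y')).tendsto y
  have heq : (fun y' => fderiv ℝ (fun x' => c (x', y')) x (EuclideanSpace.single i 1))
      =ᶠ[𝓝 y] fun y' => fderiv ℝ c (x, y') (EuclideanSpace.single i 1, 0) := by
    filter_upwards [hcont.eventually (hc.eventually (by norm_num))] with y' hy'
    have h1 : HasFDerivAt c (fderiv ℝ c (x, y')) ((fun x' => (x', y')) x) :=
      (hy'.differentiableAt (by norm_num)).hasFDerivAt
    have h2 : HasFDerivAt (fun x' => c (x', y'))
        ((fderiv ℝ c (x, y')).comp (ContinuousLinearMap.inl ℝ _ _)) x :=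
      h1.comp x (hasFDerivAt_prodMk_left (𝕜 := ℝ) x y')
    rw [h2.fderiv]
    simp
  have hd : HasFDerivAt (fun y' => fderiv ℝ c (x, y'))
      ((fderiv ℝ (fderiv ℝ c) (x, y)).comp (ContinuousLinearMap.inr ℝ _ _)) y :=
    ((hc.fderiv_right (m := 1) (by norm_num)).differentiableAt
      (by norm_num)).hasFDerivAt.comp y (hasFDerivAt_prodMk_right x y)
  have hd2 := hd.clm_apply (hasFDerivAt_const
    ((EuclideanSpace.single i 1, 0) : EuclideanSpace ℝ (Fin d) × EuclideanSpace ℝ (Fin d)) y)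
  rw [crossDeriv, Matrix.of_apply, heq.fderiv_eq, hd2.fderiv]
  simp

/-- The twist condition in terms of the second derivative. -/
theorem eq_zero_of_crossDeriv_det_ne_zero {d : ℕ}
    {c : EuclideanSpace ℝ (Fin d) × EuclideanSpace ℝ (Fin d) → ℝ}
    {x y : EuclideanSpace ℝ (Fin d)} (hc : ContDiffAt ℝ 2 c (x, y))
    (hdet : (crossDeriv c x y).det ≠ 0) {k : EuclideanSpace ℝ (Fin d)}
    (hk : ∀ h, fderiv ℝ (fderiv ℝ c) (x, y) (0, k) (h, 0) = 0) : k = 0 := by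
  have hsum : ∑ j, k j • ((0, EuclideanSpace.single j 1) :
      EuclideanSpace ℝ (Fin d) × EuclideanSpace ℝ (Fin d)) = (0, k) := by
    refine Prod.ext (by simp [Prod.fst_sum]) ?_
    rw [Prod.snd_sum]
    ext i
    simp [Finset.sum_apply, Pi.single_apply]
  have hmul : (crossDeriv c x y).mulVec (fun j => k j) = 0 := by
    ext i
    have h1 := hk (EuclideanSpace.single i 1)
    rw [← hsum, map_sum] at h1
    simp only [map_smul, _root_.sum_apply, _root_.smul_apply,
      smul_eq_mul] at h1
    rw [Matrix.mulVec, dotProduct, Pi.zero_apply, ← h1]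
    refine Finset.sum_congr rfl fun j _ => ?_
    rw [crossDeriv_eq_fderiv_fderiv hc, mul_comm]
  have h2 := Matrix.eq_zero_of_mulVec_eq_zero hdet hmul
  ext j
  exact congrFun h2 j

theorem entCost_congr {α β : Type*} [MeasurableSpace α] [MeasurableSpace β]
    {μ : Measure α} {ν : Measure β} {K : Set α} {L : Set β} (hμ : ∀ᵐ x ∂μ, x ∈ K)
    (hν : ∀ᵐ y ∂ν, y ∈ L) {c c' : α × β → ℝ} (h : ∀ p ∈ K ×ˢ L, c p = c' p) (ε : ℝ) :
    entCost μ ν c ε = entCost μ ν c' ε := by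
  have : ∀ γ : Measure (α × β), γ.fst = μ → γ.snd = ν → ∫ p, c p ∂γ = ∫ p, c' p ∂γ :=
    fun γ h1 h2 => integral_congr_ae (by
      filter_upwards [coupling_ae_mem h1 h2 hμ hν] with p hp
      exact h p hp)
  unfold entCost
  congr 1
  ext v
  refine exists_congr fun γ => and_congr_right fun _ => and_congr_right fun h1 =>
    and_congr_right fun h2 => ?_
  rw [this γ h1 h2]

theorem entCost_le {α β : Type*} [MeasurableSpace α] [MeasurableSpace β] {μ : Measure α}
    {ν : Measure β} {c : α × β → ℝ} {ε : ℝ} {γ : Measure (α × β)} (hγ : IsProbabilityMeasure γ)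
    (h1 : γ.fst = μ) (h2 : γ.snd = ν) (hac : γ ≪ μ.prod ν)
    (hent : Integrable (fun p => (γ.rnDeriv (μ.prod ν) p).toReal
      * log (γ.rnDeriv (μ.prod ν) p).toReal) (μ.prod ν)) :
    entCost μ ν c ε ≤ ((∫ p, c p ∂γ + ε * ∫ p, (γ.rnDeriv (μ.prod ν) p).toReal
      * log (γ.rnDeriv (μ.prod ν) p).toReal ∂(μ.prod ν) : ℝ) : EReal) := by
  refine sInf_le ⟨γ, hγ, h1, h2, ?_⟩
  rw [Ent, if_pos ⟨hac, hent⟩, EReal.coe_add, EReal.coe_mul]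

theorem le_entCost {α β : Type*} [MeasurableSpace α] [MeasurableSpace β] {μ : Measure α}
    {ν : Measure β} {c : α × β → ℝ} {ε : ℝ} (hε : 0 < ε) {a : ℝ}
    (h : ∀ γ : Measure (α × β), IsProbabilityMeasure γ → γ.fst = μ → γ.snd = ν → γ ≪ μ.prod ν →
      Integrable (fun p => (γ.rnDeriv (μ.prod ν) p).toReal
        * log (γ.rnDeriv (μ.prod ν) p).toReal) (μ.prod ν) →
      a ≤ ∫ p, c p ∂γ + ε * ∫ p, (γ.rnDeriv (μ.prod ν) p).toReal
        * log (γ.rnDeriv (μ.prod ν) p).toReal ∂(μ.prod ν)) :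
    (a : EReal) ≤ entCost μ ν c ε := by
  refine le_sInf ?_
  rintro v ⟨γ, hγ, h1, h2, rfl⟩
  rw [Ent]
  split_ifs with hif
  · have := h γ hγ h1 h2 hif.1 hif.2
    exact_mod_cast this
  · rw [EReal.coe_mul_top_of_pos hε, EReal.coe_add_top]
    exact le_top

theorem entCost_zero {α β : Type*} [MeasurableSpace α] [MeasurableSpace β] {μ : Measure α}
    {ν : Measure β} {c : α × β → ℝ} {γ₀ : Measure (α × β)} (hγ₀ : IsProbabilityMeasure γ₀)
    (h1 : γ₀.fst = μ) (h2 : γ₀.snd = ν)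
    (hle : ∀ γ : Measure (α × β), IsProbabilityMeasure γ → γ.fst = μ → γ.snd = ν →
      ∫ p, c p ∂γ₀ ≤ ∫ p, c p ∂γ) :
    entCost μ ν c 0 = ((∫ p, c p ∂γ₀ : ℝ) : EReal) := by
  refine le_antisymm (sInf_le ⟨γ₀, hγ₀, h1, h2, by simp⟩) (le_sInf ?_)
  rintro v ⟨γ, hγ, h3, h4, rfl⟩
  simpa using hle γ hγ h3 h4

/-- The first order expansion of the entropic cost, uniformly over measures with bounded density
on a compact set, for a cost with compact support. -/
theorem exists_abs_entCost_sub_le {d : ℕ}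
    {c : EuclideanSpace ℝ (Fin d) × EuclideanSpace ℝ (Fin d) → ℝ} (hc : ContDiff ℝ 2 c)
    (hs : HasCompactSupport c) {K : Set (EuclideanSpace ℝ (Fin d))} (hK : IsCompact K)
    (hne : K.Nonempty) (htwist : ∀ p ∈ K ×ˢ K, ∀ k,
      (∀ h, fderiv ℝ (fderiv ℝ c) p (0, k) (h, 0) = 0) → k = 0) (M : ℝ≥0) :
    ∃ C : ℝ, 0 ≤ C ∧ ∀ μ ν : Measure (EuclideanSpace ℝ (Fin d)), IsProbabilityMeasure μ →
      IsProbabilityMeasure ν → (∀ᵐ x ∂μ, x ∈ K) → (∀ᵐ y ∂ν, y ∈ K) → μ ≤ M • volume →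
      ν ≤ M • volume → ∀ ε ∈ Ioo (0 : ℝ) 1,
      |(entCost μ ν c ε).toReal - (entCost μ ν c 0).toReal - d / 2 * (ε * log (1 / ε))|
        ≤ C * ε := by
  obtain ⟨C₁, hC₁, hlow⟩ :=
    (gibbsBound_of_isCompact hc hK htwist).exists_le_integral_add_entropy hc.continuous hK M
  obtain ⟨C₂, hC₂, hup⟩ := exists_coupling_cost_add_entropy_le hc hs hK hne M
  refine ⟨C₁ + C₂, by positivity, fun μ ν hμ hν hμK hνK hμM hνM ε ⟨hε, hε1⟩ => ?_⟩
  obtain ⟨γ₀, hγ₀, h1, h2, hdual⟩ :=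
    exists_coupling_integral_le_dual_of_isCompact hK μ ν hμK hνK hc.continuous
  have hzero : entCost μ ν c 0 = ((∫ p, c p ∂γ₀ : ℝ) : EReal) := by
    refine entCost_zero hγ₀ h1 h2 fun γ hγ h3 h4 => le_of_forall_pos_le_add fun η hη => ?_
    obtain ⟨φ, ψ, hφm, hψm, hφ, hψ, hle, hopt⟩ := hdual η hη
    have hmem := coupling_ae_mem h3 h4 hμK hνK
    have hci := integrable_of_continuousOn_of_ae_mem (hK.prod hK) hmem hc.continuous.continuousOn
    obtain ⟨-, he⟩ := integral_sub_potentials h3 h4 hci hφm hψm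
      (integrable_of_continuousOn_of_ae_mem hK hμK hφ)
      (integrable_of_continuousOn_of_ae_mem hK hνK hψ)
    have hnn : 0 ≤ ∫ p, (c p - φ p.1 - ψ p.2) ∂γ := by
      refine integral_nonneg_of_ae ?_
      filter_upwards [hmem] with p hp
      have := hle p.1 hp.1 p.2 hp.2
      simp only [Pi.zero_apply]
      linarith
    linarith
  have hlower : ((∫ p, c p ∂γ₀ + d / 2 * (ε * log (1 / ε)) - C₁ * ε : ℝ) : EReal)
      ≤ entCost μ ν c ε := by
    refine le_entCost hε fun γ hγ h3 h4 hac hent => le_of_forall_pos_le_add fun η hη => ?_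
    obtain ⟨φ, ψ, hφm, hψm, hφ, hψ, hle, hopt⟩ := hdual η hη
    have := hlow μ ν hμ hν hμK hνK hμM hνM φ ψ hφm hψm hφ hψ hle γ hγ h3 h4 hac hent ε hε
    rw [finrank_euclideanSpace_fin] at this
    linarith
  obtain ⟨φ, ψ, hφm, hψm, hφ, hψ, hle, hopt⟩ := hdual ε hε
  obtain ⟨γ, hγ, h3, h4, hac, hent, hγle⟩ := hup μ ν hμ hν hμK hνK hμM hνM γ₀ hγ₀ h1 h2 ε hε hε1
    φ ψ hφm hψm hφ hψ hle hopt
  have hupper := (entCost_le (c := c) (ε := ε) hγ h3 h4 hac hent).trans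
    (EReal.coe_le_coe_iff.2 hγle)
  have hcoe : ((entCost μ ν c ε).toReal : EReal) = entCost μ ν c ε :=
    EReal.coe_toReal (ne_top_of_le_ne_top (EReal.coe_ne_top _) hupper)
      (ne_bot_of_le_ne_bot (EReal.coe_ne_bot _) hlower)
  rw [← hcoe, EReal.coe_le_coe_iff] at hlower hupper
  rw [hzero, EReal.toReal_coe, abs_le]
  have h5 := mul_nonneg hC₁ hε.le
  have h6 := mul_nonneg hC₂ hε.le
  constructor <;> linarith

theorem exists_le_smul_volume {E : Type*} [NormedAddCommGroup E] [InnerProductSpace ℝ E]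
    [FiniteDimensional ℝ E] [MeasurableSpace E] [BorelSpace E] {μ : Measure E}
    [IsProbabilityMeasure μ] (hac : μ ≪ volume)
    (hbd : ∃ C : ℝ≥0∞, C ≠ ⊤ ∧ ∀ᵐ x ∂volume, μ.rnDeriv volume x ≤ C) :
    ∃ M : ℝ≥0, μ ≤ M • volume := by
  obtain ⟨C, hC, hbd⟩ := hbd
  refine ⟨C.toNNReal, ?_⟩
  calc μ = volume.withDensity (μ.rnDeriv volume) := (Measure.withDensity_rnDeriv_eq _ _ hac).symm
    _ ≤ volume.withDensity fun _ => C := withDensity_mono hbd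
    _ = C.toNNReal • volume := by
      rw [withDensity_const, ← ENNReal.coe_toNNReal hC]
      rfl

theorem nnreal_smul_measure_mono {α : Type*} [MeasurableSpace α] (μ : Measure α) {M M' : ℝ≥0}
    (h : M ≤ M') : M • μ ≤ M' • μ := by
  refine Measure.le_iff'.2 fun s => ?_
  rw [Measure.smul_apply, Measure.smul_apply, ENNReal.smul_def, ENNReal.smul_def, smul_eq_mul,
    smul_eq_mul]
  gcongr

/-- **Sinkhorn divergence expansion**: for an infinitesimally twisted `C²` cost on an open
convex set and compactly supported marginals with `L^∞` densities, the Sinkhorn divergence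
`OT_ε = v_ε(μ⁻,μ⁺) - (v_ε(μ⁻,μ⁻) + v_ε(μ⁺,μ⁺))/2` satisfies
`|OT_ε - OT₀| ≤ C ε` for `ε ∈ (0,1)`: the `ε log(1/ε)` term cancels. -/
theorem sinkhorn_divergence_rate {d : ℕ}
    (Ω : Set (EuclideanSpace ℝ (Fin d))) (hΩo : IsOpen Ω) (hΩc : Convex ℝ Ω)
    (μm μp : Measure (EuclideanSpace ℝ (Fin d)))
    [IsProbabilityMeasure μm] [IsProbabilityMeasure μp]
    (hsm : ∃ K, IsCompact K ∧ K ⊆ Ω ∧ μm Kᶜ = 0)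
    (hsp : ∃ K, IsCompact K ∧ K ⊆ Ω ∧ μp Kᶜ = 0)
    (hacm : μm ≪ volume) (hacp : μp ≪ volume)
    (hbdm : ∃ C : ℝ≥0∞, C ≠ ⊤ ∧ ∀ᵐ x ∂volume, μm.rnDeriv volume x ≤ C)
    (hbdp : ∃ C : ℝ≥0∞, C ≠ ⊤ ∧ ∀ᵐ x ∂volume, μp.rnDeriv volume x ≤ C)
    (c : EuclideanSpace ℝ (Fin d) × EuclideanSpace ℝ (Fin d) → ℝ)
    (hc : ContDiffOn ℝ 2 c (Ω ×ˢ Ω))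
    (htwist : ∀ x ∈ Ω, ∀ y ∈ Ω, (crossDeriv c x y).det ≠ 0) :
    ∃ C : ℝ, 0 ≤ C ∧ ∀ ε ∈ Set.Ioo (0 : ℝ) 1,
      |((entCost μm μp c ε).toReal
            - (1 / 2) * ((entCost μm μm c ε).toReal + (entCost μp μp c ε).toReal))
        - ((entCost μm μp c 0).toReal
            - (1 / 2) * ((entCost μm μm c 0).toReal + (entCost μp μp c 0).toReal))|
        ≤ C * ε := by
  obtain ⟨K₁, hK₁, hK₁Ω, hμK₁⟩ := hsm
  obtain ⟨K₂, hK₂, hK₂Ω, hμK₂⟩ := hsp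
  set K := K₁ ∪ K₂
  have hK : IsCompact K := hK₁.union hK₂
  have hKΩ : K ⊆ Ω := union_subset hK₁Ω hK₂Ω
  have hmK : ∀ᵐ x ∂μm, x ∈ K :=
    (show ∀ᵐ x ∂μm, x ∈ K₁ from hμK₁).mono fun x hx => Or.inl hx
  have hpK : ∀ᵐ x ∂μp, x ∈ K :=
    (show ∀ᵐ x ∂μp, x ∈ K₂ from hμK₂).mono fun x hx => Or.inr hx
  have hne : K.Nonempty := hmK.exists
  obtain ⟨M₁, hM₁⟩ := exists_le_smul_volume hacm hbdm
  obtain ⟨M₂, hM₂⟩ := exists_le_smul_volume hacp hbdp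
  have hmM : μm ≤ max M₁ M₂ • volume :=
    hM₁.trans (nnreal_smul_measure_mono _ (le_max_left _ _))
  have hpM : μp ≤ max M₁ M₂ • volume :=
    hM₂.trans (nnreal_smul_measure_mono _ (le_max_right _ _))
  obtain ⟨c', hc', hs', hcc'⟩ := exists_contDiff_hasCompactSupport_eventuallyEq (hK.prod hK)
    (hΩo.prod hΩo) (prod_mono hKΩ hKΩ) hc
  have htwist' : ∀ p ∈ K ×ˢ K, ∀ k,
      (∀ h, fderiv ℝ (fderiv ℝ c') p (0, k) (h, 0) = 0) → k = 0 := by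
    rintro ⟨x, y⟩ hp k hk
    have hx := hKΩ hp.1
    have hy := hKΩ hp.2
    rw [(hcc' _ hp).fderiv.fderiv_eq] at hk
    exact eq_zero_of_crossDeriv_det_ne_zero
      (hc.contDiffAt ((hΩo.prod hΩo).mem_nhds ⟨hx, hy⟩)) (htwist x hx y hy) hk
  have hcongr : ∀ p ∈ K ×ˢ K, c p = c' p := fun p hp => (hcc' p hp).eq_of_nhds.symm
  obtain ⟨C, hC, hexp⟩ := exists_abs_entCost_sub_le hc' hs' hK hne htwist' (max M₁ M₂)
  refine ⟨2 * C, by positivity, fun ε hε => ?_⟩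
  have hmp := abs_le.1 (hexp μm μp inferInstance inferInstance hmK hpK hmM hpM ε hε)
  have hmm := abs_le.1 (hexp μm μm inferInstance inferInstance hmK hmK hmM hmM ε hε)
  have hpp := abs_le.1 (hexp μp μp inferInstance inferInstance hpK hpK hpM hpM ε hε)
  simp only [entCost_congr hmK hpK hcongr, entCost_congr hmK hmK hcongr,
    entCost_congr hpK hpK hcongr]
  rw [abs_le]
  constructor <;> linarith
end
end

section
/- Let μ⁻, μ⁺ be probability measures on ℝ^d with compact supports X⁻, X⁺ and let c : X⁻ × X⁺ → ℝ be continuous. Then the function ε ↦ v_ε is real-analytic on the open interval (0,+∞). -/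
open MeasureTheory Real Set Filter Classical
open scoped ENNReal NNReal Topology

noncomputable section

/-- Support of a measure: the set of points all of whose open neighbourhoods have
positive measure. -/
def msupport {α : Type*} [TopologicalSpace α] [MeasurableSpace α] (μ : Measure α) : Set α :=
  {x | ∀ U : Set α, IsOpen U → x ∈ U → μ U ≠ 0}

lemma abs_integral_le_of_forall_abs_le {α : Type*} [MeasurableSpace α]
    (ν : Measure α) [IsProbabilityMeasure ν] {f : α → ℝ}
    {M : ℝ} (hM : ∀ y, |f y| ≤ M) : |∫ y, f y ∂ν| ≤ M := by
  simpa using norm_integral_le_of_norm_le_const (μ := ν) (f := f) (C := M) (.of_forall hM)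

section SchrodingerSystem

set_option linter.unusedSectionVars false

variable {X Y : Type*} [TopologicalSpace X] [CompactSpace X] [TopologicalSpace Y] [CompactSpace Y]

/-- Precomposition with a continuous map, as a continuous linear map. -/
def pullback (φ : C(X, Y)) : C(Y, ℝ) →L[ℝ] C(X, ℝ) :=
  LinearMap.mkContinuous
    { toFun := fun f => f.comp φ
      map_add' := fun _ _ => rfl
      map_smul' := fun _ _ => rfl } 1 fun f => by
    rw [one_mul]
    exact (ContinuousMap.norm_le _ (norm_nonneg _)).2 fun x => f.norm_coe_le_norm (φ x)

@[simp] lemma pullback_apply (φ : C(X, Y)) (f : C(Y, ℝ)) (x : X) : pullback φ f x = f (φ x) := rfl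

lemma exp_continuousMap_apply (f : C(X, ℝ)) (x : X) : NormedSpace.exp f x = Real.exp (f x) := by
  rw [Real.exp_eq_exp_ℝ]
  exact NormedSpace.map_exp (ContinuousMap.evalAlgHom ℝ ℝ x) (continuous_eval_const x) f

variable [MeasurableSpace Y] [BorelSpace Y]

lemma integrable_of_continuous (ν : Measure Y) [IsFiniteMeasure ν] {f : Y → ℝ}
    (hf : Continuous f) : Integrable f ν :=
  hf.integrable_of_hasCompactSupport (HasCompactSupport.of_compactSpace f)

/-- Integration over the second factor, as a continuous linear map. -/
def fiberIntegral (X : Type*) [TopologicalSpace X] [CompactSpace X] [FirstCountableTopology X]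
    (ν : Measure Y) [IsProbabilityMeasure ν] : C(X × Y, ℝ) →L[ℝ] C(X, ℝ) :=
  LinearMap.mkContinuous
    { toFun := fun f => ⟨fun x => ∫ y, f (x, y) ∂ν, by
        refine continuous_of_dominated (bound := fun _ => ‖f‖) (fun x => ?_)
          (fun x => .of_forall fun y => f.norm_coe_le_norm _) (integrable_const _)
          (.of_forall fun y => by fun_prop)
        exact (by fun_prop : Continuous fun y => f (x, y)).aestronglyMeasurable⟩
      map_add' := fun f g => by
        ext x
        exact integral_add (integrable_of_continuous ν (by fun_prop))
          (integrable_of_continuous ν (by fun_prop))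
      map_smul' := fun a f => by
        ext x
        exact integral_const_mul a fun y => f (x, y) } 1 fun f => by
    rw [one_mul]
    exact (ContinuousMap.norm_le _ (norm_nonneg _)).2 fun x =>
      abs_integral_le_of_forall_abs_le ν fun y => f.norm_coe_le_norm (x, y)

variable [FirstCountableTopology X]

@[simp] lemma fiberIntegral_apply (ν : Measure Y) [IsProbabilityMeasure ν] (f : C(X × Y, ℝ))
    (x : X) : fiberIntegral X ν f x = ∫ y, f (x, y) ∂ν := rfl

/-- The expectation functional on continuous functions. -/
def expectation (ν : Measure Y) [IsProbabilityMeasure ν] : C(Y, ℝ) →L[ℝ] ℝ :=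
  LinearMap.mkContinuous
    { toFun := fun f => ∫ y, f y ∂ν
      map_add' := fun f g => integral_add (integrable_of_continuous ν f.continuous)
          (integrable_of_continuous ν g.continuous)
      map_smul' := fun a f => integral_const_mul a f } 1 fun f => by
    rw [one_mul]
    exact abs_integral_le_of_forall_abs_le ν fun y => f.norm_coe_le_norm y

@[simp] lemma expectation_apply (ν : Measure Y) [IsProbabilityMeasure ν] (f : C(Y, ℝ)) :
    expectation ν f = ∫ y, f y ∂ν := rfl

/-! ### Contraction of the Sinkhorn iteration -/

lemma integral_mul_le_of_density_le (ν : Measure Y) [IsProbabilityMeasure ν]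
    {A B r : Y → ℝ} (hA : Continuous A) (hB : Continuous B) (hr : Continuous r)
    (hA1 : ∫ y, A y ∂ν = 1) (hB1 : ∫ y, B y ∂ν = 1) {θ R D : ℝ}
    (hAB : ∀ y, θ * B y ≤ A y) (hB0 : ∀ y, 0 ≤ B y) (hθ : θ ≤ 1)
    (hR : ∀ y, R ≤ r y) (hRD : ∀ y, r y ≤ R * exp D) :
    ∫ y, r y * A y ∂ν ≤ (θ + (1 - θ) * exp D) * ∫ y, r y * B y ∂ν := by
  have hRB : R ≤ ∫ y, r y * B y ∂ν := by
    have : ∫ y, R * B y ∂ν ≤ ∫ y, r y * B y ∂ν :=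
      integral_mono (integrable_of_continuous ν (by fun_prop))
        (integrable_of_continuous ν (by fun_prop))
        fun y => mul_le_mul_of_nonneg_right (hR y) (hB0 y)
    rwa [integral_const_mul, hB1, mul_one] at this
  have h : ∫ y, r y * A y ∂ν ≤ ∫ y, (θ * (r y * B y) + R * exp D * (A y - θ * B y)) ∂ν := by
    refine integral_mono (integrable_of_continuous ν (by fun_prop))
        (integrable_of_continuous ν (by fun_prop)) fun y => ?_
    have := mul_le_mul_of_nonneg_right (hRD y) (sub_nonneg.2 (hAB y))
    simp only
    linarith
  rw [integral_add (integrable_of_continuous ν (by fun_prop))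
    (integrable_of_continuous ν (by fun_prop)), integral_const_mul, integral_const_mul,
    integral_sub (integrable_of_continuous ν (by fun_prop))
    (integrable_of_continuous ν (by fun_prop)), integral_const_mul, hA1, hB1] at h
  have := mul_le_mul_of_nonneg_left hRB
    (mul_nonneg (sub_nonneg.2 hθ) (exp_pos D).le)
  linarith

lemma mixture_exp_le {θ D D₀ : ℝ} (hθ : 0 ≤ θ) (hD : 0 ≤ D) (hD₀ : D ≤ D₀) :
    θ + (1 - θ) * exp D ≤ exp ((1 - θ * exp (-D₀)) * D) := by
  have h1 : exp D * exp (-D) = 1 := by rw [← exp_add]; simp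
  have h2 : 1 - θ * (1 - exp (-D)) ≤ exp (-(θ * (1 - exp (-D)))) := by
    linarith [add_one_le_exp (-(θ * (1 - exp (-D))))]
  have h3 : D * exp (-D₀) ≤ 1 - exp (-D) := by
    have h4 : D * exp (-D₀) ≤ D * exp (-D) := by gcongr
    have h5 : D * exp (-D) ≤ (exp D - 1) * exp (-D) := by
      gcongr; linarith [add_one_le_exp D]
    linarith
  calc θ + (1 - θ) * exp D = exp D * (1 - θ * (1 - exp (-D))) := by linear_combination (-θ) * h1
    _ ≤ exp D * exp (-(θ * (1 - exp (-D)))) := by gcongr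
    _ = exp (D - θ * (1 - exp (-D))) := by rw [← exp_add]; ring_nf
    _ ≤ exp ((1 - θ * exp (-D₀)) * D) := by
      gcongr
      nlinarith [mul_le_mul_of_nonneg_left h3 hθ]

lemma integral_exp_pos_of_continuous (ν : Measure Y) [IsProbabilityMeasure ν] {f : Y → ℝ}
    (hf : Continuous f) : 0 < ∫ y, exp (f y) ∂ν :=
  integral_exp_pos (integrable_of_continuous ν (by fun_prop))

lemma integral_exp_sub_le (ν : Measure Y) [IsProbabilityMeasure ν] {k : C(X × Y, ℝ)} {M : ℝ}
    (hM : ∀ p, |k p| ≤ M) (g : C(Y, ℝ)) (x x' : X) :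
    ∫ y, exp (g y - k (x, y)) ∂ν ≤ exp (2 * M) * ∫ y, exp (g y - k (x', y)) ∂ν := by
  rw [← integral_const_mul]
  refine integral_mono (integrable_of_continuous ν (by fun_prop))
    (integrable_of_continuous ν (by fun_prop)) fun y => ?_
  simp only
  rw [← exp_add]
  gcongr
  linarith [(abs_le.1 (hM (x, y))).1, (abs_le.1 (hM (x', y))).2]

/-- The soft `c`-transform `x ↦ -log ∫ exp (g y - k (x, y)) dν(y)`. -/
def softTransform (ν : Measure Y) [IsProbabilityMeasure ν] (k : C(X × Y, ℝ)) (g : C(Y, ℝ)) :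
    C(X, ℝ) where
  toFun x := -log (∫ y, exp (g y - k (x, y)) ∂ν)
  continuous_toFun := by
    have h : Continuous fun x => ∫ y, exp (g y - k (x, y)) ∂ν :=
      (fiberIntegral X ν ⟨fun p : X × Y => exp (g p.2 - k p), by fun_prop⟩).continuous
    exact (h.log fun x => (integral_exp_pos_of_continuous ν (by fun_prop)).ne').neg

lemma softTransform_apply (ν : Measure Y) [IsProbabilityMeasure ν] (k : C(X × Y, ℝ))
    (g : C(Y, ℝ)) (x : X) : softTransform ν k g x = -log (∫ y, exp (g y - k (x, y)) ∂ν) := rfl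

lemma integral_exp_softTransform (ν : Measure Y) [IsProbabilityMeasure ν] (k : C(X × Y, ℝ))
    (g : C(Y, ℝ)) (x : X) (a : ℝ) :
    ∫ y, exp (softTransform ν k g x + a + g y - k (x, y)) ∂ν = exp a := by
  have h := integral_exp_pos_of_continuous ν (by fun_prop : Continuous fun y => g y - k (x, y))
  simp_rw [add_sub_assoc, exp_add, integral_const_mul, softTransform_apply, exp_neg, exp_log h]
  field_simp

lemma softTransform_sub_le (ν : Measure Y) [IsProbabilityMeasure ν] {k : C(X × Y, ℝ)} {M : ℝ}
    (hM : ∀ p, |k p| ≤ M) (g : C(Y, ℝ)) (x x' : X) :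
    softTransform ν k g x - softTransform ν k g x' ≤ 2 * M := by
  have h := integral_exp_pos_of_continuous ν (by fun_prop : Continuous fun y => g y - k (x, y))
  have h' := integral_exp_pos_of_continuous ν (by fun_prop : Continuous fun y => g y - k (x', y))
  have := log_le_log h' (integral_exp_sub_le ν hM g x' x)
  rw [log_mul (exp_pos _).ne' h.ne', log_exp] at this
  simp only [softTransform_apply]
  linarith

lemma softTransform_contraction (ν : Measure Y) [IsProbabilityMeasure ν] {k : C(X × Y, ℝ)} {M : ℝ}
    (hM : ∀ p, |k p| ≤ M) {g₁ g₂ : C(Y, ℝ)} {D D₀ : ℝ} (hD : 0 ≤ D) (hD₀ : D ≤ D₀)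
    (hg : ∀ y y', (g₂ - g₁) y - (g₂ - g₁) y' ≤ D) (x x' : X) :
    (softTransform ν k g₂ - softTransform ν k g₁) x -
      (softTransform ν k g₂ - softTransform ν k g₁) x' ≤
      (1 - exp (-(4 * M)) * exp (-D₀)) * D := by
  have : Nonempty Y := ν.nonempty_of_neZero
  obtain ⟨y₀, -, hy₀⟩ := isCompact_univ.exists_isMinOn (Set.univ_nonempty (α := Y))
    (g₂ - g₁).continuous.continuousOn
  have hM0 : 0 ≤ M := (abs_nonneg _).trans (hM (x, y₀))
  have hpos : ∀ (g : C(Y, ℝ)) z, 0 < ∫ y, exp (g y - k (z, y)) ∂ν := fun g z =>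
    integral_exp_pos_of_continuous ν (by fun_prop)
  have hdens : ∀ z, ∫ y, exp (g₁ y - k (z, y)) / (∫ y, exp (g₁ y - k (z, y)) ∂ν) ∂ν = 1 :=
    fun z => by rw [integral_div, div_self (hpos g₁ z).ne']
  have hr : ∀ z, ∫ y, exp ((g₂ - g₁) y) *
      (exp (g₁ y - k (z, y)) / (∫ y, exp (g₁ y - k (z, y)) ∂ν)) ∂ν =
      (∫ y, exp (g₂ y - k (z, y)) ∂ν) / (∫ y, exp (g₁ y - k (z, y)) ∂ν) := fun z => by
    rw [← integral_div]
    refine integral_congr_ae (.of_forall fun y => ?_)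
    simp only [← mul_div_assoc, ← exp_add, ContinuousMap.sub_apply]
    ring_nf
  have key := integral_mul_le_of_density_le ν (r := fun y => exp ((g₂ - g₁) y))
    (θ := exp (-(4 * M))) (R := exp ((g₂ - g₁) y₀)) (D := D)
    (by fun_prop) (by fun_prop) (by fun_prop) (hdens x') (hdens x) (fun y => ?_)
    (fun y => by have := hpos g₁ x; positivity) (exp_le_one_iff.2 (by linarith))
    (fun y => exp_le_exp.2 (hy₀ (Set.mem_univ y)))
    (fun y => by rw [← exp_add]; exact exp_le_exp.2 (by linarith [hg y y₀]))
  · rw [hr, hr] at key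
    have h3 := key.trans (mul_le_mul_of_nonneg_right (mixture_exp_le (exp_pos _).le hD hD₀)
      (div_pos (hpos g₂ x) (hpos g₁ x)).le)
    have h4 := log_le_log (div_pos (hpos g₂ x') (hpos g₁ x')) h3
    rw [log_mul (exp_pos _).ne' (div_pos (hpos g₂ x) (hpos g₁ x)).ne', log_exp,
      log_div (hpos _ _).ne' (hpos _ _).ne', log_div (hpos _ _).ne' (hpos _ _).ne'] at h4
    simp only [ContinuousMap.sub_apply, softTransform_apply]
    linarith
  · rw [← mul_div_assoc, div_le_div_iff₀ (hpos _ _) (hpos _ _)]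
    have h5 : exp (g₁ y - k (x, y)) ≤ exp (2 * M) * exp (g₁ y - k (x', y)) := by
      rw [← exp_add]
      gcongr
      linarith [(abs_le.1 (hM (x, y))).1, (abs_le.1 (hM (x', y))).2]
    have h6 : exp (-(4 * M)) * exp (2 * M) * exp (2 * M) = 1 := by
      rw [← exp_add, ← exp_add, exp_eq_one_iff]; ring
    have h7 := integral_exp_sub_le ν hM g₁ x' x
    have := hpos g₁ x
    calc _ ≤ exp (-(4 * M)) * (exp (2 * M) * exp (g₁ y - k (x', y))) *
          (exp (2 * M) * ∫ y, exp (g₁ y - k (x, y)) ∂ν) := by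
          gcongr
      _ = (exp (-(4 * M)) * exp (2 * M) * exp (2 * M)) *
          (exp (g₁ y - k (x', y)) * ∫ y, exp (g₁ y - k (x, y)) ∂ν) := by ring
      _ = _ := by rw [h6, one_mul]

variable [MeasurableSpace X] [BorelSpace X] [FirstCountableTopology Y]

/-- A fixed point, modulo constants, of the Sinkhorn iteration. -/
lemma exists_softTransform_fixedPoint (μ : Measure X) [IsProbabilityMeasure μ]
    (ν : Measure Y) [IsProbabilityMeasure ν] (k : C(X × Y, ℝ)) :
    ∃ (f : C(X, ℝ)) (a : ℝ), ∀ x,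
      softTransform ν k (softTransform μ (k.comp .prodSwap) f) x = f x + a := by
  obtain ⟨x₀⟩ : Nonempty X := μ.nonempty_of_neZero
  set M := ‖k‖
  have hM : ∀ p, |k p| ≤ M := k.norm_coe_le_norm
  have hM' : ∀ p, |k.comp .prodSwap p| ≤ M := fun p => k.norm_coe_le_norm _
  have hM0 : 0 ≤ M := norm_nonneg k
  set S : C(X, ℝ) → C(X, ℝ) := fun f => softTransform ν k (softTransform μ (k.comp .prodSwap) f)
    with hS
  set T : C(X, ℝ) → C(X, ℝ) := fun f => S f - .const X (S f x₀) with hT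
  set q := 1 - exp (-(4 * M)) * exp (-(2 * M + 1)) with hq
  have hq0 : 0 ≤ q := by
    rw [hq, ← exp_add, sub_nonneg, exp_le_one_iff]; linarith
  have hq1 : q < 1 := by
    rw [hq]; linarith [mul_pos (exp_pos (-(4 * M))) (exp_pos (-(2 * M + 1)))]
  have hTq : ∀ {f f' : C(X, ℝ)} {D : ℝ}, 0 ≤ D → D ≤ 2 * M + 1 →
      (∀ x x', (f' - f) x - (f' - f) x' ≤ D) →
      ∀ x x', (T f' - T f) x - (T f' - T f) x' ≤ q * D := by
    intro f f' D hD hD₀ h x x'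
    have h1 := softTransform_contraction μ hM' hD hD₀ h
    have h2 := softTransform_contraction ν hM (mul_nonneg hq0 hD)
      ((mul_le_of_le_one_left hD hq1.le).trans hD₀) h1 x x'
    have h3 : q * (q * D) ≤ q * D := mul_le_of_le_one_left (mul_nonneg hq0 hD) hq1.le
    simp only [hT, hS, ContinuousMap.sub_apply, ContinuousMap.const_apply] at h2 ⊢
    linarith
  have hT0 : ∀ f, T f x₀ = 0 := fun f => by simp [hT]
  set h : ℕ → C(X, ℝ) := fun n => T^[n] 0 with hh
  have hsucc : ∀ n, h (n + 1) = T (h n) := fun n => Function.iterate_succ_apply' T n 0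
  have hx₀ : ∀ n, h n x₀ = 0 := by
    rintro (_ | n)
    · rfl
    · rw [hsucc, hT0]
  have hosc : ∀ n x x', (h (n + 1) - h n) x - (h (n + 1) - h n) x' ≤ (2 * M) * q ^ n := by
    intro n
    induction n with
    | zero =>
      intro x x'
      have := softTransform_sub_le ν hM (softTransform μ (k.comp .prodSwap) 0) x x'
      simpa [hh, hT, hS] using this
    | succ n ih =>
      have := hTq (by positivity) ?_ ih
      · rw [← hsucc, ← hsucc] at this
        intro x x'
        have := this x x'
        rw [pow_succ]
        linarith
      · have : (2 * M) * q ^ n ≤ 2 * M :=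
          mul_le_of_le_one_right (by positivity) (pow_le_one₀ hq0 hq1.le)
        linarith
  have hcauchy : CauchySeq h := by
    refine cauchySeq_of_le_geometric q (2 * M) hq1 fun n => ?_
    rw [dist_comm, ContinuousMap.dist_le (by positivity)]
    intro x
    have h1 := hosc n x x₀
    have h2 := hosc n x₀ x
    simp only [ContinuousMap.sub_apply, hx₀] at h1 h2
    rw [Real.dist_eq, abs_le]
    constructor <;> linarith
  obtain ⟨f, hf⟩ := cauchySeq_tendsto_of_complete hcauchy
  have hfx : ∀ x, Tendsto (fun n => h n x) atTop (𝓝 (f x)) := fun x =>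
    ((continuous_eval_const x).tendsto f).comp hf
  refine ⟨f, S f x₀, fun x => ?_⟩
  suffices hfT : T f x = f x by
    simp only [hT, ContinuousMap.sub_apply, ContinuousMap.const_apply] at hfT
    linarith
  have hdist : Tendsto (fun n => 2 * dist f (h n)) atTop (𝓝 0) := by
    have := (tendsto_iff_dist_tendsto_zero.1 hf).const_mul 2
    simpa [dist_comm] using this
  have hlim : Tendsto (fun n => h (n + 1) x) atTop (𝓝 (T f x)) := by
    rw [tendsto_iff_dist_tendsto_zero]
    refine squeeze_zero' (.of_forall fun _ => dist_nonneg) ?_ hdist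
    filter_upwards [hdist.eventually (gt_mem_nhds (by linarith : (0 : ℝ) < 2 * M + 1))] with n hn
    have hfn : ∀ y y', (f - h n) y - (f - h n) y' ≤ 2 * dist f (h n) := fun y y' => by
      have h1 := (le_abs_self _).trans (ContinuousMap.dist_apply_le_dist (f := f) (g := h n) y)
      have h2 := (neg_le_abs _).trans (ContinuousMap.dist_apply_le_dist (f := f) (g := h n) y')
      simp only [ContinuousMap.sub_apply]
      linarith
    have h3 := hTq (by positivity) hn.le hfn
    have h4 : q * (2 * dist f (h n)) ≤ 2 * dist f (h n) :=
      mul_le_of_le_one_left (by positivity) hq1.le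
    have h5 := h3 x x₀
    have h6 := h3 x₀ x
    simp only [ContinuousMap.sub_apply, hT0, ← hsucc, hx₀] at h5 h6
    rw [Real.dist_eq, abs_le]
    constructor <;> linarith
  exact tendsto_nhds_unique hlim ((tendsto_add_atTop_iff_nat 1).2 (hfx x))

lemma integral_integral_swap_of_continuous [OpensMeasurableSpace (X × Y)]
    (μ : Measure X) [IsProbabilityMeasure μ]
    (ν : Measure Y) [IsProbabilityMeasure ν] (k : C(X × Y, ℝ)) :
    ∫ x, ∫ y, k (x, y) ∂ν ∂μ = ∫ y, ∫ x, k (x, y) ∂μ ∂ν := by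
  refine integral_integral_swap (f := fun x y => k (x, y)) ?_
  exact Integrable.of_bound k.continuous.aestronglyMeasurable ‖k‖
    (.of_forall fun p => k.norm_coe_le_norm p)

/-- Existence of Schrödinger potentials. -/
lemma exists_schrodinger_potentials [OpensMeasurableSpace (X × Y)]
    (μ : Measure X) [IsProbabilityMeasure μ]
    (ν : Measure Y) [IsProbabilityMeasure ν] (k : C(X × Y, ℝ)) :
    ∃ (f : C(X, ℝ)) (g : C(Y, ℝ)), (∀ x, ∫ y, exp (f x + g y - k (x, y)) ∂ν = 1) ∧
      ∀ y, ∫ x, exp (f x + g y - k (x, y)) ∂μ = 1 := by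
  obtain ⟨f, a, hfa⟩ := exists_softTransform_fixedPoint μ ν k
  set g := softTransform μ (k.comp .prodSwap) f
  have hg : ∀ y, ∫ x, exp (f x + g y - k (x, y)) ∂μ = 1 := fun y => by
    have := integral_exp_softTransform μ (k.comp .prodSwap) f y 0
    rw [exp_zero] at this
    rw [← this]
    refine integral_congr_ae (.of_forall fun x => ?_)
    simp only [ContinuousMap.comp_apply, ContinuousMap.prodSwap_apply, g]
    ring_nf
  have hf : ∀ x, ∫ y, exp (f x + g y - k (x, y)) ∂ν = exp (-a) := fun x => by
    rw [← integral_exp_softTransform ν k g x]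
    refine integral_congr_ae (.of_forall fun y => ?_)
    simp only [hfa]
    ring_nf
  have hswap := integral_integral_swap_of_continuous μ ν
    ⟨fun p : X × Y => exp (f p.1 + g p.2 - k p), by fun_prop⟩
  simp only [ContinuousMap.coe_mk, hf, hg, integral_const, probReal_univ, one_smul] at hswap
  exact ⟨f, g, fun x => (hf x).trans hswap, hg⟩

/-! ### Analytic dependence of the potentials -/

lemma isInvertible_of_block {E F : Type*} [NormedAddCommGroup E] [NormedSpace ℝ E]
    [CompleteSpace E] [NormedAddCommGroup F] [NormedSpace ℝ F]
    (D : E × F →L[ℝ] E × F) (P : F →L[ℝ] E) (Q : E →L[ℝ] F) (m : E →L[ℝ] E)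
    (hD : ∀ h k, D (h, k) = (h + P k + m h, Q h + k)) (hn : ‖P ∘L Q - m‖ < 1) :
    D.IsInvertible := by
  set U := Units.oneSub (P ∘L Q - m) hn
  set N : E →L[ℝ] E := ↑U⁻¹
  have hU : ∀ h, (U : E →L[ℝ] E) h = h - (P (Q h) - m h) := fun h => by simp [U]
  have h1 : ∀ h, N h - (P (Q (N h)) - m (N h)) = h := fun h => by
    rw [← hU]
    exact DFunLike.congr_fun (U.mul_inv) h
  have h2 : ∀ h, N (h - (P (Q h) - m h)) = h := fun h => by
    rw [← hU]
    exact DFunLike.congr_fun (U.inv_mul) h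
  set W : E × F →L[ℝ] E := N ∘L (.fst ℝ E F - P ∘L .snd ℝ E F) with hW
  have hWa : ∀ r s, W (r, s) = N (r - P s) := fun r s => rfl
  refine ContinuousLinearMap.IsInvertible.of_inverse (g := W.prod (.snd ℝ E F - Q ∘L W)) ?_ ?_
  · refine ContinuousLinearMap.ext fun ⟨r, s⟩ => ?_
    simp only [ContinuousLinearMap.comp_apply, ContinuousLinearMap.prod_apply,
      sub_apply, ContinuousLinearMap.coe_snd', hD, ContinuousLinearMap.id_apply,
      map_sub P, hWa]
    refine Prod.ext ?_ (by simp)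
    have := h1 (r - P s)
    generalize N (r - P s) = w at *
    rw [eq_sub_iff_add_eq] at this
    rw [← this]
    show w + (P s - P (Q w)) + m w = w - (P (Q w) - m w) + P s
    abel
  · refine ContinuousLinearMap.ext fun ⟨h, k⟩ => ?_
    have : W (h + P k + m h, Q h + k) = h := by
      rw [hWa, map_add]
      refine (congrArg N ?_).trans (h2 h)
      abel
    simp [hD, this]

variable [OpensMeasurableSpace (X × Y)]

/-- The exponent `f(x) + g(y) - t c(x, y)`, as a continuous linear map of `(t, f, g)`. -/
def gibbsExponent (c : C(X × Y, ℝ)) : ℝ × (C(X, ℝ) × C(Y, ℝ)) →L[ℝ] C(X × Y, ℝ) :=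
  pullback .fst ∘L .fst ℝ _ _ ∘L .snd ℝ _ _ + pullback .snd ∘L .snd ℝ _ _ ∘L .snd ℝ _ _ -
    (ContinuousLinearMap.fst ℝ ℝ (C(X, ℝ) × C(Y, ℝ))).smulRight c

lemma gibbsExponent_apply (c : C(X × Y, ℝ)) (t : ℝ) (f : C(X, ℝ)) (g : C(Y, ℝ)) (x : X) (y : Y) :
    gibbsExponent c (t, f, g) (x, y) = f x + g y - t * c (x, y) := rfl

/-- The two marginals of a density with respect to `μ ⊗ ν`. -/
def marginals (μ : Measure X) [IsProbabilityMeasure μ] (ν : Measure Y) [IsProbabilityMeasure ν] :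
    C(X × Y, ℝ) →L[ℝ] C(X, ℝ) × C(Y, ℝ) :=
  (fiberIntegral X ν).prod (fiberIntegral Y μ ∘L pullback .prodSwap)

lemma marginals_fst_apply (μ : Measure X) [IsProbabilityMeasure μ] (ν : Measure Y)
    [IsProbabilityMeasure ν] (k : C(X × Y, ℝ)) (x : X) :
    (marginals μ ν k).1 x = ∫ y, k (x, y) ∂ν := rfl

lemma marginals_snd_apply (μ : Measure X) [IsProbabilityMeasure μ] (ν : Measure Y)
    [IsProbabilityMeasure ν] (k : C(X × Y, ℝ)) (y : Y) :
    (marginals μ ν k).2 y = ∫ x, k (x, y) ∂μ := rfl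

/-- The marginal map, with the degeneracy `(f, g) ↦ (f + a, g - a)` removed by adding a multiple of
the mean of `f`. -/
def schrodingerMap (μ : Measure X) [IsProbabilityMeasure μ] (ν : Measure Y)
    [IsProbabilityMeasure ν] (c : C(X × Y, ℝ)) (δ : ℝ) (v : ℝ × (C(X, ℝ) × C(Y, ℝ))) :
    C(X, ℝ) × C(Y, ℝ) :=
  marginals μ ν (NormedSpace.exp (gibbsExponent c v)) +
    (ContinuousLinearMap.inl ℝ C(X, ℝ) C(Y, ℝ) ∘L
      ((expectation μ).smulRight (δ • (1 : C(X, ℝ)))) ∘L .fst ℝ _ _ ∘L .snd ℝ _ _) v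

lemma contDiff_schrodingerMap (μ : Measure X) [IsProbabilityMeasure μ] (ν : Measure Y)
    [IsProbabilityMeasure ν] (c : C(X × Y, ℝ)) (δ : ℝ) (v : ℝ × (C(X, ℝ) × C(Y, ℝ))) :
    ContDiffAt ℝ ⊤ (schrodingerMap μ ν c δ) v := by
  refine ContDiffAt.add ?_ (ContinuousLinearMap.contDiff _).contDiffAt
  refine (marginals μ ν).contDiff.contDiffAt.comp v ?_
  exact (NormedSpace.exp_analytic _).contDiffAt.comp v (gibbsExponent c).contDiff.contDiffAt

lemma hasFDerivAt_schrodingerMap (μ : Measure X) [IsProbabilityMeasure μ] (ν : Measure Y)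
    [IsProbabilityMeasure ν] (c : C(X × Y, ℝ)) (δ : ℝ) (v : ℝ × (C(X, ℝ) × C(Y, ℝ))) :
    HasFDerivAt (schrodingerMap μ ν c δ)
      (marginals μ ν ∘L (NormedSpace.exp (gibbsExponent c v) • (1 : C(X × Y, ℝ) →L[ℝ] C(X × Y, ℝ)))
          ∘L gibbsExponent c +
        ContinuousLinearMap.inl ℝ C(X, ℝ) C(Y, ℝ) ∘L
          ((expectation μ).smulRight (δ • (1 : C(X, ℝ)))) ∘L .fst ℝ _ _ ∘L .snd ℝ _ _) v := by
  refine HasFDerivAt.add ?_ (ContinuousLinearMap.hasFDerivAt _)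
  refine (marginals μ ν).hasFDerivAt.comp v ?_
  exact (hasFDerivAt_exp (𝕂 := ℝ)).comp v (gibbsExponent c).hasFDerivAt

lemma norm_le_of_density (μ : Measure X) [IsProbabilityMeasure μ] (ν : Measure Y)
    [IsProbabilityMeasure ν] (p : C(X × Y, ℝ)) {δ : ℝ} (hδ : 0 < δ) (hp : ∀ z, δ ≤ p z)
    (h1 : ∀ x, ∫ y, p (x, y) ∂ν = 1) (h2 : ∀ y, ∫ x, p (x, y) ∂μ = 1) (h : C(X, ℝ)) (x : X) :
    |∫ y, p (x, y) * ∫ x', p (x', y) * h x' ∂μ ∂ν - δ * ∫ x', h x' ∂μ| ≤ (1 - δ) * ‖h‖ := by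
  have hcont : Continuous fun y => ∫ x', p (x', y) * h x' ∂μ :=
    (fiberIntegral Y μ ⟨fun z : Y × X => p (z.2, z.1) * h z.2, by fun_prop⟩).continuous
  have hi : ∀ y, |∫ x', p (x', y) * h x' ∂μ - δ * ∫ x', h x' ∂μ| ≤ (1 - δ) * ‖h‖ := fun y => by
    rw [← integral_const_mul, ← integral_sub (integrable_of_continuous μ (by fun_prop))
      (integrable_of_continuous μ (by fun_prop))]
    calc _ ≤ ∫ x', |p (x', y) * h x' - δ * h x'| ∂μ := abs_integral_le_integral_abs
      _ ≤ ∫ x', (p (x', y) - δ) * ‖h‖ ∂μ := by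
          refine integral_mono (integrable_of_continuous μ (by fun_prop))
            (integrable_of_continuous μ (by fun_prop)) fun x' => ?_
          simp only
          rw [← sub_mul, abs_mul, abs_of_nonneg (sub_nonneg.2 (hp _))]
          exact mul_le_mul_of_nonneg_left (h.norm_coe_le_norm x') (sub_nonneg.2 (hp _))
      _ = (1 - δ) * ‖h‖ := by
          rw [integral_mul_const, integral_sub (integrable_of_continuous μ (by fun_prop))
            (integrable_const _), h2]
          simp
  have heq : ∫ y, p (x, y) * ∫ x', p (x', y) * h x' ∂μ ∂ν - δ * ∫ x', h x' ∂μ =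
      ∫ y, p (x, y) * (∫ x', p (x', y) * h x' ∂μ - δ * ∫ x', h x' ∂μ) ∂ν := by
    simp_rw [mul_sub]
    rw [integral_sub (integrable_of_continuous ν (by fun_prop))
      (integrable_of_continuous ν (by fun_prop)), integral_mul_const, h1, one_mul]
  rw [heq]
  calc _ ≤ ∫ y, |p (x, y) * (∫ x', p (x', y) * h x' ∂μ - δ * ∫ x', h x' ∂μ)| ∂ν :=
        abs_integral_le_integral_abs
    _ ≤ ∫ y, p (x, y) * ((1 - δ) * ‖h‖) ∂ν := by
        refine integral_mono (integrable_of_continuous ν (by fun_prop))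
            (integrable_of_continuous ν (by fun_prop)) fun y => ?_
        simp only
        have := hδ.le.trans (hp (x, y))
        rw [abs_mul, abs_of_nonneg this]
        exact mul_le_mul_of_nonneg_left (hi y) this
    _ = (1 - δ) * ‖h‖ := by rw [integral_mul_const, h1, one_mul]

/-- Schrödinger potentials can be chosen to depend analytically on the inverse temperature. -/
theorem exists_analyticAt_potentials (μ : Measure X) [IsProbabilityMeasure μ] (ν : Measure Y)
    [IsProbabilityMeasure ν] (c : C(X × Y, ℝ)) (t₀ : ℝ) :
    ∃ (f : ℝ → C(X, ℝ)) (g : ℝ → C(Y, ℝ)), AnalyticAt ℝ f t₀ ∧ AnalyticAt ℝ g t₀ ∧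
      ∀ᶠ t in 𝓝 t₀, (∀ x, ∫ y, exp (f t x + g t y - t * c (x, y)) ∂ν = 1) ∧
        ∀ y, ∫ x, exp (f t x + g t y - t * c (x, y)) ∂μ = 1 := by
  obtain ⟨f₀, g₀, h1, h2⟩ := exists_schrodinger_potentials μ ν (t₀ • c)
  have : Nonempty X := μ.nonempty_of_neZero
  have : Nonempty Y := ν.nonempty_of_neZero
  set u : ℝ × (C(X, ℝ) × C(Y, ℝ)) := (t₀, f₀, g₀) with hu
  set p : C(X × Y, ℝ) := NormedSpace.exp (gibbsExponent c u) with hp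
  have hexp : ∀ t f g x y, NormedSpace.exp (gibbsExponent c (t, f, g)) (x, y) =
      exp (f x + g y - t * c (x, y)) := fun t f g x y => by
    rw [exp_continuousMap_apply, gibbsExponent_apply]
  have hp1 : ∀ x, ∫ y, p (x, y) ∂ν = 1 := fun x => by
    rw [← h1 x]; exact integral_congr_ae (.of_forall fun y => hexp t₀ f₀ g₀ x y)
  have hp2 : ∀ y, ∫ x, p (x, y) ∂μ = 1 := fun y => by
    rw [← h2 y]; exact integral_congr_ae (.of_forall fun x => hexp t₀ f₀ g₀ x y)
  obtain ⟨z₀, -, hz₀⟩ := isCompact_univ.exists_isMinOn (Set.univ_nonempty (α := X × Y))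
    p.continuous.continuousOn
  set δ := p z₀ with hδ
  have hδ0 : 0 < δ := by
    rw [hδ, hp, exp_continuousMap_apply]; exact exp_pos _
  have hpδ : ∀ z, δ ≤ p z := fun z => hz₀ (Set.mem_univ z)
  have hδ1 : δ ≤ 1 := by
    rw [← hp1 z₀.1]
    simpa using integral_mono (integrable_const δ)
      (integrable_of_continuous ν (by fun_prop)) fun y => hpδ (z₀.1, y)
  have hcd := contDiff_schrodingerMap μ ν c δ u
  have hinv : (fderiv ℝ (schrodingerMap μ ν c δ) u ∘L .inr ℝ ℝ (C(X, ℝ) × C(Y, ℝ))).IsInvertible := by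
    rw [(hasFDerivAt_schrodingerMap μ ν c δ u).fderiv, ← hp]
    refine isInvertible_of_block _
      (.fst ℝ _ _ ∘L marginals μ ν ∘L (p • (1 : C(X × Y, ℝ) →L[ℝ] C(X × Y, ℝ))) ∘L pullback .snd)
      (.snd ℝ _ _ ∘L marginals μ ν ∘L (p • (1 : C(X × Y, ℝ) →L[ℝ] C(X × Y, ℝ))) ∘L pullback .fst)
      ((expectation μ).smulRight (δ • (1 : C(X, ℝ)))) ?_ ?_
    · intro h k
      refine Prod.ext ?_ ?_
      · ext x
        simp [marginals_fst_apply, gibbsExponent, integral_mul_const, hp1]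
      · ext y
        simp [marginals_snd_apply, gibbsExponent, integral_mul_const, hp2]
    · refine (ContinuousLinearMap.opNorm_le_bound _ (sub_nonneg.2 hδ1) fun h => ?_).trans_lt
        (sub_lt_self 1 hδ0)
      refine (ContinuousMap.norm_le _ (by have := sub_nonneg.2 hδ1; positivity)).2 fun x => ?_
      have := norm_le_of_density μ ν p hδ0 hpδ hp1 hp2 h x
      simpa [marginals_fst_apply, marginals_snd_apply, mul_comm δ] using this
  set ψ := hcd.implicitFunction (by simp) hinv
  have hψ : AnalyticAt ℝ ψ t₀ := (hcd.contDiffAt_implicitFunction (by simp) hinv).analyticAt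
  refine ⟨fun t => (ψ t).1, fun t => (ψ t).2, analyticAt_fst.comp hψ, analyticAt_snd.comp hψ, ?_⟩
  filter_upwards [hcd.eventually_apply_implicitFunction (by simp) hinv] with t ht
  set f := (ψ t).1
  set g := (ψ t).2
  have ht' : schrodingerMap μ ν c δ (t, f, g) = schrodingerMap μ ν c δ (t₀, f₀, g₀) := ht
  have e1 : ∀ x, ∫ y, exp (f x + g y - t * c (x, y)) ∂ν =
      1 + δ * ∫ x, f₀ x ∂μ - δ * ∫ x, f x ∂μ := fun x => by
    have := DFunLike.congr_fun (congrArg Prod.fst ht') x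
    simp only [schrodingerMap, Prod.fst_add, ContinuousMap.add_apply, marginals_fst_apply, hexp,
      ← hu, ← hp, hp1] at this
    simp at this
    linarith
  have e2 : ∀ y, ∫ x, exp (f x + g y - t * c (x, y)) ∂μ = 1 := fun y => by
    have := DFunLike.congr_fun (congrArg Prod.snd ht') y
    simp only [schrodingerMap, Prod.snd_add, ContinuousMap.add_apply, marginals_snd_apply, hexp,
      ← hu, ← hp, hp2] at this
    simpa using this
  have hswap := integral_integral_swap_of_continuous μ ν
    (NormedSpace.exp (gibbsExponent c (t, f, g)))
  simp only [hexp, e1, e2, integral_const, probReal_univ, one_smul] at hswap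
  exact ⟨fun x => (e1 x).trans hswap, e2⟩

end SchrodingerSystem

section Verification

variable {α β : Type*} [MeasurableSpace α] [MeasurableSpace β]

lemma ae_mem_prod_of_coupling {μ : Measure α} {ν : Measure β} {γ : Measure (α × β)}
    (h1 : γ.fst = μ) (h2 : γ.snd = ν) {s : Set α} {t : Set β} (hs : μ sᶜ = 0) (ht : ν tᶜ = 0) :
    ∀ᵐ z ∂γ, z ∈ s ×ˢ t := by
  subst h1 h2
  have hs' : ∀ᵐ z ∂γ, z.1 ∈ s := ae_of_ae_map measurable_fst.aemeasurable hs
  have ht' : ∀ᵐ z ∂γ, z.2 ∈ t := ae_of_ae_map measurable_snd.aemeasurable ht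
  filter_upwards [hs', ht'] with z h h' using ⟨h, h'⟩

lemma entCost_congr_s3 {μ : Measure α} {ν : Measure β} {s : Set α} {t : Set β} (hs : μ sᶜ = 0)
    (ht : ν tᶜ = 0) {c c' : α × β → ℝ} (h : EqOn c c' (s ×ˢ t)) (ε : ℝ) :
    entCost μ ν c ε = entCost μ ν c' ε := by
  have key : ∀ γ : Measure (α × β), γ.fst = μ → γ.snd = ν → ∫ p, c p ∂γ = ∫ p, c' p ∂γ :=
    fun γ h1 h2 => integral_congr_ae <|
      (ae_mem_prod_of_coupling h1 h2 hs ht).mono fun z hz => h hz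
  unfold entCost
  congr 1
  ext v
  constructor
  · rintro ⟨γ, hγ, h1, h2, rfl⟩
    exact ⟨γ, hγ, h1, h2, by rw [key γ h1 h2]⟩
  · rintro ⟨γ, hγ, h1, h2, rfl⟩
    exact ⟨γ, hγ, h1, h2, by rw [key γ h1 h2]⟩

lemma mul_log_add_sub_le {ρ p : ℝ} (hρ : 0 ≤ ρ) (hp : 0 < p) :
    ρ * log p + (ρ - p) ≤ ρ * log ρ := by
  rcases hρ.eq_or_lt with rfl | hρ
  · simpa using hp.le
  · have h1 := log_le_sub_one_of_pos (div_pos hp hρ)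
    rw [log_div hp.ne' hρ.ne'] at h1
    have h2 := mul_le_mul_of_nonneg_left h1 hρ.le
    have h3 : ρ * (p / ρ - 1) = p - ρ := by field_simp
    linarith

lemma integrable_of_abs_le {μ : Measure α} [IsFiniteMeasure μ] {f : α → ℝ} (hf : Measurable f)
    {M : ℝ} (hM : ∀ x, |f x| ≤ M) : Integrable f μ :=
  .of_bound hf.aestronglyMeasurable M (.of_forall hM)

lemma integral_add_of_coupling {μ : Measure α} {ν : Measure β} {γ : Measure (α × β)}
    [IsFiniteMeasure γ] (h1 : γ.fst = μ) (h2 : γ.snd = ν) {f : α → ℝ} {g : β → ℝ}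
    (hf : Measurable f) (hg : Measurable g) {F G : ℝ} (hF : ∀ x, |f x| ≤ F) (hG : ∀ y, |g y| ≤ G) :
    ∫ z, (f z.1 + g z.2) ∂γ = ∫ x, f x ∂μ + ∫ y, g y ∂ν := by
  subst h1 h2
  have hfi : Integrable (fun z : α × β => f z.1) γ :=
    integrable_of_abs_le (hf.comp measurable_fst) fun z => hF z.1
  have hgi : Integrable (fun z : α × β => g z.2) γ :=
    integrable_of_abs_le (hg.comp measurable_snd) fun z => hG z.2
  rw [integral_add hfi hgi, Measure.fst, Measure.snd,
    integral_map measurable_fst.aemeasurable hf.aestronglyMeasurable,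
    integral_map measurable_snd.aemeasurable hg.aestronglyMeasurable]

lemma fst_withDensity {μ : Measure α} {ν : Measure β} [SFinite μ] [SFinite ν] {p : α × β → ℝ≥0∞}
    (hp : Measurable p) (h : ∀ x, ∫⁻ y, p (x, y) ∂ν = 1) :
    ((μ.prod ν).withDensity p).fst = μ := by
  ext s hs
  rw [Measure.fst_apply hs, withDensity_apply _ (measurable_fst hs), ← Set.prod_univ,
    ← Measure.prod_restrict, Measure.restrict_univ, lintegral_prod _ hp.aemeasurable]
  simp [h]

lemma snd_withDensity {μ : Measure α} {ν : Measure β} [SFinite μ] [SFinite ν] {p : α × β → ℝ≥0∞}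
    (hp : Measurable p) (h : ∀ y, ∫⁻ x, p (x, y) ∂μ = 1) :
    ((μ.prod ν).withDensity p).snd = ν := by
  ext s hs
  rw [Measure.snd_apply hs, withDensity_apply _ (measurable_snd hs), ← Set.univ_prod,
    ← Measure.prod_restrict, Measure.restrict_univ, lintegral_prod_symm _ hp.aemeasurable]
  simp [h]

/-- Schrödinger potentials determine the value of the entropic cost. -/
theorem entCost_eq_of_potentials (μ : Measure α) [IsProbabilityMeasure μ] (ν : Measure β)
    [IsProbabilityMeasure ν] {c : α × β → ℝ} {f : α → ℝ} {g : β → ℝ} (hc : Measurable c)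
    (hf : Measurable f) (hg : Measurable g) {C F G : ℝ} (hC : ∀ z, |c z| ≤ C)
    (hF : ∀ x, |f x| ≤ F) (hG : ∀ y, |g y| ≤ G) {ε : ℝ} (hε : 0 < ε)
    (h1 : ∀ x, ∫ y, exp (f x + g y - ε⁻¹ * c (x, y)) ∂ν = 1)
    (h2 : ∀ y, ∫ x, exp (f x + g y - ε⁻¹ * c (x, y)) ∂μ = 1) :
    entCost μ ν c ε = ((ε * (∫ x, f x ∂μ + ∫ y, g y ∂ν) : ℝ) : EReal) := by
  set φ : α × β → ℝ := fun z => f z.1 + g z.2 - ε⁻¹ * c z with hφ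
  have hφm : Measurable φ := by fun_prop
  set K := F + G + ε⁻¹ * C
  have hφK : ∀ z, |φ z| ≤ K := fun z => by
    have := mul_le_mul_of_nonneg_left (hC z) (inv_pos.2 hε).le
    calc |φ z| ≤ |f z.1| + |g z.2| + |ε⁻¹ * c z| :=
          (abs_sub _ _).trans (add_le_add_left (abs_add_le _ _) _)
      _ ≤ K := by
        rw [abs_mul, abs_of_pos (inv_pos.2 hε)]
        linarith [hF z.1, hG z.2]
  have hpK : ∀ z, |exp (φ z)| ≤ exp K := fun z => by
    rw [abs_exp]; exact exp_le_exp.2 ((le_abs_self _).trans (hφK z))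
  have hpm : Measurable fun z => exp (φ z) := by fun_prop
  have hp1 : ∀ x, ∫⁻ y, ENNReal.ofReal (exp (φ (x, y))) ∂ν = 1 := fun x => by
    rw [← ofReal_integral_eq_lintegral_ofReal
      (integrable_of_abs_le (by fun_prop) fun y => hpK (x, y)) (.of_forall fun y => (exp_pos _).le),
      h1, ENNReal.ofReal_one]
  have hp2 : ∀ y, ∫⁻ x, ENNReal.ofReal (exp (φ (x, y))) ∂μ = 1 := fun y => by
    rw [← ofReal_integral_eq_lintegral_ofReal
      (integrable_of_abs_le (by fun_prop) fun x => hpK (x, y)) (.of_forall fun x => (exp_pos _).le),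
      h2, ENNReal.ofReal_one]
  have hpq : Integrable (fun z => exp (φ z)) (μ.prod ν) := integrable_of_abs_le hpm hpK
  have hpq1 : ∫ z, exp (φ z) ∂μ.prod ν = 1 := by
    rw [integral_prod _ hpq]
    simp [hφ, h1]
  have hsplit : ∀ γ : Measure (α × β), IsProbabilityMeasure γ → γ.fst = μ → γ.snd = ν →
      ∫ z, c z ∂γ + ε * ∫ z, φ z ∂γ = ε * (∫ x, f x ∂μ + ∫ y, g y ∂ν) := by
    intro γ hγ hγ1 hγ2
    have hi1 : Integrable (fun z : α × β => f z.1 + g z.2) γ :=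
      integrable_of_abs_le (M := F + G) (by fun_prop) fun z =>
        (abs_add_le _ _).trans (add_le_add (hF z.1) (hG z.2))
    have hi2 : Integrable (fun z => ε⁻¹ * c z) γ := (integrable_of_abs_le hc hC).const_mul _
    have hi : ∫ z, φ z ∂γ = ∫ z, (f z.1 + g z.2) ∂γ - ε⁻¹ * ∫ z, c z ∂γ := by
      rw [← integral_const_mul]
      exact integral_sub hi1 hi2
    rw [← integral_add_of_coupling hγ1 hγ2 hf hg hF hG, hi]
    field_simp
    ring
  apply le_antisymm
  · set d : α × β → ℝ≥0∞ := fun z => ENNReal.ofReal (exp (φ z))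
    have hd : Measurable d := by fun_prop
    set γ := (μ.prod ν).withDensity d with hγ
    have hγ1 : γ.fst = μ := fst_withDensity hd hp1
    have hγ2 : γ.snd = ν := snd_withDensity hd hp2
    have hγp : IsProbabilityMeasure γ := ⟨by rw [← Measure.fst_univ, hγ1, measure_univ]⟩
    refine sInf_le ⟨γ, hγp, hγ1, hγ2, ?_⟩
    have hρ : (fun z => ((γ.rnDeriv (μ.prod ν)) z).toReal *
        Real.log ((γ.rnDeriv (μ.prod ν)) z).toReal) =ᵐ[μ.prod ν] fun z => exp (φ z) * φ z := by
      filter_upwards [Measure.rnDeriv_withDensity (μ.prod ν) hd] with z hz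
      rw [hz, ENNReal.toReal_ofReal (exp_pos _).le, log_exp]
    have hρlog : Integrable (fun z => exp (φ z) * φ z) (μ.prod ν) :=
      integrable_of_abs_le (M := exp K * K) (by fun_prop) fun z => by
        rw [abs_mul]
        exact mul_le_mul (hpK z) (hφK z) (abs_nonneg _) (exp_pos _).le
    have hφγ : ∫ z, exp (φ z) * φ z ∂μ.prod ν = ∫ z, φ z ∂γ := by
      rw [hγ, integral_withDensity_eq_integral_toReal_smul hd (by simp [d])]
      refine integral_congr_ae (.of_forall fun z => ?_)
      simp [d, ENNReal.toReal_ofReal (exp_pos (φ z)).le]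
    rw [Ent, if_pos ⟨withDensity_absolutelyContinuous _ _, hρlog.congr hρ.symm⟩,
      integral_congr_ae hρ, hφγ, ← hsplit γ hγp hγ1 hγ2]
    push_cast
    rfl
  · refine le_sInf ?_
    rintro v ⟨γ, hγp, hγ1, hγ2, rfl⟩
    rw [Ent]
    split_ifs with h
    · obtain ⟨hac, hρlog⟩ := h
      rw [← EReal.coe_mul, ← EReal.coe_add, EReal.coe_le_coe_iff, ← hsplit γ hγp hγ1 hγ2]
      gcongr
      have hρi : Integrable (fun z => ((γ.rnDeriv (μ.prod ν)) z).toReal) (μ.prod ν) :=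
        Measure.integrable_toReal_rnDeriv
      have hρ1 : ∫ z, ((γ.rnDeriv (μ.prod ν)) z).toReal ∂μ.prod ν = 1 := by
        rw [Measure.integral_toReal_rnDeriv hac, probReal_univ]
      have hρφ : Integrable (fun z => ((γ.rnDeriv (μ.prod ν)) z).toReal * φ z) (μ.prod ν) :=
        hρi.mul_bdd hφm.aestronglyMeasurable (.of_forall hφK)
      have hle := integral_mono (hρφ.add (hρi.sub hpq)) hρlog fun z => by
        simpa only [log_exp, Pi.add_apply, Pi.sub_apply] using
          mul_log_add_sub_le (ρ := ((γ.rnDeriv (μ.prod ν)) z).toReal)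
            ENNReal.toReal_nonneg (exp_pos (φ z))
      rw [integral_add' hρφ (hρi.sub hpq), integral_sub' hρi hpq, hρ1, hpq1, sub_self,
        add_zero] at hle
      rwa [← integral_rnDeriv_smul hac]
    · rw [EReal.coe_mul_top_of_pos hε, EReal.coe_add_top]
      exact le_top

end Verification

lemma measure_compl_msupport {α : Type*} [TopologicalSpace α] [SecondCountableTopology α]
    [MeasurableSpace α] (μ : Measure α) : μ (msupport μ)ᶜ = 0 := by
  refine measure_null_of_locally_null _ fun x hx => ?_
  simp only [msupport, Set.mem_compl_iff, Set.mem_ofPred_eq, not_forall, not_not] at hx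
  obtain ⟨U, hU, hxU, h0⟩ := hx
  exact ⟨U, mem_nhdsWithin_of_mem_nhds (hU.mem_nhds hxU), h0⟩

/-- A closed set carrying a probability measure is a measurable retract. -/
lemma exists_measurable_retraction {α : Type*} [MeasurableSpace α] (μ : Measure α)
    [IsProbabilityMeasure μ] {s : Set α} (hs : MeasurableSet s) (h0 : μ sᶜ = 0) :
    ∃ r : α → s, Measurable r ∧ ∀ x : s, r x = x := by
  have hne : s.Nonempty := by
    rw [Set.nonempty_iff_ne_empty]
    rintro rfl
    simp at h0
  obtain ⟨r, hr, h⟩ := (MeasurableEmbedding.subtype_coe hs).exists_measurable_extend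
    measurable_id fun _ => hne.to_subtype
  exact ⟨r, hr, fun x => congrFun h x⟩

/-- The entropic cost `ε ↦ v_ε` is real-analytic on `(0,∞)`. -/
theorem entCost_analyticOnNhd {d : ℕ}
    (μm μp : Measure (EuclideanSpace ℝ (Fin d)))
    [IsProbabilityMeasure μm] [IsProbabilityMeasure μp]
    (hXm : IsCompact (msupport μm)) (hXp : IsCompact (msupport μp))
    (c : EuclideanSpace ℝ (Fin d) × EuclideanSpace ℝ (Fin d) → ℝ)
    (hc : ContinuousOn c (msupport μm ×ˢ msupport μp)) :
    AnalyticOnNhd ℝ (fun ε : ℝ => (entCost μm μp c ε).toReal) (Set.Ioi 0) := by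
  intro ε₀ hε₀
  have hm0 := measure_compl_msupport μm
  have hp0 := measure_compl_msupport μp
  obtain ⟨r, hr, hrx⟩ := exists_measurable_retraction μm hXm.isClosed.measurableSet hm0
  obtain ⟨s, hs, hsy⟩ := exists_measurable_retraction μp hXp.isClosed.measurableSet hp0
  have : CompactSpace (msupport μm) := isCompact_iff_compactSpace.1 hXm
  have : CompactSpace (msupport μp) := isCompact_iff_compactSpace.1 hXp
  have : IsProbabilityMeasure (μm.map r) := Measure.isProbabilityMeasure_map hr.aemeasurable
  have : IsProbabilityMeasure (μp.map s) := Measure.isProbabilityMeasure_map hs.aemeasurable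
  set c' : C(msupport μm × msupport μp, ℝ) := ⟨fun z => c (z.1, z.2),
    hc.comp_continuous (by fun_prop) fun z => ⟨z.1.2, z.2.2⟩⟩ with hc'
  obtain ⟨f, g, hf, hg, hfg⟩ := exists_analyticAt_potentials (μm.map r) (μp.map s) c' ε₀⁻¹
  have hinv : AnalyticAt ℝ (fun ε : ℝ => ε⁻¹) ε₀ := analyticAt_id.inv (ne_of_gt hε₀)
  have hana : AnalyticAt ℝ (fun ε : ℝ => ε * (expectation (μm.map r) (f ε⁻¹) +
      expectation (μp.map s) (g ε⁻¹))) ε₀ :=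
    analyticAt_id.mul
      ((((expectation (μm.map r)).analyticAt _).comp (hf.comp hinv)).add
        (((expectation (μp.map s)).analyticAt _).comp (hg.comp hinv)))
  refine hana.congr ?_
  filter_upwards [hinv.continuousAt.eventually hfg, Ioi_mem_nhds hε₀] with ε hε hε0
  have hcongr : EqOn c (fun z => c' (r z.1, s z.2)) (msupport μm ×ˢ msupport μp) := by
    rintro ⟨x, y⟩ ⟨hx, hy⟩
    simp only [hc', ContinuousMap.coe_mk, hrx ⟨x, hx⟩, hsy ⟨y, hy⟩]
  have hint1 : ∫ x, f ε⁻¹ x ∂μm.map r = ∫ x, f ε⁻¹ (r x) ∂μm :=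
    integral_map hr.aemeasurable (f ε⁻¹).continuous.aestronglyMeasurable
  have hint2 : ∫ y, g ε⁻¹ y ∂μp.map s = ∫ y, g ε⁻¹ (s y) ∂μp :=
    integral_map hs.aemeasurable (g ε⁻¹).continuous.aestronglyMeasurable
  rw [entCost_congr_s3 hm0 hp0 hcongr, entCost_eq_of_potentials μm μp
    (c := fun z => c' (r z.1, s z.2)) (f := fun x => f ε⁻¹ (r x))
    (g := fun y => g ε⁻¹ (s y))
    (c'.continuous.measurable.comp ((hr.comp measurable_fst).prodMk (hs.comp measurable_snd)))
    ((f ε⁻¹).continuous.measurable.comp hr) ((g ε⁻¹).continuous.measurable.comp hs)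
    (fun z => c'.norm_coe_le_norm _) (fun x => (f ε⁻¹).norm_coe_le_norm _)
    (fun y => (g ε⁻¹).norm_coe_le_norm _) hε0 (fun x => ?_) (fun y => ?_), EReal.toReal_coe,
    expectation_apply, expectation_apply, hint1, hint2]
  · rw [← hε.1 (r x), integral_map hs.aemeasurable
      (Continuous.aestronglyMeasurable (by fun_prop))]
  · rw [← hε.2 (s y), integral_map hr.aemeasurable
      (Continuous.aestronglyMeasurable (by fun_prop))]
end
end
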